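/- For ρ a reduced word whose descent tableau 𝔻(ρ) is an increasing Young tableau, the reduced word lift(ρ) obtained by the canonical lifting algorithm is Yamanouchi. -/

import Mathlib

open List

namespace EG

/-! ## Words, permutations, and reduced words.

A word is a list of positive natural numbers `(ρ_ℓ, …, ρ_1)`, read left to right,
representing the product of simple transpositions `s_{ρ_ℓ} ⋯ s_{ρ_1}`. -/

/-- The permutation of `ℕ` represented by a word. -/
def toPerm (ρ : List ℕ) : Equiv.Perm ℕ :=
  (ρ.map fun i => Equiv.swap i (i + 1)).prod

/-- `ρ` is a reduced word: its letters are positive, and no shorter word represents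
the same permutation. -/
def IsReducedWord (ρ : List ℕ) : Prop :=
  (∀ i ∈ ρ, 1 ≤ i) ∧
    ∀ σ : List ℕ, (∀ i ∈ σ, 1 ≤ i) → toPerm σ = toPerm ρ → ρ.length ≤ σ.length

/-- `ρ` is a reduced word for the permutation `w`. -/
def ReducedWordFor (ρ : List ℕ) (w : Equiv.Perm ℕ) : Prop :=
  IsReducedWord ρ ∧ toPerm ρ = w

/-! ## Elementary Coxeter–Knuth relations. -/

/-- The elementary Coxeter–Knuth move on a consecutive triple
`(a, b, c) = (ρ_{i+1}, ρ_i, ρ_{i−1})`. -/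
def ckTriple (a b c : ℕ) : ℕ × ℕ × ℕ :=
  if a = c then (b, a, b)
  else if (c > a ∧ a > b) ∨ (c < a ∧ a < b) then (a, c, b)
  else if (a > c ∧ c > b) ∨ (a < c ∧ c < b) then (b, a, c)
  else (a, b, c)

/-- The elementary Coxeter–Knuth relation `𝔡_i`, acting on the letters
`ρ_{i+1} ρ_i ρ_{i−1}` of a word `ρ = (ρ_ℓ, …, ρ_1)` (indexed from the right). -/
def ckMove (i : ℕ) (ρ : List ℕ) : List ℕ :=
  if 2 ≤ i ∧ i + 1 ≤ ρ.length then
    let p := ρ.length - i - 1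
    let t := ckTriple (ρ.getD p 0) (ρ.getD (p + 1) 0) (ρ.getD (p + 2) 0)
    ((ρ.set p t.1).set (p + 1) t.2.1).set (p + 2) t.2.2
  else ρ

/-- Two words are Coxeter–Knuth equivalent if one is obtained from the other by a
finite sequence of elementary Coxeter–Knuth relations. -/
def CKEquiv (ρ σ : List ℕ) : Prop :=
  ∃ ms : List ℕ, σ = ms.foldl (fun w i => ckMove i w) ρ

/-! ## Run decompositions and descent tableaux. -/

/-- Split a list into maximal blocks, breaking between consecutive letters `a`, `b`
whenever `brk a b` holds. -/
def splitWhen (brk : ℕ → ℕ → Bool) : List ℕ → List (List ℕ)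
  | [] => []
  | [a] => [[a]]
  | a :: b :: rest =>
    match splitWhen brk (b :: rest) with
    | r :: rs => if brk a b then [a] :: r :: rs else (a :: r) :: rs
    | [] => [[a]]

/-- The run decomposition of a word into maximal strictly increasing runs, listed
left to right (so the list is `[ρ⁽ᵏ⁾, …, ρ⁽¹⁾]`, with `ρ⁽¹⁾` the final run). -/
def runs (ρ : List ℕ) : List (List ℕ) := splitWhen (fun a b => decide (b ≤ a)) ρ

/-- The rows of the descent tableau `𝔻(ρ)`, listed bottom to top:
`[ρ⁽¹⁾, …, ρ⁽ᵏ⁾]`. -/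
def rowsOf (ρ : List ℕ) : List (List ℕ) := (runs ρ).reverse

/-- The row reading word of a tableau whose rows are listed bottom to top:
read rows left to right, starting with the top row. -/
def wordOf (R : List (List ℕ)) : List ℕ := R.reverse.flatten

/-- The descent composition `Des(ρ) = (|ρ⁽¹⁾|, …, |ρ⁽ᵏ⁾|)`. -/
def DesComp (ρ : List ℕ) : List ℕ := (rowsOf ρ).map List.length

/-- A list of rows (bottom to top) is an increasing Young tableau of partition shape:
rows strictly increase left to right, shape is a partition, and columns strictly
increase bottom to top. -/
def IsIncreasingYoungRows (R : List (List ℕ)) : Prop :=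
  (∀ r ∈ R, r.Chain' (· < ·)) ∧
    R.Chain' (fun lo hi => hi.length ≤ lo.length ∧
      ∀ j < hi.length, lo.getD j 0 < hi.getD j 0)

/-! ## The drop map on a pair of increasing rows. -/

/-- Increment the first `n` letters of a list by `1`. -/
def incFirst : ℕ → List ℕ → List ℕ
  | 0, l => l
  | _ + 1, [] => []
  | n + 1, a :: l => (a + 1) :: incFirst n l

/-- Decrement the first `n` letters of a list by `1`. -/
def decFirst : ℕ → List ℕ → List ℕ
  | 0, l => l
  | _ + 1, [] => []
  | n + 1, a :: l => (a - 1) :: decFirst n l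

/-- `bCount t1 i [s_i, s_{i+1}, …]` is the largest `b` with `t1 = s_j + j` for all
`i ≤ j < i + b`. -/
def bCount (t1 : ℕ) : ℕ → List ℕ → ℕ
  | _, [] => 0
  | i, s :: rest => if t1 = s + i then bCount t1 (i + 1) rest + 1 else 0

/-- Index of the first failure `τ_j ≤ σ_j` in the drop alignment of `σ` below `τ`. -/
def failIdx (τ σ : List ℕ) : Option ℕ :=
  (τ.zip σ).findIdx? (fun p => decide (p.1 ≤ p.2))

/-- Fueled computation of the drop of the row `σ` below the row `τ`, returning the
new pair (top row, bottom row). -/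
def dropPairAux : ℕ → List ℕ → List ℕ → List ℕ × List ℕ
  | 0, τ, σ => (τ, σ)
  | fuel + 1, τ, σ =>
    match failIdx τ σ with
    | none =>
      if σ.length < τ.length then (τ.take σ.length, σ ++ τ.drop σ.length)
      else (τ, σ)
    | some j =>
      let x := τ.getD j 0
      let τr := τ.drop (j + 1)
      let σr := σ.drop j
      let res := dropPairAux fuel τr σr
      let l1 := (failIdx τr σr).getD τr.length
      let b := if l1 = 0 then 0
               else if x + 1 = τr.headD 0 then bCount (τr.headD 0) 1 (σr.take l1) else 0
      (τ.take j ++ res.1, σ.take j ++ x :: incFirst b res.2)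

/-- The drop of the row `σ` below the row `τ`: the pair (new top row, new bottom row). -/
def dropPair (τ σ : List ℕ) : List ℕ × List ℕ := dropPairAux (τ.length + 1) τ σ

/-- The word `drop(τσ)`. -/
def dropW (τ σ : List ℕ) : List ℕ := (dropPair τ σ).1 ++ (dropPair τ σ).2

/-- Apply `drop` to rows `i` and `i+1` (1-indexed from the bottom) of a list of rows. -/
def dropAt : ℕ → List (List ℕ) → List (List ℕ)
  | 1, σr :: τr :: rest => (dropPair τr σr).2 :: (dropPair τr σr).1 :: rest
  | n + 2, r :: R => r :: dropAt (n + 1) R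
  | _, R => R

/-- The map `drop_i` on words: replace the runs `ρ⁽ⁱ⁺¹⁾ ρ⁽ⁱ⁾` of the run
decomposition by `drop(ρ⁽ⁱ⁺¹⁾ ρ⁽ⁱ⁾)`. -/
def dropWordAt (i : ℕ) (ρ : List ℕ) : List ℕ := wordOf (dropAt i (rowsOf ρ))

/-- One sweep of all the maps `drop_i`. -/
def sweepDrop (ρ : List ℕ) : List ℕ :=
  (List.range (runs ρ).length).foldl (fun w i => dropWordAt (i + 1) w) ρ

/-- The drop `drop(ρ)` of a word: repeatedly apply the maps `drop_i` until reaching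
the fixed point (an increasing Young tableau). -/
def dropFull (ρ : List ℕ) : List ℕ := sweepDrop^[ρ.length * ρ.length + 1] ρ

/-! ## The lift map on a pair of increasing rows. -/

/-- `bCount2 x i τblk σblk` is the largest `b` with `τ_j = σ_j = x + j` for all
`i ≤ j < i + b`. -/
def bCount2 (x : ℕ) : ℕ → List ℕ → List ℕ → ℕ
  | i, t :: ts, s :: ss =>
      if t = x + i ∧ s = x + i then bCount2 x (i + 1) ts ss + 1 else 0
  | _, _, _ => 0

/-- Index of the first failure (from the right) in the lift alignment of `τ` above
`σ`: here both rows are given reversed. -/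
def liftFailIdx (τR σR : List ℕ) : Option ℕ :=
  (τR.zip σR).findIdx? (fun p => decide (p.1 < p.2))

/-- Fueled computation of the lift of the row `τ` above the row `σ`, on reversed
rows; returns the new (top row, bottom row), reversed. -/
def liftPairAuxR : ℕ → List ℕ → List ℕ → List ℕ × List ℕ
  | 0, τR, σR => (τR, σR)
  | fuel + 1, τR, σR =>
    match liftFailIdx τR σR with
    | none => (τR, σR)
    | some j =>
      let x := σR.getD j 0
      let τr := τR.drop j
      let σr := σR.drop (j + 1)
      let res := liftPairAuxR fuel τr σr
      let τblk := (τR.take j).reverse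
      let σblk := (σR.take j).reverse
      let b := if σblk.headD 0 = x + 1 then bCount2 x 1 τblk σblk else 0
      (τR.take j ++ x :: res.1, (decFirst b σblk).reverse ++ res.2)

/-- Check that the lift alignment leaves no unmatched letters of `σ` (no letter of
`σ` other than the `x_j`'s lacks a letter of `τ` above it); when some letter is
left over, the lift acts trivially. -/
def liftOkAux : ℕ → List ℕ → List ℕ → Bool
  | 0, _, _ => true
  | fuel + 1, τR, σR =>
    match liftFailIdx τR σR with
    | none => σR.length ≤ τR.length
    | some j => liftOkAux fuel (τR.drop j) (σR.drop (j + 1))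

/-- The lift of the row `τ` above the row `σ`: the pair (new top row, new bottom row). -/
def liftPair (τ σ : List ℕ) : List ℕ × List ℕ :=
  if liftOkAux (σ.length + 1) τ.reverse σ.reverse then
    let r := liftPairAuxR (σ.length + 1) τ.reverse σ.reverse
    (r.1.reverse, r.2.reverse)
  else (τ, σ)

/-- The word `lift(τσ)`. -/
def liftW (τ σ : List ℕ) : List ℕ := (liftPair τ σ).1 ++ (liftPair τ σ).2

/-- Apply `lift` to rows `i` and `i+1` (1-indexed from the bottom) of a list of rows. -/
def liftAt : ℕ → List (List ℕ) → List (List ℕ)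
  | 1, σr :: τr :: rest => (liftPair τr σr).2 :: (liftPair τr σr).1 :: rest
  | n + 2, r :: R => r :: liftAt (n + 1) R
  | _, R => R

/-- The lifting sequence `lift_{[i,j]} = lift_j ∘ ⋯ ∘ lift_i`. -/
def liftSeq (i j : ℕ) (T : List (List ℕ)) : List (List ℕ) :=
  (List.range' i (j + 1 - i)).foldl (fun t k => liftAt k t) T

/-- Fueled check that `lift_i, lift_{i+1}, …` all act faithfully, for `n` steps. -/
def faithfulAux : ℕ → ℕ → List (List ℕ) → Bool
  | 0, _, _ => false
  | n + 1, i, T =>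
    let T' := liftAt i T
    if T' = T then false
    else if n = 0 then true
    else faithfulAux n (i + 1) T'

/-- The lifting sequence `lift_{[i,j]}` acts faithfully on `T`. -/
def faithfulSeq (i j : ℕ) (T : List (List ℕ)) : Bool :=
  if i ≤ j then faithfulAux (j + 1 - i) i T else false

/-- Find the canonical move: the maximal `j` admitting some `i ≤ j` with
`lift_{[i,j]}` faithful, together with the minimal such `i`. -/
def findMove (T : List (List ℕ)) : Option (ℕ × ℕ) :=
  (List.range (T.length + 1)).reverse.findSome? (fun j =>
    ((List.range' 1 j).find? (fun i => faithfulSeq i j T)).map (fun i => (i, j)))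

/-- Fueled canonical lifting loop. -/
def liftCanonAux : ℕ → List (List ℕ) → List (List ℕ)
  | 0, T => T
  | fuel + 1, T =>
    match findMove T with
    | none => T
    | some ij => liftCanonAux fuel (liftSeq ij.1 ij.2 T)

/-- The canonical lifting algorithm applied to a tableau (rows bottom to top). -/
def liftCanon (T : List (List ℕ)) : List (List ℕ) :=
  liftCanonAux (T.flatten.length * T.length + 1) T

/-- The word `lift(ρ)`: the row reading word of the canonical lift of `𝔻(ρ)`. -/
def liftWord (ρ : List ℕ) : List ℕ := wordOf (liftCanon (rowsOf ρ))

/-! ## Weak descent compositions. -/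

/-- From the list of minima `[r_k, …, r_1]` of the runs (topmost first), compute
`[r̂_k, …, r̂_1]` where `r̂_k = r_k` and `r̂_i = min (r_i, r̂_{i+1} − 1)`. -/
def hatMins (L : List ℤ) : List ℤ :=
  (L.foldl (fun (acc : List ℤ × Option ℤ) r =>
    let v := match acc.2 with
      | none => r
      | some p => min r (p - 1)
    (acc.1 ++ [v], some v)) ([], none)).1

/-- Build the weak composition with value `lens_i` in position `hs_i` and `0`
elsewhere. -/
def buildWeakComp (hs : List ℤ) (lens : List ℕ) : List ℕ :=
  (List.range (hs.headD 0).toNat).map (fun p =>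
    match (hs.zip lens).find? (fun q => decide (q.1 = (p : ℤ) + 1)) with
    | some q => q.2
    | none => 0)

/-- The weak descent composition determined by the minima and lengths of the runs
(topmost run first); `none` means virtual. -/
def desFromBlocks (mins : List ℤ) (lens : List ℕ) : Option (List ℕ) :=
  let hs := hatMins mins
  if hs = [] then some []
  else if hs.getLastD 0 ≤ 0 then none
  else some (buildWeakComp hs lens)

/-- The weak descent composition `des(ρ)` of a word; `none` means `ρ` is virtual. -/
def desWord (ρ : List ℕ) : Option (List ℕ) :=
  desFromBlocks ((runs ρ).map (fun r => ((r.headD 0 : ℕ) : ℤ)))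
    ((runs ρ).map List.length)

/-- Prefix-sum dominance of weak compositions: `domLe a b` means
`a_1 + ⋯ + a_k ≤ b_1 + ⋯ + b_k` for all `k` (i.e. `b ≥ a`). -/
def domLe (a b : List ℕ) : Prop := ∀ k, ((a.take k).sum ≤ (b.take k).sum)

/-- A reduced word is Yamanouchi if it is non-virtual and its weak descent
composition is dominated by that of every non-virtual Coxeter–Knuth equivalent word. -/
def IsYam (ρ : List ℕ) : Prop :=
  IsReducedWord ρ ∧ ∃ d, desWord ρ = some d ∧
    ∀ σ e, CKEquiv ρ σ → desWord σ = some e → domLe d e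

/-! ## Quasisymmetric functions, slide polynomials, and generating functions.

We model formal power series in variables `x_1, x_2, …` (indexed by `ℕ`, with
variable `i` standing for `x_{i+1}`) as functions `(ℕ →₀ ℕ) → ℤ` recording
coefficients of monomials. -/

/-- `β` refines `α`: `β` splits into consecutive blocks with sums the parts of `α`. -/
def Refines (β α : List ℕ) : Prop :=
  ∃ blocks : List (List ℕ), blocks.flatten = β ∧
    List.Forall₂ (fun blk a => blk.sum = a) blocks α

/-- The flattening of a weak composition given as a finitely supported exponent
vector: the list of its nonzero values, in order. -/
def flatOf (b : ℕ →₀ ℕ) : List ℕ :=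
  ((List.range (b.support.sup id + 1)).map b).filter (fun x => decide (x ≠ 0))

open Classical in
/-- The fundamental quasisymmetric function `F_α`. -/
noncomputable def Fqs (α : List ℕ) : (ℕ →₀ ℕ) → ℤ :=
  fun b => if Refines (flatOf b) α then 1 else 0

open Classical in
/-- The fundamental slide polynomial `𝔉_a` of a weak composition `a`. -/
noncomputable def FSlide (a : List ℕ) : (ℕ →₀ ℕ) → ℤ :=
  fun b =>
    if (∀ i, a.length ≤ i → b i = 0) ∧
       (∀ k, (a.take k).sum ≤ ∑ i ∈ Finset.range k, b i) ∧
       Refines (flatOf b) (a.filter (fun x => decide (x ≠ 0))) then 1 else 0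

/-- `𝔉` extended to virtual indices by `𝔉_∅ = 0`. -/
noncomputable def FSlideO : Option (List ℕ) → (ℕ →₀ ℕ) → ℤ
  | none => 0
  | some a => FSlide a

/-- The Stanley symmetric function `S_w`. -/
noncomputable def StanleySym (w : Equiv.Perm ℕ) : (ℕ →₀ ℕ) → ℤ :=
  ∑ᶠ ρ ∈ {ρ : List ℕ | ReducedWordFor ρ w}, Fqs (DesComp ρ)

/-- The Schubert polynomial `𝔖_w`. -/
noncomputable def Schubert (w : Equiv.Perm ℕ) : (ℕ →₀ ℕ) → ℤ :=
  ∑ᶠ ρ ∈ {ρ : List ℕ | ReducedWordFor ρ w}, FSlideO (desWord ρ)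

/-! ## Standard Young tableaux and Schur functions. -/

/-- The (bottom-to-top) row index of the row of `T` containing the entry `e`. -/
def rowOf (T : List (List ℕ)) (e : ℕ) : ℕ := T.findIdx (fun r => r.contains e)

/-- The column index of the entry `e` in `T`. -/
def colOf (T : List (List ℕ)) (e : ℕ) : ℕ :=
  (T.getD (rowOf T e) []).findIdx (fun z => z == e)

/-- `T` (rows listed bottom to top) is a standard Young tableau. -/
def IsSYT (T : List (List ℕ)) : Prop :=
  (∀ r ∈ T, r.Chain' (· < ·)) ∧
    T.Chain' (fun lo hi => hi.length ≤ lo.length ∧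
      ∀ j < hi.length, lo.getD j 0 < hi.getD j 0) ∧
    [] ∉ T ∧
    T.flatten.Perm (List.range' 1 T.flatten.length)

/-- The descent composition of a standard Young tableau: `i` is a descent when
`i+1` lies weakly left of `i`. -/
def sytDes (T : List (List ℕ)) : List ℕ :=
  (splitWhen (fun a _ => decide (colOf T (a + 1) ≤ colOf T a))
    (List.range' 1 T.flatten.length)).map List.length

/-- The Schur function `s_λ`, for a partition `λ` given as the list of row lengths
bottom to top. -/
noncomputable def Schur (lam : List ℕ) : (ℕ →₀ ℕ) → ℤ :=
  ∑ᶠ T ∈ {T : List (List ℕ) | IsSYT T ∧ T.map List.length = lam}, Fqs (sytDes T)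

/-! ## Standard key tableaux and Demazure characters. -/

/-- `T` is a standard key tableau of shape the weak composition `a`: rows (listed
bottom to top, with row `i` of length `a_i`, possibly `0`) strictly decrease left to
right, the entries are `1, …, |a|`, and whenever an entry `i` lies above an entry
`k` in the same column with `i < k`, some entry `j` right of `k` satisfies `i < j`. -/
def IsSKT (a : List ℕ) (T : List (List ℕ)) : Prop :=
  T.map List.length = a ∧
    (∀ r ∈ T, r.Chain' (· > ·)) ∧
    T.flatten.Perm (List.range' 1 a.sum) ∧
    ∀ lo hi, lo < hi → hi < T.length →
      ∀ c, c < (T.getD hi []).length → c < (T.getD lo []).length →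
        (T.getD hi []).getD c 0 < (T.getD lo []).getD c 0 →
        ∃ c', c < c' ∧ c' < (T.getD lo []).length ∧
          (T.getD hi []).getD c 0 < (T.getD lo []).getD c' 0

/-- The runs of the word `n ⋯ 2 1` determined by the descents of a standard key
tableau `T` (where `i` is a descent when `i+1` lies weakly right of `i`). -/
def sktRuns (T : List (List ℕ)) : List (List ℕ) :=
  splitWhen (fun _ b => decide (colOf T b ≤ colOf T (b + 1)))
    ((List.range' 1 T.flatten.length).reverse)

/-- The minimal row (1-indexed from the bottom) among the cells of the entries of
`r` in `T`. -/
def minRow (T : List (List ℕ)) (r : List ℕ) : ℕ :=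
  ((r.map (fun e => rowOf T e + 1)).min?).getD 0

/-- The weak descent composition `des(T)` of a standard key tableau; `none` means
`T` is virtual. -/
def desSKT (T : List (List ℕ)) : Option (List ℕ) :=
  (desFromBlocks ((sktRuns T).map (fun r => ((minRow T r : ℕ) : ℤ)))
    ((sktRuns T).map List.length)).map
      (fun d => d ++ List.replicate (T.length - d.length) 0)

/-- The Demazure character (key polynomial) `κ_a`. -/
noncomputable def KeyPoly (a : List ℕ) : (ℕ →₀ ℕ) → ℤ :=
  ∑ᶠ T ∈ {T : List (List ℕ) | IsSKT a T}, FSlideO (desSKT T)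

/-- `κ` extended to virtual indices by `κ_∅ = 0`. -/
noncomputable def KeyPolyO : Option (List ℕ) → (ℕ →₀ ℕ) → ℤ
  | none => 0
  | some a => KeyPoly a

/-! ## Edelman–Greene insertion and weak insertion. -/

/-- Edelman–Greene insertion of `x` into a single row: either append `x`, or bump
the smallest entry exceeding `x` (suppressing the replacement when that entry is
`x+1` and `x` already occurs in the row). -/
def eginsRow (x : ℕ) (row : List ℕ) : List ℕ × Option ℕ :=
  match row.findIdx? (fun z => decide (x < z)) with
  | none => (row ++ [x], none)
  | some j =>
    let y := row.getD j 0
    (if y = x + 1 ∧ row.contains x then row else row.set j x, some y)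

/-- Edelman–Greene insertion of `x` into a tableau (rows bottom to top). -/
def egins : ℕ → List (List ℕ) → List (List ℕ)
  | x, [] => [[x]]
  | x, row :: rest =>
    match eginsRow x row with
    | (r, none) => r :: rest
    | (r, some y) => r :: egins y rest

/-- The Edelman–Greene insertion tableau `P(ρ)` of a word. -/
def PEG (ρ : List ℕ) : List (List ℕ) := ρ.foldl (fun P x => egins x P) []

/-- One sweep of all the maps `drop_i` on a tableau (rows bottom to top). -/
def sweepDropT (T : List (List ℕ)) : List (List ℕ) :=
  (List.range T.length).foldl (fun t i => dropAt (i + 1) t) T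

/-- The drop of a tableau: repeatedly drop until reaching the increasing Young
tableau of the class. -/
def dropCanon (T : List (List ℕ)) : List (List ℕ) :=
  sweepDropT^[T.flatten.length * T.length + 1] T

/-- Weak insertion of the letter `x` into a Yamanouchi key tableau `P`:
`lift (drop P ← x)`. -/
def winsert (x : ℕ) (P : List (List ℕ)) : List (List ℕ) :=
  liftCanon (egins x (dropCanon P))

/-- The weak insertion tableau `P̃(ρ)` (rows bottom to top). -/
def Pweak (ρ : List ℕ) : List (List ℕ) := ρ.foldl (fun P x => winsert x P) []

/-- The Yamanouchi word of the Coxeter–Knuth class of `ρ`: the row reading word of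
`P̃(ρ)`. -/
def yamWord (ρ : List ℕ) : List ℕ := wordOf (Pweak ρ)

/-- The shape (weak composition) of the weak insertion tableau of the first `m`
letters of `ρ`. -/
def shapeAt (ρ : List ℕ) (m : ℕ) : List ℕ :=
  (desWord (wordOf (Pweak (ρ.take m)))).getD []

/-- Append the entry `e` at the end of row `j` (0-indexed from the bottom),
extending with empty rows as needed. -/
def placeEntry (Q : List (List ℕ)) (j e : ℕ) : List (List ℕ) :=
  let Q' := Q ++ List.replicate (j + 1 - Q.length) []
  Q'.set j (Q'.getD j [] ++ [e])

/-- The (0-indexed) row in which the shape grows from `aold` to `anew`. -/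
def growRow (aold anew : List ℕ) : ℕ :=
  ((List.range anew.length).find?
    (fun j => decide (aold.getD j 0 ≠ anew.getD j 0))).getD 0

/-- The weak recording tableau `Q̃(ρ)`: entry `i` is placed in the cell where the
shape grows at the step inserting `ρ_i` (entries are placed in decreasing order). -/
def Qweak (ρ : List ℕ) : List (List ℕ) :=
  (List.range ρ.length).foldl (fun Q m =>
    placeEntry Q (growRow (shapeAt ρ m) (shapeAt ρ (m + 1))) (ρ.length - m)) []

/-! ## Elementary weak dual equivalence involutions. -/

/-- Column reading order on entries: by column, and bottom to top within a column. -/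
def colKeyLe (T : List (List ℕ)) (x y : ℕ) : Bool :=
  decide (colOf T x < colOf T y ∨ (colOf T x = colOf T y ∧ rowOf T x ≤ rowOf T y))

/-- Sort three values by a boolean order. -/
def sort3 (le : ℕ → ℕ → Bool) (a b c : ℕ) : ℕ × ℕ × ℕ :=
  if le a b then
    if le b c then (a, b, c) else if le a c then (a, c, b) else (c, a, b)
  else
    if le a c then (b, a, c) else if le b c then (b, c, a) else (c, b, a)

/-- Relabel the entries `x, y, z` of `T` as `x', y', z'` respectively. -/
def relabel3 (T : List (List ℕ)) (x y z x' y' z' : ℕ) : List (List ℕ) :=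
  T.map (List.map (fun t =>
    if t = x then x' else if t = y then y' else if t = z then z' else t))

/-- The elementary weak dual equivalence involution `d̃_i` on standard key tableaux:
with `u, v, w` the cells of `i−1, i, i+1` in column reading order, if `u` and `w`
share a row and `v` does not, cycle the three entries so that `i` shares a row with
`i ± 1`; else if `v` holds `i+1` swap `i−1, i`; else if `v` holds `i−1` swap
`i, i+1`; otherwise fix `T`. -/
def wde (i : ℕ) (T : List (List ℕ)) : List (List ℕ) :=
  let s := sort3 (colKeyLe T) (i - 1) i (i + 1)
  let u := s.1
  let v := s.2.1
  let w := s.2.2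
  if rowOf T u = rowOf T w ∧ rowOf T v ≠ rowOf T u then
    let T1 := relabel3 T u v w w u v
    let T2 := relabel3 T u v w v w u
    if rowOf T1 i = rowOf T1 (i - 1) ∨ rowOf T1 i = rowOf T1 (i + 1) then T1 else T2
  else if v = i + 1 then relabel3 T (i - 1) i (i + 1) i (i - 1) (i + 1)
  else if v = i - 1 then relabel3 T (i - 1) i (i + 1) (i - 1) (i + 1) i
  else T

/-- Remove trailing zero parts of a weak composition (two weak compositions are
identified when they differ only in trailing zeros). -/
def trimZeros (a : List ℕ) : List ℕ :=
  (a.reverse.dropWhile (fun x => x == 0)).reverse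

/-- The transposition `s_i` acting on compositions by interchanging the parts in
positions `i` and `i+1` (1-indexed). -/
def swapParts (i : ℕ) (c : List ℕ) : List ℕ :=
  if 1 ≤ i ∧ i < c.length then
    (c.set (i - 1) (c.getD i 0)).set i (c.getD (i - 1) 0)
  else c

end EG

namespace EG

/-!
Inserting the letters of a word, from right to left, into the columns of a tableau by
Edelman–Greene insertion gives a tableau `P` that depends only on the Coxeter–Knuth class of the
word. The rank of its column `j` over `k` is the maximal number of disjoint chains
`a₀ < ⋯ < a_j` with `k < a₀` and `a_i` in the column `i`; let `K k` be the sum of these ranks over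
all columns. Inserting a letter `x` never lowers a rank over `k < x`, and it raises the rank of the
column that grows. Hence, for every word `σ` in the class, the runs whose position in `des σ` is
greater than `k` have total length at most `K k`.

Lifting preserves the Coxeter–Knuth class and the first column. When a row with first letter `x`
and length `n` is not full, that is, when the column `n` of the tableau of the rows up to and
including it has positive rank over `x - 1`, a chain witnessing this gives a faithful lifting
sequence that makes the row full. So in the terminal tableau every row is full; each row
then adds at most its length to the ranks over `k`, and the bound `K k` is attained for every `k`.
As all words in the class have the same length, the partial sums of `des` are smallest at the
reading word of the terminal tableau.
-/

/-! ### Reduced words -/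

theorem toPerm_cons (a : ℕ) (w : List ℕ) :
    toPerm (a :: w) = Equiv.swap a (a + 1) * toPerm w := by
  simp [toPerm]

theorem toPerm_append (u v : List ℕ) : toPerm (u ++ v) = toPerm u * toPerm v := by
  simp [toPerm]

theorem swap_mul_swap_comm {i j : ℕ} (h : i + 1 < j) :
    Equiv.swap i (i + 1) * Equiv.swap j (j + 1) =
      Equiv.swap j (j + 1) * Equiv.swap i (i + 1) := by
  ext n
  simp only [Equiv.Perm.mul_apply, Equiv.swap_apply_def]
  split_ifs <;> omega

theorem swap_mul_swap_braid (i : ℕ) :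
    Equiv.swap i (i + 1) * (Equiv.swap (i + 1) (i + 1 + 1) * Equiv.swap i (i + 1)) =
      Equiv.swap (i + 1) (i + 1 + 1) *
        (Equiv.swap i (i + 1) * Equiv.swap (i + 1) (i + 1 + 1)) := by
  ext n
  simp only [Equiv.Perm.mul_apply, Equiv.swap_apply_def]
  split_ifs <;> omega

theorem toPerm_pair_comm {i j : ℕ} (h : i + 1 < j) : toPerm [i, j] = toPerm [j, i] := by
  simpa [toPerm] using swap_mul_swap_comm h

namespace IsReducedWord

theorem factor {u b v : List ℕ} (h : IsReducedWord (u ++ b ++ v)) : IsReducedWord b := by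
  refine ⟨fun i hi => h.1 i (by simp [hi]), fun σ hσ hp => ?_⟩
  have hpos : ∀ i ∈ u ++ σ ++ v, 1 ≤ i := by
    intro i hi
    simp only [mem_append] at hi
    rcases hi with (hi | hi) | hi
    · exact h.1 i (by simp [hi])
    · exact hσ i hi
    · exact h.1 i (by simp [hi])
  have hlen := h.2 (u ++ σ ++ v) hpos (by simp [toPerm_append, hp])
  simp only [length_append] at hlen
  omega

theorem of_append_left {u v : List ℕ} (h : IsReducedWord (u ++ v)) : IsReducedWord u :=
  factor (u := []) (v := v) (by simpa using h)

theorem of_append_right {u v : List ℕ} (h : IsReducedWord (u ++ v)) : IsReducedWord v :=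
  factor (u := u) (v := []) (by simpa using h)

theorem of_cons {a : ℕ} {v : List ℕ} (h : IsReducedWord (a :: v)) : IsReducedWord v :=
  of_append_right (u := [a]) h

theorem not_square {a : ℕ} : ¬ IsReducedWord [a, a] := fun h => by
  simpa using h.2 [] (by simp) (by simp [toPerm])

theorem adjacent_of_palindrome {b g : ℕ} (h : IsReducedWord [b, g, b]) :
    g = b + 1 ∨ b = g + 1 := by
  by_contra hc
  have hne : g ≠ b := by
    rintro rfl
    exact not_square (of_append_left (u := [g, g]) (v := [g]) h)
  have hcomm : toPerm [b, g] = toPerm [g, b] := by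
    rcases lt_or_gt_of_ne hne with hl | hl
    · exact (toPerm_pair_comm (show g + 1 < b by omega)).symm
    · exact toPerm_pair_comm (show b + 1 < g by omega)
  have hcancel : toPerm [g] = toPerm [b, g, b] := by
    rw [show [b, g, b] = [b, g] ++ [b] from rfl, toPerm_append, hcomm]
    simp [toPerm, mul_assoc]
  simpa using h.2 [g] (fun i hi => h.1 i (by simp_all)) hcancel

end IsReducedWord

/-! ### Coxeter–Knuth equivalence as a congruence -/

/-- The local relations of Coxeter–Knuth equivalence on words of length three. Closing them
under reflexivity at every length lets a local relation degenerate when letters drop out. -/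
inductive CKStep : List ℕ → List ℕ → Prop
  | refl (w : List ℕ) : CKStep w w
  | symm {w w' : List ℕ} : CKStep w w' → CKStep w' w
  | knuth₁ {x y z : ℕ} : x < y → y < z → CKStep [y, x, z] [y, z, x]
  | knuth₂ {x y z : ℕ} : x < y → y < z → CKStep [x, z, y] [z, x, y]
  | braid (x : ℕ) : CKStep [x, x + 1, x] [x + 1, x, x + 1]

/-- The congruence on words generated by `CKStep`; on reduced words it contains `CKEquiv`. -/
inductive CKRel : List ℕ → List ℕ → Prop
  | refl (w : List ℕ) : CKRel w w
  | symm {w w' : List ℕ} : CKRel w w' → CKRel w' w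
  | trans {w w' w'' : List ℕ} : CKRel w w' → CKRel w' w'' → CKRel w w''
  | step {a b : List ℕ} (h : CKStep a b) (u v : List ℕ) : CKRel (u ++ a ++ v) (u ++ b ++ v)

theorem CKStep.eq_or_length_eq {w w' : List ℕ} (h : CKStep w w') :
    w = w' ∨ w.length = 3 ∧ w'.length = 3 := by
  induction h with
  | refl w => exact .inl rfl
  | symm _ ih => exact ih.imp Eq.symm And.symm
  | knuth₁ | knuth₂ | braid => exact .inr ⟨rfl, rfl⟩

theorem CKStep.length_eq {w w' : List ℕ} (h : CKStep w w') : w.length = w'.length := by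
  rcases h.eq_or_length_eq with rfl | h
  · rfl
  · omega

theorem CKStep.toPerm_eq {w w' : List ℕ} (h : CKStep w w') : toPerm w = toPerm w' := by
  induction h with
  | refl w => rfl
  | symm _ ih => exact ih.symm
  | @knuth₁ x y z h₁ h₂ =>
    rw [toPerm_cons, toPerm_pair_comm (by omega), ← toPerm_cons]
  | @knuth₂ x y z h₁ h₂ =>
    rw [show [x, z, y] = [x, z] ++ [y] from rfl, toPerm_append, toPerm_pair_comm (by omega),
      ← toPerm_append, cons_append, singleton_append]
  | braid x => simpa [toPerm] using swap_mul_swap_braid x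

theorem CKStep.forall_pos_iff {w w' : List ℕ} (h : CKStep w w') :
    (∀ i ∈ w, 1 ≤ i) ↔ ∀ i ∈ w', 1 ≤ i := by
  induction h with
  | refl w => rfl
  | symm _ ih => exact ih.symm
  | knuth₁ | knuth₂ | braid => simp only [forall_mem_cons, not_mem_nil]; tauto

namespace CKRel

theorem append {a b : List ℕ} (h : CKRel a b) (u v : List ℕ) :
    CKRel (u ++ a ++ v) (u ++ b ++ v) := by
  induction h with
  | refl w => exact refl _
  | symm _ ih => exact ih.symm
  | trans _ _ ih₁ ih₂ => exact ih₁.trans ih₂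
  | step h u' v' => simpa using step h (u ++ u') (v' ++ v)

theorem append_left {a b : List ℕ} (h : CKRel a b) (u : List ℕ) : CKRel (u ++ a) (u ++ b) := by
  simpa using h.append u []

theorem append_right {a b : List ℕ} (h : CKRel a b) (v : List ℕ) : CKRel (a ++ v) (b ++ v) := by
  simpa using h.append [] v

theorem cons {a b : List ℕ} (h : CKRel a b) (x : ℕ) : CKRel (x :: a) (x :: b) :=
  h.append_left [x]

theorem length_eq {a b : List ℕ} (h : CKRel a b) : a.length = b.length := by
  induction h with
  | refl w => rfl
  | symm _ ih => exact ih.symm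
  | trans _ _ ih₁ ih₂ => exact ih₁.trans ih₂
  | step h => simp [h.length_eq]

theorem toPerm_eq {a b : List ℕ} (h : CKRel a b) : toPerm a = toPerm b := by
  induction h with
  | refl w => rfl
  | symm _ ih => exact ih.symm
  | trans _ _ ih₁ ih₂ => exact ih₁.trans ih₂
  | step h => simp only [toPerm_append, h.toPerm_eq]

theorem forall_pos_iff {a b : List ℕ} (h : CKRel a b) :
    (∀ i ∈ a, 1 ≤ i) ↔ ∀ i ∈ b, 1 ≤ i := by
  induction h with
  | refl w => rfl
  | symm _ ih => exact ih.symm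
  | trans _ _ ih₁ ih₂ => exact ih₁.trans ih₂
  | step h => simp only [forall_mem_append, h.forall_pos_iff]

theorem isReducedWord {a b : List ℕ} (h : CKRel a b) (ha : IsReducedWord a) :
    IsReducedWord b :=
  ⟨h.forall_pos_iff.1 ha.1, fun σ hσ e => h.length_eq ▸ ha.2 σ hσ (e.trans h.toPerm_eq.symm)⟩

end CKRel

theorem ckStep_ckTriple {a b c : ℕ} (h : IsReducedWord [a, b, c]) :
    CKStep [a, b, c] [(ckTriple a b c).1, (ckTriple a b c).2.1, (ckTriple a b c).2.2] := by
  unfold ckTriple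
  split_ifs with h₁ h₂ h₃
  · subst h₁
    rcases h.adjacent_of_palindrome with rfl | rfl
    · exact .braid a
    · exact (CKStep.braid b).symm
  · rcases h₂ with ⟨h₂, h₃⟩ | ⟨h₂, h₃⟩
    · exact .knuth₁ h₃ h₂
    · exact (CKStep.knuth₁ h₂ h₃).symm
  · rcases h₃ with ⟨h₂, h₃⟩ | ⟨h₂, h₃⟩
    · exact (CKStep.knuth₂ h₃ h₂).symm
    · exact .knuth₂ h₂ h₃
  · exact .refl _

theorem ckRel_ckMove (i : ℕ) {ρ : List ℕ} (h : IsReducedWord ρ) : CKRel ρ (ckMove i ρ) := by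
  unfold ckMove
  split_ifs with hi
  swap
  · exact .refl _
  obtain ⟨u, w, hu, hw, rfl⟩ : ∃ u w, u.length = ρ.length - i - 1 ∧ 3 ≤ w.length ∧ ρ = u ++ w :=
    ⟨ρ.take (ρ.length - i - 1), ρ.drop (ρ.length - i - 1), by simp; omega, by simp; omega,
      by simp⟩
  match w, hw with
  | a :: b :: c :: v, _ =>
    have hr : IsReducedWord [a, b, c] := IsReducedWord.factor (u := u) (v := v) (by simpa using h)
    simp only [← hu]
    simpa [getD_append_right] using CKRel.step (ckStep_ckTriple hr) u v

theorem CKEquiv.ckRel {ρ σ : List ℕ} (hc : CKEquiv ρ σ) (h : IsReducedWord ρ) : CKRel ρ σ := by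
  obtain ⟨ms, rfl⟩ := hc
  induction ms generalizing ρ with
  | nil => exact .refl _
  | cons m ms ih => exact (ckRel_ckMove m h).trans (ih ((ckRel_ckMove m h).isReducedWord h))

/-! ### Column insertion -/

/-- The letter bumped from the column `A` when `x` is inserted: the least entry above `x`. -/
def bumped (A : Finset ℕ) (x : ℕ) : Option ℕ :=
  if h : ∃ y ∈ A, x < y then some (Nat.find h) else none

theorem bumped_eq_none {A : Finset ℕ} {x : ℕ} : bumped A x = none ↔ ∀ z ∈ A, z ≤ x := by
  simp [bumped]

theorem bumped_eq_some {A : Finset ℕ} {x y : ℕ} :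
    bumped A x = some y ↔ y ∈ A ∧ x < y ∧ ∀ z ∈ A, x < z → y ≤ z := by
  unfold bumped
  split_ifs with h
  · rw [Option.some_inj, Nat.find_eq_iff]
    grind
  · grind

theorem bumped_empty (x : ℕ) : bumped ∅ x = none := bumped_eq_none.2 (by simp)

/-- The column obtained from `A` by Edelman–Greene insertion of `x`. -/
def colInsert (A : Finset ℕ) (x : ℕ) : Finset ℕ :=
  if x ∈ A then A else insert x (A \ (bumped A x).toFinset)

theorem colInsert_of_mem {A : Finset ℕ} {x : ℕ} (h : x ∈ A) : colInsert A x = A := if_pos h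

theorem mem_colInsert {A : Finset ℕ} {x z : ℕ} :
    z ∈ colInsert A x ↔ z = x ∨ z ∈ A ∧ (x ∈ A ∨ bumped A x ≠ some z) := by
  unfold colInsert
  split_ifs with h
  · grind
  · simp [h, Option.mem_toFinset, Option.mem_def]

theorem mem_colInsert_self (A : Finset ℕ) (x : ℕ) : x ∈ colInsert A x :=
  mem_colInsert.2 (.inl rfl)

/-- Column insertion of a letter into a tableau, given by its list of columns. -/
def insertLetter : ℕ → List (Finset ℕ) → List (Finset ℕ)
  | x, [] => [{x}]
  | x, A :: T => colInsert A x :: (bumped A x).elim T (insertLetter · T)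

/-- Column insertion of the letters of a word, from right to left. -/
def insertWord (w : List ℕ) (T : List (Finset ℕ)) : List (Finset ℕ) := w.foldr insertLetter T

/-- The column insertion tableau of a word, given by its list of columns. -/
def columnTableau (w : List ℕ) : List (Finset ℕ) := insertWord w []

theorem insertWord_cons (x : ℕ) (w : List ℕ) (T : List (Finset ℕ)) :
    insertWord (x :: w) T = insertLetter x (insertWord w T) := rfl

theorem insertWord_append (u v : List ℕ) (T : List (Finset ℕ)) :
    insertWord (u ++ v) T = insertWord u (insertWord v T) := foldr_append

theorem columnTableau_append (u v : List ℕ) :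
    columnTableau (u ++ v) = insertWord u (columnTableau v) := insertWord_append u v []

/-- The column obtained from `A` by inserting the letters of a word from right to left. -/
def colInsertWord (w : List ℕ) (A : Finset ℕ) : Finset ℕ := w.foldr (fun x B => colInsert B x) A

/-- The word of letters bumped from the column `A` by inserting the letters of a word from right
to left; the first bumped letter is the last of the word. -/
def bumpWord : List ℕ → Finset ℕ → List ℕ
  | [], _ => []
  | x :: w, A => (bumped (colInsertWord w A) x).toList ++ bumpWord w A

theorem colInsertWord_cons (x : ℕ) (w : List ℕ) (A : Finset ℕ) :
    colInsertWord (x :: w) A = colInsert (colInsertWord w A) x := rfl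

theorem insertWord_column (w : List ℕ) (A : Finset ℕ) (T : List (Finset ℕ)) :
    insertWord w (A :: T) = colInsertWord w A :: insertWord (bumpWord w A) T := by
  induction w with
  | nil => rfl
  | cons x w ih =>
    rw [insertWord_cons, ih, insertLetter, bumpWord, colInsertWord_cons]
    cases bumped (colInsertWord w A) x <;> rfl

theorem insertWord_nil {w : List ℕ} (hw : w ≠ []) : insertWord w [] = insertWord w [∅] := by
  obtain ⟨v, x, rfl⟩ := (eq_nil_or_concat' w).resolve_left hw
  rw [insertWord_append, insertWord_append]
  simp [insertWord, insertLetter, colInsert, bumped_empty]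

/-! ### Column reading words -/

/-- The entries of a column in decreasing order. -/
def colWord (A : Finset ℕ) : List ℕ := A.sort (· ≥ ·)

/-- The column reading word of a tableau given by its list of columns. -/
def columnWord (T : List (Finset ℕ)) : List ℕ := (T.map colWord).flatten

theorem columnWord_cons (A : Finset ℕ) (T : List (Finset ℕ)) :
    columnWord (A :: T) = colWord A ++ columnWord T := by
  simp [columnWord]

theorem colWord_empty : colWord ∅ = [] := by simp [colWord]

theorem colWord_insert {A : Finset ℕ} {m : ℕ} (h : ∀ z ∈ A, z < m) :
    colWord (insert m A) = m :: colWord A :=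
  Finset.sort_insert _ (fun b hb => (h b hb).le) (fun hm => lt_irrefl _ (h m hm))

theorem mem_colWord {A : Finset ℕ} {z : ℕ} : z ∈ colWord A ↔ z ∈ A := by simp [colWord]

theorem pairwise_colWord (A : Finset ℕ) : (colWord A).Pairwise (· > ·) :=
  A.sortedGT_sort.pairwise

theorem exists_eq_insert_max {A : Finset ℕ} {m : ℕ} (hm : m ∈ A) (hA : ∀ z ∈ A, z ≤ m) :
    ∃ B, (∀ z ∈ B, z < m) ∧ A = insert m B :=
  ⟨A.erase m, fun z hz => (hA z (Finset.mem_of_mem_erase hz)).lt_of_ne (Finset.ne_of_mem_erase hz),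
    (Finset.insert_erase hm).symm⟩

namespace CKRel

theorem slide {m : ℕ} {b : ℕ} {l : List ℕ} (hl : (b :: l).Pairwise (· > ·)) (hm : b < m) :
    CKRel (b :: m :: l) (b :: l ++ [m]) := by
  induction l generalizing b with
  | nil => exact refl _
  | cons c l ih =>
    have hcb : c < b := rel_of_pairwise_cons hl mem_cons_self
    exact (step (CKStep.knuth₁ hcb hm).symm [] l).trans
      ((ih hl.of_cons (hcb.trans hm)).cons b)

theorem swap_max {A : Finset ℕ} {x p m : ℕ} (hp : bumped A x = some p) (hm : ∀ z ∈ A, z < m) :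
    CKRel (x :: m :: colWord A) (m :: x :: colWord A) := by
  obtain ⟨hpA, hxp, -⟩ := bumped_eq_some.1 hp
  obtain ⟨B, ha, hA⟩ := exists_eq_insert_max (A.max'_mem ⟨p, hpA⟩) A.le_max'
  generalize A.max' ⟨p, hpA⟩ = a at ha hA
  subst hA
  have hxa : x < a := by
    rcases Finset.mem_insert.1 hpA with rfl | hpB
    · exact hxp
    · exact hxp.trans (ha p hpB)
  rw [colWord_insert ha]
  exact step (CKStep.knuth₂ hxa (hm a (by simp))) [] (colWord B)

end CKRel

theorem IsReducedWord.succ_eq_of_isGreatest {A : Finset ℕ} {x m : ℕ} (hx : x ∈ A)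
    (hA : ∀ z ∈ A, z ≤ x) (hm : x < m) (h : IsReducedWord (x :: m :: colWord A)) : m = x + 1 := by
  obtain ⟨B, hB, rfl⟩ := exists_eq_insert_max hx hA
  rw [colWord_insert hB] at h
  have := (h.of_append_left (u := [x, m, x]) (v := colWord B)).adjacent_of_palindrome
  omega

theorem IsReducedWord.succ_mem_column {A : Finset ℕ} {x : ℕ} (h : IsReducedWord (x :: colWord A))
    (hx : x ∈ A) : x + 1 ∈ A := by
  induction A using Finset.induction_on_max with
  | empty => simp at hx
  | insert m A hm ih =>
    rw [colWord_insert hm] at h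
    rcases Finset.mem_insert.1 hx with rfl | hxA
    · exact absurd (h.of_append_left (u := [x, x])) not_square
    rcases hp : bumped A x with _ | p
    · rw [h.succ_eq_of_isGreatest hxA (bumped_eq_none.1 hp) (hm x hxA)]
      exact Finset.mem_insert_self _ _
    · exact Finset.mem_insert_of_mem (ih ((CKRel.swap_max hp hm).isReducedWord h).of_cons hxA)

theorem bumped_insert_max {A : Finset ℕ} {x m : ℕ} (hA : bumped A x = none) (hm : x < m) :
    bumped (insert m A) x = some m := by
  have := bumped_eq_none.1 hA
  rw [bumped_eq_some]
  grind

theorem bumped_insert_max_of_some {A : Finset ℕ} {x p m : ℕ} (hm : ∀ z ∈ A, z < m)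
    (hp : bumped A x = some p) : bumped (insert m A) x = some p := by
  rw [bumped_eq_some] at hp ⊢
  grind

theorem colInsert_insert_max {A : Finset ℕ} {x m : ℕ} (hm : ∀ z ∈ A, z < m)
    (hA : bumped A x = none) (hxA : x ∉ A) (hxm : x < m) :
    colInsert (insert m A) x = insert x A := by
  ext z
  rw [mem_colInsert, bumped_insert_max hA hxm]
  grind

theorem colInsert_insert_max_of_some {A : Finset ℕ} {x p m : ℕ} (hm : ∀ z ∈ A, z < m)
    (hp : bumped A x = some p) : colInsert (insert m A) x = insert m (colInsert A x) := by
  have hpm := hm p (bumped_eq_some.1 hp).1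
  have hxm := (bumped_eq_some.1 hp).2.1.trans hpm
  ext z
  simp only [mem_colInsert, bumped_insert_max_of_some hm hp, hp, Finset.mem_insert, Option.some_inj,
    ne_eq]
  grind

theorem ckRel_colInsert_of_isGreatest {A : Finset ℕ} {x : ℕ} (hx : x ∈ A) (hA : ∀ z ∈ A, z ≤ x) :
    CKRel (x :: (x + 1) :: colWord A) ((x + 1) :: colWord A ++ [x + 1]) := by
  obtain ⟨B, hB, rfl⟩ := exists_eq_insert_max hx hA
  have hdec : (x :: colWord B).Pairwise (· > ·) := colWord_insert hB ▸ pairwise_colWord _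
  rw [colWord_insert hB]
  exact (CKRel.step (.braid x) [] (colWord B)).trans ((CKRel.slide hdec x.lt_succ_self).cons _)

theorem ckRel_colInsert {A : Finset ℕ} {x : ℕ} (h : IsReducedWord (x :: colWord A)) :
    CKRel (x :: colWord A) (colWord (colInsert A x) ++ (bumped A x).toList) := by
  induction A using Finset.induction_on_max with
  | empty => simpa [colInsert, bumped_empty, colWord] using .refl _
  | insert m A hm ih =>
    rcases lt_trichotomy x m with hxm | rfl | hxm
    · rw [colWord_insert hm] at h ⊢
      rcases hp : bumped A x with _ | p
      · have hA := bumped_eq_none.1 hp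
        rw [bumped_insert_max hp hxm]
        by_cases hxA : x ∈ A
        · obtain rfl := h.succ_eq_of_isGreatest hxA hA hxm
          rw [colInsert_of_mem (Finset.mem_insert_of_mem hxA), colWord_insert hm]
          exact ckRel_colInsert_of_isGreatest hxA hA
        · have hlt : ∀ z ∈ A, z < x := fun z hz => (hA z hz).lt_of_ne (ne_of_mem_of_not_mem hz hxA)
          rw [colInsert_insert_max hm hp hxA hxm, colWord_insert hlt]
          exact CKRel.slide (colWord_insert hlt ▸ pairwise_colWord (insert x A)) hxm
      · have hm' : ∀ z ∈ colInsert A x, z < m := by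
          intro z hz
          rcases mem_colInsert.1 hz with rfl | hz
          exacts [hxm, hm z hz.1]
        have hswap := CKRel.swap_max hp hm
        rw [bumped_insert_max_of_some hm hp, colInsert_insert_max_of_some hm hp,
          colWord_insert hm', ← hp]
        exact hswap.trans ((ih (hswap.isReducedWord h).of_cons).cons m)
    · rw [colWord_insert hm] at h
      exact absurd (h.of_append_left (u := [x, x])) IsReducedWord.not_square
    · have hlt : ∀ z ∈ insert m A, z < x := by grind
      have hnone : bumped (insert m A) x = none := bumped_eq_none.2 fun z hz => (hlt z hz).le
      have hcol : colInsert (insert m A) x = insert x (insert m A) := by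
        ext z
        simp [mem_colInsert, hnone]
      rw [hnone, hcol, colWord_insert hlt]
      simpa using .refl _

theorem ckRel_colInsertWord {w : List ℕ} {A : Finset ℕ} (h : IsReducedWord (w ++ colWord A)) :
    CKRel (w ++ colWord A) (colWord (colInsertWord w A) ++ bumpWord w A) := by
  induction w with
  | nil => simpa [bumpWord, colInsertWord] using .refl _
  | cons x w ih =>
    have hw := (ih h.of_cons).cons x
    have hx := IsReducedWord.of_append_left (u := x :: colWord (colInsertWord w A))
      (hw.isReducedWord h)
    simpa [bumpWord, colInsertWord_cons] using
      hw.trans ((ckRel_colInsert hx).append_right (bumpWord w A))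

theorem ckRel_insertLetter {x : ℕ} {T : List (Finset ℕ)} (h : IsReducedWord (x :: columnWord T)) :
    CKRel (x :: columnWord T) (columnWord (insertLetter x T)) := by
  induction T generalizing x with
  | nil => simpa [columnWord, insertLetter, colWord] using .refl _
  | cons A T ih =>
    rw [columnWord_cons] at h ⊢
    have hcol := (ckRel_colInsert (h.of_append_left (u := x :: colWord A))).append_right
      (columnWord T)
    refine hcol.trans ?_
    have hred := hcol.isReducedWord h
    rw [insertLetter, columnWord_cons]
    rcases hp : bumped A x with _ | p
    · simpa using .refl _
    · rw [hp, append_assoc] at hred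
      rw [append_assoc]
      exact (ih hred.of_append_right).append_left _

theorem ckRel_insertWord {w : List ℕ} {T : List (Finset ℕ)}
    (h : IsReducedWord (w ++ columnWord T)) :
    CKRel (w ++ columnWord T) (columnWord (insertWord w T)) := by
  induction w with
  | nil => exact .refl _
  | cons x w ih =>
    have hw := (ih h.of_cons).cons x
    exact hw.trans (ckRel_insertLetter (hw.isReducedWord h))

theorem ckRel_columnTableau {w : List ℕ} (h : IsReducedWord w) :
    CKRel w (columnWord (columnTableau w)) := by
  simpa [columnWord, columnTableau] using
    ckRel_insertWord (w := w) (T := []) (by simpa [columnWord] using h)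

/-! ### Coxeter–Knuth invariance of column insertion -/

theorem bumped_congr {A B : Finset ℕ} {x y : ℕ} (h : ∀ t, t ∈ A ∧ x < t ↔ t ∈ B ∧ y < t) :
    bumped A x = bumped B y := by
  simp only [bumped, h]

section Commute

variable {A : Finset ℕ} {x p z : ℕ}

theorem bumped_colInsert_of_bumped_lt (hp : bumped A x = some p) (hz : p < z) :
    bumped (colInsert A x) z = bumped A z := by
  rw [bumped_eq_some] at hp
  refine bumped_congr fun t => ?_
  rw [mem_colInsert, ne_eq, bumped_eq_some]
  grind

theorem bumped_colInsert_of_lt (hp : bumped A x = some p) (hz : p < z) :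
    bumped (colInsert A z) x = some p := by
  rw [← hp]
  rw [bumped_eq_some] at hp
  rw [bumped_eq_some.2 hp, bumped_eq_some]
  simp only [mem_colInsert, ne_eq, bumped_eq_some]
  grind

theorem colInsert_comm (hp : bumped A x = some p) (hz : p < z) :
    colInsert (colInsert A z) x = colInsert (colInsert A x) z := by
  have hxz : x < z := (bumped_eq_some.1 hp).2.1.trans hz
  ext t
  simp only [mem_colInsert, bumped_colInsert_of_bumped_lt hp hz, bumped_colInsert_of_lt hp hz, hp]
  have hpt : some p = some t → z ≠ t := by grind
  have hpz : some p ≠ some z := by grind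
  have hzx : bumped A z ≠ some x := by grind [bumped_eq_some]
  grind

end Commute

section Gap

variable {A : Finset ℕ} {x z : ℕ}

theorem bumped_eq_of_gap (hA : ∀ t ∈ A, x ≤ t → z < t) (hxz : x < z) :
    bumped A z = bumped A x :=
  bumped_congr fun t => by grind

theorem bumped_colInsert_of_gap (hA : ∀ t ∈ A, x ≤ t → z < t) (hxz : x < z) :
    bumped (colInsert A z) x = some z := by
  simp only [bumped_eq_some, mem_colInsert]
  grind

theorem colInsert_colInsert_of_gap (hA : ∀ t ∈ A, x ≤ t → z < t) (hxz : x < z) :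
    colInsert (colInsert A z) x = colInsert A x := by
  ext t
  rw [mem_colInsert, bumped_colInsert_of_gap hA hxz, mem_colInsert, mem_colInsert, mem_colInsert,
    bumped_eq_of_gap hA hxz]
  grind

theorem ckStep_bumps_of_gap (hA : ∀ t ∈ A, x ≤ t → z < t) (hxz : x < z) :
    CKStep (z :: ((bumped (colInsert A x) z).toList ++ (bumped A x).toList))
      ((bumped (colInsert A x) z).toList ++ z :: (bumped A x).toList) := by
  rcases ho : bumped (colInsert A x) z with _ | o
  · exact .refl _
  rcases hp : bumped A x with _ | p
  · rw [bumped_eq_none] at hp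
    simp only [bumped_eq_some, mem_colInsert] at ho
    grind
  · have hpo : p < o := by
      rw [bumped_eq_some, mem_colInsert] at ho
      have hop : o ≠ p := by grind [bumped_eq_some]
      grind [bumped_eq_some]
    exact .knuth₂ (by grind [bumped_eq_some]) hpo

end Gap

theorem IsReducedWord.succ_mem_colInsertWord {x : ℕ} {w : List ℕ} {A : Finset ℕ}
    (h : IsReducedWord (x :: w ++ colWord A)) (hx : x ∈ colInsertWord w A) :
    x + 1 ∈ colInsertWord w A := by
  have hw : CKRel (x :: w ++ colWord A) (x :: colWord (colInsertWord w A) ++ bumpWord w A) :=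
    (ckRel_colInsertWord h.of_cons).cons x
  exact (hw.isReducedWord h).of_append_left.succ_mem_column hx

/-- Inserting both words into the column `A` yields the same column, and bumps locally
Coxeter–Knuth related words. -/
def CKCompatible (A : Finset ℕ) (w w' : List ℕ) : Prop :=
  colInsertWord w A = colInsertWord w' A ∧ CKStep (bumpWord w A) (bumpWord w' A)

namespace CKCompatible

variable {A : Finset ℕ} {x y z : ℕ}

theorem of_eq {a b c a' b' c' : ℕ}
    (hcol : colInsert (colInsert (colInsert A c) b) a =
      colInsert (colInsert (colInsert A c') b') a')
    (hbump : CKStep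
      ((bumped (colInsert (colInsert A c) b) a).toList ++ ((bumped (colInsert A c) b).toList ++
        (bumped A c).toList))
      ((bumped (colInsert (colInsert A c') b') a').toList ++ ((bumped (colInsert A c') b').toList ++
        (bumped A c').toList))) :
    CKCompatible A [a, b, c] [a', b', c'] :=
  ⟨hcol, by simpa [bumpWord, colInsertWord] using hbump⟩

theorem knuth₁_of_bumped_lt {p : ℕ} (hxy : x < y) (hyz : y < z) (hp : bumped A x = some p)
    (hpz : p < z) (hx : x ∈ A → x + 1 ∈ A) : CKCompatible A [y, x, z] [y, z, x] := by
  refine .of_eq (by rw [colInsert_comm hp hpz]) ?_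
  rw [bumped_colInsert_of_lt hp hpz, colInsert_comm hp hpz, bumped_colInsert_of_bumped_lt hp hpz,
    hp]
  rcases hq : bumped A z with _ | q
  · exact .refl _
  obtain ⟨o, ho⟩ : ∃ o, bumped (colInsert (colInsert A x) z) y = some o := by
    rw [← Option.ne_none_iff_exists', ne_eq, bumped_eq_none]
    exact fun h => absurd (h z (mem_colInsert_self _ _)) hyz.not_ge
  rw [ho]
  rw [bumped_eq_some] at ho hp hq
  have hpx : p ∈ A → p ∈ colInsert A x → x ∈ A := by grind [mem_colInsert, bumped_eq_some]
  have hoz : o ≤ z := ho.2.2 z (mem_colInsert_self _ _) hyz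
  have hoA : o ∈ A ∨ o = z := by grind [mem_colInsert]
  have hpo : p < o := by grind [mem_colInsert]
  exact .knuth₁ hpo (hoz.trans_lt hq.2.1)

theorem knuth₁_of_bumped_eq (hxy : x < y) (hyz : y < z) (hp : bumped A x = some z)
    (hx : x ∈ A → x + 1 ∈ A) (hz : z ∈ A → z + 1 ∈ A) :
    CKCompatible A [y, x, z] [y, z, x] := by
  have hp' := bumped_eq_some.1 hp
  have hq : bumped A z = some (z + 1) := bumped_eq_some.2 ⟨hz hp'.1, by grind⟩
  have hgap : ∀ t ∈ colInsert A x, y ≤ t → z < t := by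
    simp only [mem_colInsert, hp]
    grind
  have hq' : bumped (colInsert A x) z = some (z + 1) := by
    rw [← hq]
    exact bumped_congr fun t => by rw [mem_colInsert, hp]; grind
  refine .of_eq ?_ ?_
  · rw [colInsert_of_mem hp'.1, colInsert_colInsert_of_gap hgap hyz]
  · rw [colInsert_of_mem hp'.1, bumped_colInsert_of_gap hgap hyz, hp, hq,
      ← bumped_eq_of_gap hgap hyz, hq']
    exact (CKStep.braid z).symm

theorem knuth₁_of_gap (hxy : x < y) (hyz : y < z) (hA : ∀ t ∈ A, x ≤ t → z < t) :
    CKCompatible A [y, x, z] [y, z, x] := by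
  have hxz := hxy.trans hyz
  have hgap : ∀ t ∈ colInsert A x, y ≤ t → z < t := by
    grind [mem_colInsert]
  refine .of_eq ?_ ?_
  · rw [colInsert_colInsert_of_gap hA hxz, colInsert_colInsert_of_gap hgap hyz]
  · rw [colInsert_colInsert_of_gap hA hxz, bumped_colInsert_of_gap hA hxz,
      bumped_colInsert_of_gap hgap hyz, bumped_eq_of_gap hA hxz, ← bumped_eq_of_gap hgap hyz]
    exact (ckStep_bumps_of_gap hA hxz).symm

theorem knuth₁ (hxy : x < y) (hyz : y < z) (h : IsReducedWord ([y, x, z] ++ colWord A))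
    (h' : IsReducedWord ([y, z, x] ++ colWord A)) : CKCompatible A [y, x, z] [y, z, x] := by
  have hx : x ∈ A → x + 1 ∈ A :=
    IsReducedWord.succ_mem_colInsertWord (w := []) h'.of_cons.of_cons
  have hz : z ∈ A → z + 1 ∈ A := IsReducedWord.succ_mem_colInsertWord (w := []) h.of_cons.of_cons
  by_cases hA : ∀ t ∈ A, x ≤ t → z < t
  · exact knuth₁_of_gap hxy hyz hA
  rcases hp : bumped A x with _ | p
  · rw [bumped_eq_none] at hp
    grind
  rcases lt_or_eq_of_le (show p ≤ z by grind [bumped_eq_some]) with hpz | rfl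
  · exact knuth₁_of_bumped_lt hxy hyz hp hpz hx
  · exact knuth₁_of_bumped_eq hxy hyz hp hx hz

theorem knuth₂ (hxy : x < y) (hyz : y < z) (h : IsReducedWord ([x, z, y] ++ colWord A)) :
    CKCompatible A [x, z, y] [z, x, y] := by
  have hy : y ∈ A → y + 1 ∈ A := IsReducedWord.succ_mem_colInsertWord (w := []) h.of_cons.of_cons
  obtain ⟨p, hp⟩ : ∃ p, bumped (colInsert A y) x = some p := by
    rw [← Option.ne_none_iff_exists', ne_eq, bumped_eq_none]
    exact fun h => absurd (h y (mem_colInsert_self _ _)) hxy.not_ge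
  have hpy : p ≤ y := (bumped_eq_some.1 hp).2.2 y (mem_colInsert_self _ _) hxy
  have hpz := hpy.trans_lt hyz
  refine .of_eq (by rw [colInsert_comm hp hpz]) ?_
  rw [bumped_colInsert_of_lt hp hpz, bumped_colInsert_of_bumped_lt hp hpz, hp]
  rcases hq : bumped (colInsert A y) z with _ | q
  · exact .refl _
  rcases ho : bumped A y with _ | o
  · rw [bumped_eq_none] at ho
    grind [bumped_eq_some, mem_colInsert]
  · have hoq : o < q := by grind [bumped_eq_some, mem_colInsert]
    exact .knuth₂ (hpy.trans_lt (bumped_eq_some.1 ho).2.1) hoq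

theorem braid (h : IsReducedWord ([x, x + 1, x] ++ colWord A))
    (h' : IsReducedWord ([x + 1, x, x + 1] ++ colWord A)) :
    CKCompatible A [x, x + 1, x] [x + 1, x, x + 1] := by
  have hx : x ∈ A → x + 1 ∈ A := IsReducedWord.succ_mem_colInsertWord (w := []) h.of_cons.of_cons
  have hz : x + 1 ∈ A → x + 1 + 1 ∈ A :=
    IsReducedWord.succ_mem_colInsertWord (w := []) h'.of_cons.of_cons
  by_cases hzA : x + 1 ∈ A
  · have hp : bumped A x = some (x + 1) := bumped_eq_some.2 ⟨hzA, by grind⟩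
    have hq : bumped A (x + 1) = some (x + 1 + 1) := bumped_eq_some.2 ⟨hz hzA, by grind⟩
    have hq' : bumped (colInsert A x) (x + 1) = some (x + 1 + 1) := by
      rw [← hq]
      exact bumped_congr fun t => by rw [mem_colInsert, hp]; grind
    have hx' : x ∈ colInsert (colInsert A x) (x + 1) := by
      rw [mem_colInsert, hq']
      exact .inr ⟨mem_colInsert_self _ _, .inr (by grind)⟩
    have hp' : bumped (colInsert (colInsert A x) (x + 1)) x = some (x + 1) :=
      bumped_eq_some.2 ⟨mem_colInsert_self _ _, by grind⟩
    refine .of_eq (by rw [colInsert_of_mem hzA, colInsert_of_mem hx']) ?_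
    rw [colInsert_of_mem hzA, hp', hp, hq, hq']
    exact .braid (x + 1)
  · have hgap : ∀ t ∈ A, x ≤ t → x + 1 < t := by grind
    have hx' : x ∈ colInsert (colInsert A x) (x + 1) := by
      rw [mem_colInsert, ne_eq, bumped_eq_some]
      exact .inr ⟨mem_colInsert_self _ _, by grind⟩
    have hp' : bumped (colInsert (colInsert A x) (x + 1)) x = some (x + 1) :=
      bumped_eq_some.2 ⟨mem_colInsert_self _ _, by grind⟩
    have hlt := x.lt_succ_self
    refine .of_eq ?_ ?_
    · rw [colInsert_of_mem hx', colInsert_colInsert_of_gap hgap hlt]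
    · rw [hp', colInsert_colInsert_of_gap hgap hlt, bumped_colInsert_of_gap hgap hlt,
        bumped_eq_of_gap hgap hlt]
      exact ckStep_bumps_of_gap hgap hlt

end CKCompatible

theorem CKStep.ckCompatible {A : Finset ℕ} {w w' : List ℕ} (h : CKStep w w')
    (hr : IsReducedWord (w ++ colWord A)) : CKCompatible A w w' := by
  have hr' := ((CKRel.step h [] (colWord A))).isReducedWord hr
  induction h with
  | refl w => exact ⟨rfl, .refl _⟩
  | symm _ ih => exact ⟨(ih hr' hr).1.symm, (ih hr' hr).2.symm⟩
  | knuth₁ hxy hyz => exact .knuth₁ hxy hyz hr hr'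
  | knuth₂ hxy hyz => exact .knuth₂ hxy hyz hr
  | braid x => exact .braid hr hr'

theorem length_bumpWord_empty_lt {x : ℕ} {w : List ℕ} (hr : IsReducedWord (x :: w)) :
    (bumpWord (x :: w) ∅).length < (x :: w).length := by
  have hlen := (ckRel_colInsertWord (w := x :: w) (A := ∅)
    (by simpa [colWord_empty] using hr)).length_eq
  have hpos := length_pos_of_mem (mem_colWord.2 (mem_colInsert_self (colInsertWord w ∅) x))
  simp only [colWord_empty, append_nil, length_append, colInsertWord_cons] at hlen
  omega

theorem CKStep.insertWord_nil_eq {w w' : List ℕ} (h : CKStep w w') (hr : IsReducedWord w) :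
    insertWord w [] = insertWord w' [] := by
  rcases h.eq_or_length_eq with rfl | ⟨hw, hw'⟩
  · rfl
  obtain ⟨x, v, rfl⟩ := exists_cons_of_length_eq_add_one hw
  obtain ⟨hcol, hbump⟩ := h.ckCompatible (A := ∅) (by simpa [colWord_empty] using hr)
  have hlt := length_bumpWord_empty_lt hr
  have heq : bumpWord (x :: v) ∅ = bumpWord w' ∅ :=
    hbump.eq_or_length_eq.resolve_right (by omega)
  rw [insertWord_nil (cons_ne_nil _ _), insertWord_nil (ne_nil_of_length_eq_add_one hw'),
    insertWord_column, insertWord_column, hcol, heq]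

theorem CKStep.insertWord_eq {w w' : List ℕ} {T : List (Finset ℕ)} (h : CKStep w w')
    (hr : IsReducedWord (w ++ columnWord T)) : insertWord w T = insertWord w' T := by
  induction T generalizing w w' with
  | nil => exact h.insertWord_nil_eq hr.of_append_left
  | cons A T ih =>
    rw [columnWord_cons, ← append_assoc] at hr
    obtain ⟨hcol, hbump⟩ := h.ckCompatible hr.of_append_left
    have hA := (ckRel_colInsertWord hr.of_append_left).append_right (columnWord T)
    rw [append_assoc (colWord _)] at hA
    rw [insertWord_column, insertWord_column, hcol, ih hbump (hA.isReducedWord hr).of_append_right]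

theorem CKRel.columnTableau_eq {w w' : List ℕ} (h : CKRel w w') (hr : IsReducedWord w) :
    columnTableau w = columnTableau w' := by
  induction h with
  | refl w => rfl
  | symm h ih => exact (ih (h.symm.isReducedWord hr)).symm
  | trans h _ ih₁ ih₂ => exact (ih₁ hr).trans (ih₂ (h.isReducedWord hr))
  | @step a b h u v =>
    have hav : IsReducedWord (a ++ v) := IsReducedWord.of_append_right (u := u) (by simpa using hr)
    have hv := (ckRel_columnTableau hav.of_append_right).append_left a
    simp only [append_assoc, columnTableau_append]
    rw [h.insertWord_eq (hv.isReducedWord hav)]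

/-! ### Counting entries of a column -/

/-- The number of entries of the column `A` in the interval `(k, t]`. -/
def countIoc (A : Finset ℕ) (k t : ℕ) : ℕ := (A ∩ Finset.Ioc k t).card

theorem countIoc_congr {A B : Finset ℕ} {k l s t : ℕ}
    (h : ∀ a, a ∈ A ∧ k < a ∧ a ≤ t ↔ a ∈ B ∧ l < a ∧ a ≤ s) : countIoc A k t = countIoc B l s := by
  unfold countIoc
  congr 1
  ext a
  simpa using h a

theorem countIoc_mono {A B : Finset ℕ} {k l s t : ℕ}
    (h : ∀ a, a ∈ A → k < a → a ≤ t → a ∈ B ∧ l < a ∧ a ≤ s) : countIoc A k t ≤ countIoc B l s :=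
  Finset.card_le_card fun a ha => by
    simp only [Finset.mem_inter, Finset.mem_Ioc] at ha ⊢
    exact h a ha.1 ha.2.1 ha.2.2

theorem countIoc_add (A : Finset ℕ) {k s t : ℕ} (hks : k ≤ s) (hst : s ≤ t) :
    countIoc A k s + countIoc A s t = countIoc A k t := by
  unfold countIoc
  rw [← Finset.card_union_of_disjoint, ← Finset.inter_union_distrib_left,
    Finset.Ioc_union_Ioc_eq_Ioc hks hst]
  exact (Finset.Ioc_disjoint_Ioc_of_le le_rfl).mono Finset.inter_subset_right
    Finset.inter_subset_right

theorem countIoc_le_sub (A : Finset ℕ) (k t : ℕ) : countIoc A k t ≤ t - k :=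
  (Finset.card_le_card Finset.inter_subset_right).trans (Nat.card_Ioc k t).le

theorem countIoc_eq_zero {A : Finset ℕ} {k t : ℕ} (h : ∀ a ∈ A, k < a → t < a) :
    countIoc A k t = 0 := by
  rw [countIoc, Finset.card_eq_zero]
  ext a
  simp only [Finset.mem_inter, Finset.mem_Ioc, Finset.notMem_empty, iff_false]
  intro ha
  exact (h a ha.1 ha.2.1).not_ge ha.2.2

theorem countIoc_self (A : Finset ℕ) (k : ℕ) : countIoc A k k = 0 :=
  countIoc_eq_zero fun _ _ h => h

theorem countIoc_eq_one {A : Finset ℕ} {x k t : ℕ} (hx : x ∈ A) (hk : k < x) (ht : x ≤ t)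
    (h : ∀ a ∈ A, k < a → a ≤ t → a = x) : countIoc A k t = 1 := by
  rw [countIoc, Finset.card_eq_one]
  exact ⟨x, by ext a; grind⟩

theorem countIoc_pos {A : Finset ℕ} {x k t : ℕ} (hx : x ∈ A) (hk : k < x) (ht : x ≤ t) :
    1 ≤ countIoc A k t :=
  Finset.card_pos.2 ⟨x, by simp [hx, hk, ht]⟩

section ColInsert

variable {A : Finset ℕ} {x y k t : ℕ}

theorem countIoc_of_gap (hy : bumped A x = some y) (hk : x ≤ k) (ht : t < y) :
    countIoc A k t = 0 := by
  rw [bumped_eq_some] at hy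
  exact countIoc_eq_zero fun a ha hka => ht.trans_le (hy.2.2 a ha (by omega))

theorem countIoc_colInsert_of_lt (ht : t < x) :
    countIoc (colInsert A x) k t = countIoc A k t := by
  refine countIoc_congr fun a => ?_
  rw [mem_colInsert, ne_eq, bumped_eq_some]
  grind

theorem countIoc_colInsert_of_bumped_le (hy : bumped A x = some y) (hk : y ≤ k) :
    countIoc (colInsert A x) k t = countIoc A k t := by
  refine countIoc_congr fun a => ?_
  rw [mem_colInsert, hy]
  grind [bumped_eq_some]

theorem countIoc_colInsert_of_gap (hy : bumped A x = some y) (hk : x ≤ k) (ht : t < y) :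
    countIoc (colInsert A x) k t = 0 := by
  rw [bumped_eq_some] at hy
  refine countIoc_eq_zero fun a ha => ?_
  grind [mem_colInsert]

theorem countIoc_colInsert_between (hy : bumped A x = some y) (hk : k < x) (hxt : x ≤ t)
    (ht : t < y) : countIoc (colInsert A x) k t = countIoc A k (x - 1) + 1 := by
  rw [← countIoc_add _ (show k ≤ x - 1 by omega) (show x - 1 ≤ t by omega),
    countIoc_colInsert_of_lt (by omega),
    countIoc_eq_one (mem_colInsert_self A x) (by omega) hxt]
  rw [bumped_eq_some] at hy
  intro a ha hxa hat
  grind [mem_colInsert]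

theorem countIoc_colInsert_of_lt_of_le (hy : bumped A x = some y) (hk : k < x) (ht : y ≤ t) :
    countIoc (colInsert A x) k t = countIoc A k t := by
  by_cases hx : x ∈ A
  · rw [colInsert_of_mem hx]
  have hy' := bumped_eq_some.1 hy
  rw [← countIoc_add _ (show k ≤ x - 1 by omega) (show x - 1 ≤ t by omega),
    ← countIoc_add A (show k ≤ x - 1 by omega) (show x - 1 ≤ t by omega),
    ← countIoc_add _ (show x - 1 ≤ y by omega) ht, ← countIoc_add A (show x - 1 ≤ y by omega) ht,
    countIoc_colInsert_of_lt (by omega), countIoc_colInsert_of_bumped_le hy le_rfl,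
    countIoc_eq_one hy'.1 (by omega) le_rfl (by grind),
    countIoc_eq_one (mem_colInsert_self A x) (by omega) (by omega)]
  grind [mem_colInsert]

theorem countIoc_colInsert_of_le_of_lt (hx : x ∉ A) (hy : bumped A x = some y) (hk : x ≤ k)
    (hky : k < y) (ht : y ≤ t) : countIoc A k t = countIoc (colInsert A x) k t + 1 := by
  have hy' := bumped_eq_some.1 hy
  rw [← countIoc_add A hky.le ht, ← countIoc_add _ hky.le ht,
    countIoc_colInsert_of_bumped_le hy le_rfl, countIoc_eq_one hy'.1 hky le_rfl (by grind),
    countIoc_eq_zero (A := colInsert A x)]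
  · omega
  · grind [mem_colInsert]

end ColInsert

/-! ### The rank of one column over the next -/

/-- A min-cut formula: if `f k` counts the entries above `k` of a column `C`, then
`columnRank A f k` is the maximal number of pairs `a < c` that can be formed from distinct
`a ∈ A` above `k` and distinct `c ∈ C`. -/
noncomputable def columnRank (A : Finset ℕ) (f : ℕ → ℕ) (k : ℕ) : ℕ :=
  ⨅ d : ℕ, (countIoc A k (k + d) + f (k + d + 1))

section ColumnRank

variable {A : Finset ℕ} {f f' : ℕ → ℕ} {k t : ℕ}

theorem columnRank_le (h : k ≤ t) : columnRank A f k ≤ countIoc A k t + f (t + 1) := by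
  obtain ⟨d, rfl⟩ := Nat.exists_eq_add_of_le h
  exact ciInf_le' (fun d : ℕ => countIoc A k (k + d) + f (k + d + 1)) d

theorem exists_columnRank_eq (A : Finset ℕ) (f : ℕ → ℕ) (k : ℕ) :
    ∃ t, k ≤ t ∧ columnRank A f k = countIoc A k t + f (t + 1) := by
  obtain ⟨d, hd⟩ := ciInf_mem fun d : ℕ => countIoc A k (k + d) + f (k + d + 1)
  exact ⟨k + d, by omega, hd.symm⟩

theorem columnRank_antitone (hf : Antitone f) : Antitone (columnRank A f) := by
  refine antitone_nat_of_succ_le fun k => ?_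
  obtain ⟨t, hkt, ht⟩ := exists_columnRank_eq A f k
  have hle := columnRank_le (A := A) (f := f) (show k + 1 ≤ t + 1 by omega)
  have hf' := hf (show t + 1 ≤ t + 1 + 1 by omega)
  rcases hkt.eq_or_lt with rfl | hkt
  · rw [countIoc_self] at hle
    omega
  · have := columnRank_le (A := A) (f := f) (show k + 1 ≤ t by omega)
    have := countIoc_add A (show k ≤ k + 1 by omega) (show k + 1 ≤ t by omega)
    omega

theorem columnRank_le_succ : columnRank A f k ≤ columnRank A f (k + 1) + 1 := by
  obtain ⟨t, hkt, ht⟩ := exists_columnRank_eq A f (k + 1)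
  have hadd := countIoc_add A (show k ≤ k + 1 by omega) hkt
  have hone := countIoc_le_sub A k (k + 1)
  have := columnRank_le (A := A) (f := f) (show k ≤ t by omega)
  omega

theorem columnRank_mono {B : Finset ℕ} (hAB : A ⊆ B) (h : ∀ k, f k ≤ f' k) :
    columnRank A f k ≤ columnRank B f' k := by
  obtain ⟨t, hkt, ht⟩ := exists_columnRank_eq B f' k
  rw [ht]
  exact (columnRank_le hkt).trans
    (add_le_add (countIoc_mono fun a ha hka hat => ⟨hAB ha, hka, hat⟩) (h _))

/-- Counting a column is the same as ranking it over a full column of large height, so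
statements about `columnRank` specialize to counts. -/
theorem columnRank_sub {M : ℕ} (hM : ∀ a ∈ A, a < M) :
    columnRank A (M - ·) k = (A.filter (k < ·)).card := by
  have hcount : countIoc A k (k + M) = (A.filter (k < ·)).card := by
    unfold countIoc
    congr 1
    ext a
    grind
  refine le_antisymm ?_ ?_
  · rw [← hcount]
    exact (columnRank_le (k.le_add_right M)).trans (by omega)
  · obtain ⟨t, hkt, ht⟩ := exists_columnRank_eq A (M - ·) k
    rw [ht, ← hcount]
    rcases le_total (k + M) t with hMt | hMt
    · rw [← countIoc_add A (by omega) hMt]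
      omega
    rw [← countIoc_add A hkt hMt]
    have hsub : countIoc A t (k + M) ≤ countIoc A t (M - 1) :=
      countIoc_mono fun a ha hta _ => ⟨ha, hta, Nat.le_sub_one_of_lt (hM a ha)⟩
    have := countIoc_le_sub A t (M - 1)
    omega

end ColumnRank

/-! ### Inserting a letter changes the rank of a column -/

section Insertion

variable {A : Finset ℕ} {f f' : ℕ → ℕ} {x y k t : ℕ}

/-- The comparison between the ranks `f` of a tableau and the ranks `f'` of the tableau obtained
from it by inserting `x`: the rank over `k < x` cannot drop, and the rank over `k ≥ x` drops by at
most one, and only down to a value no smaller than `f' x`. -/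
structure RankLE (x : ℕ) (f f' : ℕ → ℕ) : Prop where
  of_lt : ∀ k < x, f k ≤ f' k
  of_le : ∀ k, x ≤ k → f k ≤ f' k ∨ f k ≤ f' k + 1 ∧ f' x ≤ f' k

theorem RankLE.refl (x : ℕ) (f : ℕ → ℕ) : RankLE x f f :=
  ⟨fun _ _ => le_rfl, fun _ _ => .inl le_rfl⟩

theorem RankLE.le_succ (h : RankLE x f f') (k : ℕ) : f k ≤ f' k + 1 := by
  have := h.of_lt k
  have := h.of_le k
  omega

theorem eq_succ_of_bumped (hA : x ∈ A → x + 1 ∈ A) (hy : bumped A x = some y) (hx : x ∈ A) :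
    y = x + 1 := by
  have := bumped_eq_some.1 hy
  have := this.2.2 _ (hA hx) (by omega)
  omega

theorem countIoc_le_pred_add_one (hy : bumped A x = some y) (hk : k < x) (hxt : x ≤ t)
    (ht : t < y) : countIoc A k t ≤ countIoc A k (x - 1) + 1 := by
  rw [← countIoc_add A hk.le hxt, countIoc_of_gap hy le_rfl ht,
    ← countIoc_add A (show k ≤ x - 1 by omega) (show x - 1 ≤ x by omega)]
  have := countIoc_le_sub A (x - 1) x
  omega

theorem countIoc_eq_pred_of_notMem (hy : bumped A x = some y) (hx : x ∉ A) (hk : k < x)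
    (hxt : x ≤ t) (ht : t < y) : countIoc A k t = countIoc A k (x - 1) := by
  rw [bumped_eq_some] at hy
  refine countIoc_congr fun a => ?_
  grind

theorem countIoc_pred_bumped_lt (hy : bumped A x = some y) (hk : k < y) (ht : y ≤ t) :
    countIoc A k (y - 1) + 1 ≤ countIoc A k t := by
  rw [← countIoc_add A (show k ≤ y - 1 by omega) (show y - 1 ≤ t by omega)]
  have := countIoc_pos (bumped_eq_some.1 hy).1 (show y - 1 < y by omega) ht
  omega

theorem columnRank_le_colInsert_of_lt (hA : x ∈ A → x + 1 ∈ A) (hy : bumped A x = some y)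
    (hf : ∀ k, f' k ≤ f' (k + 1) + 1) (h : RankLE y f f') (hk : k < x) :
    columnRank A f k ≤ columnRank (colInsert A x) f' k := by
  have hxy := (bumped_eq_some.1 hy).2.1
  obtain ⟨t, hkt, ht⟩ := exists_columnRank_eq (colInsert A x) f' k
  rw [ht]
  have hle := columnRank_le (A := A) (f := f) hkt
  rcases lt_or_ge t x with htx | hxt
  · rw [countIoc_colInsert_of_lt htx]
    have := h.of_lt (t + 1) (by omega)
    omega
  rcases lt_or_ge t y with hty | hyt
  · rw [countIoc_colInsert_between hy hk hxt hty]
    by_cases hx : x ∈ A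
    · obtain rfl : t = x := by have := eq_succ_of_bumped hA hy hx; omega
      have := columnRank_le (A := A) (f := f) (show k ≤ t - 1 by omega)
      have := h.of_lt t hty
      have := hf t
      rw [Nat.sub_add_cancel (by omega)] at *
      omega
    · have := countIoc_eq_pred_of_notMem hy hx hk hxt hty
      have := h.le_succ (t + 1)
      omega
  · rw [countIoc_colInsert_of_lt_of_le hy hk hyt]
    rcases h.of_le (t + 1) (by omega) with hft | ⟨-, hft⟩
    · omega
    · have := columnRank_le (A := A) (f := f) (show k ≤ y - 1 by omega)
      have := countIoc_pred_bumped_lt hy (hk.trans hxy) hyt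
      have := h.le_succ y
      rw [Nat.sub_add_cancel (by omega)] at *
      omega

theorem columnRank_le_colInsert_of_le (hA : x ∈ A → x + 1 ∈ A) (hy : bumped A x = some y)
    (h : RankLE y f f') (hk : x ≤ k) :
    columnRank A f k ≤ columnRank (colInsert A x) f' k ∨
      columnRank A f k ≤ columnRank (colInsert A x) f' k + 1 ∧
        columnRank (colInsert A x) f' x ≤ columnRank (colInsert A x) f' k := by
  have hxy := (bumped_eq_some.1 hy).2.1
  obtain ⟨t, hkt, ht⟩ := exists_columnRank_eq (colInsert A x) f' k
  have hle := columnRank_le (A := A) (f := f) hkt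
  have hlex : columnRank (colInsert A x) f' x ≤ f' y := by
    have := columnRank_le (A := colInsert A x) (f := f') (show x ≤ y - 1 by omega)
    rwa [countIoc_colInsert_of_gap hy le_rfl (by omega), zero_add,
      Nat.sub_add_cancel (by omega)] at this
  have hsucc := h.le_succ (t + 1)
  rcases lt_or_ge t y with hty | hyt
  · rw [countIoc_of_gap hy hk hty] at hle
    rcases Nat.eq_or_lt_of_le hty with rfl | hty
    · have := h.of_le (t + 1) le_rfl
      omega
    · have := h.of_lt (t + 1)
      omega
  have halt := h.of_le (t + 1) (by omega)
  rcases le_or_gt y k with hyk | hky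
  · rw [countIoc_colInsert_of_bumped_le hy hyk] at ht
    omega
  right
  by_cases hx : x ∈ A
  · obtain rfl : k = x := by have := eq_succ_of_bumped hA hy hx; omega
    rw [colInsert_of_mem hx] at ht ⊢
    omega
  have hdrop := countIoc_colInsert_of_le_of_lt hx hy hk hky hyt
  have hgap := countIoc_colInsert_of_gap hy le_rfl hky
  have hadd := countIoc_add (colInsert A x) hk hkt
  have hx' := columnRank_le (A := colInsert A x) (f := f') (hk.trans hkt)
  have hley := columnRank_le (A := A) (f := f) (show k ≤ y - 1 by omega)
  rw [countIoc_of_gap hy hk (by omega), Nat.sub_add_cancel (by omega)] at hley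
  have := h.le_succ y
  omega

theorem RankLE.columnRank (hA : x ∈ A → x + 1 ∈ A) (hy : bumped A x = some y)
    (hf : ∀ k, f' k ≤ f' (k + 1) + 1) (h : RankLE y f f') :
    RankLE x (columnRank A f) (columnRank (colInsert A x) f') :=
  ⟨fun _ => columnRank_le_colInsert_of_lt hA hy hf h,
    fun _ => columnRank_le_colInsert_of_le hA hy h⟩

/-- The comparison between the ranks `f` and `f'` before and after inserting `x`, for the column
in which the shape grows. -/
structure RankGrows (x : ℕ) (f f' : ℕ → ℕ) : Prop where
  eq_zero : f' x = 0
  eq_succ : ∀ k < x, f' k = f k + 1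

theorem countIoc_add_two_le (hA : x ∈ A → x + 1 ∈ A) (hy : bumped A x = some y) (hk : k < x)
    (ht : y ≤ t + 1) : countIoc A k (y - 2) + 1 ≤ countIoc (colInsert A x) k t := by
  have hxy := (bumped_eq_some.1 hy).2.1
  rcases Nat.eq_or_lt_of_le ht with rfl | ht
  · rw [countIoc_colInsert_between hy hk (by omega) (by omega)]
    rcases Nat.eq_or_lt_of_le (show x ≤ t by omega) with rfl | hxt
    · rfl
    · have hx : x ∉ A := fun hx => by have := eq_succ_of_bumped hA hy hx; omega
      rw [← countIoc_eq_pred_of_notMem hy hx hk (show x ≤ t + 1 - 2 by omega) (by omega)]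
  · rw [countIoc_colInsert_of_lt_of_le hy hk (by omega)]
    have := countIoc_pred_bumped_lt hy (hk.trans hxy) (show y ≤ t by omega)
    have := countIoc_add A (show k ≤ y - 2 by omega) (show y - 2 ≤ y - 1 by omega)
    omega

theorem columnRank_colInsert_le_succ (hy : bumped A x = some y) (h : RankGrows y f f')
    (hk : k < x) : columnRank (colInsert A x) f' k ≤ columnRank A f k + 1 := by
  have hxy := (bumped_eq_some.1 hy).2.1
  obtain ⟨t, hkt, ht⟩ := exists_columnRank_eq A f k
  rw [ht]
  rcases lt_or_ge t x with htx | hxt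
  · have hle := columnRank_le (A := colInsert A x) (f := f') hkt
    rw [countIoc_colInsert_of_lt htx, h.eq_succ _ (by omega)] at hle
    exact hle
  · have hle := columnRank_le (A := colInsert A x) (f := f') (show k ≤ y - 1 by omega)
    rw [countIoc_colInsert_between hy hk (by omega) (by omega), Nat.sub_add_cancel (by omega),
      h.eq_zero] at hle
    have := countIoc_add A (show k ≤ x - 1 by omega) (show x - 1 ≤ t by omega)
    omega

theorem succ_columnRank_le_colInsert (hA : x ∈ A → x + 1 ∈ A) (hy : bumped A x = some y)
    (hf : ∀ k, f' k ≤ f' (k + 1) + 1) (h : RankGrows y f f') (hk : k < x) :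
    columnRank A f k + 1 ≤ columnRank (colInsert A x) f' k := by
  have hxy := (bumped_eq_some.1 hy).2.1
  obtain ⟨t, hkt, ht⟩ := exists_columnRank_eq (colInsert A x) f' k
  rw [ht]
  rcases lt_or_ge (t + 1) y with hty | hyt
  · have hle := columnRank_le (A := A) (f := f) hkt
    rw [h.eq_succ _ hty]
    rcases lt_or_ge t x with htx | hxt
    · rw [countIoc_colInsert_of_lt htx]
      omega
    · rw [countIoc_colInsert_between hy hk hxt (by omega)]
      have := countIoc_le_pred_add_one hy hk hxt (by omega)
      omega
  · have hle := columnRank_le (A := A) (f := f) (show k ≤ y - 2 by omega)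
    have hcount := countIoc_add_two_le hA hy hk hyt
    have hy1 := h.eq_succ (y - 1) (by omega)
    have hlip := hf (y - 1)
    rw [Nat.sub_add_cancel (by omega), h.eq_zero] at hlip
    rw [show y - 2 + 1 = y - 1 by omega] at hle
    omega

theorem RankGrows.columnRank (hA : x ∈ A → x + 1 ∈ A) (hy : bumped A x = some y)
    (hf : ∀ k, f' k ≤ f' (k + 1) + 1) (h : RankGrows y f f') :
    RankGrows x (columnRank A f) (columnRank (colInsert A x) f') where
  eq_zero := by
    have hxy := (bumped_eq_some.1 hy).2.1
    have hle := columnRank_le (A := colInsert A x) (f := f') (show x ≤ y - 1 by omega)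
    rw [countIoc_colInsert_of_gap hy le_rfl (by omega), Nat.sub_add_cancel (by omega),
      h.eq_zero] at hle
    omega
  eq_succ _ hk := (columnRank_colInsert_le_succ hy h hk).antisymm
    (succ_columnRank_le_colInsert hA hy hf h hk)

/-- The comparison between the ranks `f` and `f'` before and after inserting `x`, for the columns
from which the insertion bumps a letter. -/
structure RankShrinks (x : ℕ) (f f' : ℕ → ℕ) : Prop where
  le : ∀ k, f' k ≤ f k
  lt : f' (x + 1) < f x

theorem countIoc_colInsert_le (hy : bumped A x = some y) (h : ¬(k < x ∧ x ≤ t ∧ t < y)) :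
    countIoc (colInsert A x) k t ≤ countIoc A k t := by
  rcases lt_or_ge t x with htx | hxt
  · rw [countIoc_colInsert_of_lt htx]
  rcases lt_or_ge k x with hkx | hxk
  · rw [countIoc_colInsert_of_lt_of_le hy hkx (by omega)]
  · refine countIoc_mono fun a ha hka hat => ⟨?_, hka, hat⟩
    grind [mem_colInsert]

theorem countIoc_colInsert_succ_lt (hA : x ∈ A → x + 1 ∈ A) (hy : bumped A x = some y)
    (ht : y ≤ t) : countIoc (colInsert A x) (x + 1) t < countIoc A x t := by
  have hxy := (bumped_eq_some.1 hy).2.1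
  rcases Nat.eq_or_lt_of_le hxy with rfl | hxy'
  · rw [countIoc_colInsert_of_bumped_le hy le_rfl, ← countIoc_add A hxy.le ht]
    have := countIoc_pos (bumped_eq_some.1 hy).1 hxy le_rfl
    omega
  · have hx : x ∉ A := fun hx => by have := eq_succ_of_bumped hA hy hx; omega
    rw [countIoc_colInsert_of_le_of_lt hx hy le_rfl hxy ht,
      ← countIoc_add (colInsert A x) (show x ≤ x + 1 by omega) (show x + 1 ≤ t by omega)]
    omega

theorem columnRank_colInsert_le (hy : bumped A x = some y) (hf : Antitone f)
    (h : RankShrinks y f f') (k : ℕ) : columnRank (colInsert A x) f' k ≤ columnRank A f k := by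
  have hy' := bumped_eq_some.1 hy
  obtain ⟨t, hkt, ht⟩ := exists_columnRank_eq A f k
  have hle := columnRank_le (A := colInsert A x) (f := f') hkt
  have hft := h.le (t + 1)
  rw [ht]
  by_cases hcase : k < x ∧ x ≤ t ∧ t < y
  · by_cases hx : x ∈ A
    · rw [colInsert_of_mem hx] at hle ⊢
      omega
    obtain ⟨hkx, hxt, hty⟩ := hcase
    have hley := columnRank_le (A := colInsert A x) (f := f') (hkt.trans hty.le)
    have hone : countIoc A t y = 1 :=
      countIoc_eq_one hy'.1 hty le_rfl fun a ha hta hay => hay.antisymm (hy'.2.2 a ha (by omega))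
    rw [countIoc_colInsert_of_lt_of_le hy hkx le_rfl, ← countIoc_add A hkt hty.le, hone] at hley
    have := h.lt
    have := hf (show t + 1 ≤ y by omega)
    omega
  · have := countIoc_colInsert_le hy hcase
    omega

theorem RankShrinks.columnRank (hA : x ∈ A → x + 1 ∈ A) (hy : bumped A x = some y)
    (hf : Antitone f) (h : RankShrinks y f f') :
    RankShrinks x (columnRank A f) (columnRank (colInsert A x) f') where
  le := columnRank_colInsert_le hy hf h
  lt := by
    have hy' := bumped_eq_some.1 hy
    obtain ⟨t, hxt, ht⟩ := exists_columnRank_eq A f x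
    rw [ht]
    rcases lt_or_ge t y with hty | hyt
    · have hle := columnRank_le (A := colInsert A x) (f := f') (show x + 1 ≤ y by omega)
      have hcount := countIoc_colInsert_succ_lt hA hy le_rfl
      rw [countIoc_eq_one hy'.1 hy'.2.1 le_rfl
        fun a ha hxa hay => hay.antisymm (hy'.2.2 a ha hxa)] at hcount
      have := h.lt
      have := hf (show t + 1 ≤ y by omega)
      omega
    · have hle := columnRank_le (A := colInsert A x) (f := f') (show x + 1 ≤ t by omega)
      have := countIoc_colInsert_succ_lt hA hy hyt
      have := h.le (t + 1)
      omega

theorem columnRank_colInsert_le_of_eq_zero (hx : 1 ≤ x)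
    (h0 : columnRank (colInsert A x) f' (x - 1) = 0) (h : f' x = 0 → ∀ k ≤ x, f' k ≤ f k)
    (hk : k < x) : columnRank (colInsert A x) f' k ≤ columnRank A f k := by
  obtain ⟨s, hxs, hs⟩ := exists_columnRank_eq (colInsert A x) f' (x - 1)
  obtain rfl : s = x - 1 := by
    by_contra hne
    have := countIoc_pos (mem_colInsert_self A x) (show x - 1 < x by omega) (show x ≤ s by omega)
    omega
  have hfx : f' x = 0 := by
    rw [Nat.sub_add_cancel hx] at hs
    omega
  obtain ⟨t, hkt, ht⟩ := exists_columnRank_eq A f k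
  rw [ht]
  rcases lt_or_ge t x with htx | hxt
  · have hle := columnRank_le (A := colInsert A x) (f := f') hkt
    rw [countIoc_colInsert_of_lt htx] at hle
    exact hle.trans (by gcongr; exact h hfx _ htx)
  · have hle := columnRank_le (A := colInsert A x) (f := f') (show k ≤ x - 1 by omega)
    rw [countIoc_colInsert_of_lt (by omega), Nat.sub_add_cancel hx, hfx] at hle
    have := countIoc_add A (show k ≤ x - 1 by omega) (show x - 1 ≤ t by omega)
    omega

end Insertion

/-! ### Ranks of a tableau -/

/-- The maximal number of disjoint chains `a₀ < ⋯ < a_j` with `a_i` an entry of the column `i` and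
`k < a₀`, computed by iterated min-cut formulas. For the insertion tableau of a word it controls
how many letters above `k` fit into runs starting in the column `j` of a Yamanouchi word. -/
noncomputable def keyRank : ℕ → List (Finset ℕ) → ℕ → ℕ
  | _, [], _ => 0
  | 0, A :: _, k => (A.filter (k < ·)).card
  | j + 1, A :: T, k => columnRank A (keyRank j T) k

section KeyRank

variable {A : Finset ℕ} {T : List (Finset ℕ)} {j k x : ℕ}

theorem keyRank_nil (j k : ℕ) : keyRank j [] k = 0 := by
  cases j <;> rfl

theorem keyRank_zero_cons {M : ℕ} (hM : ∀ a ∈ A, a < M) :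
    keyRank 0 (A :: T) = columnRank A (M - ·) :=
  funext fun _ => (columnRank_sub hM).symm

theorem exists_forall_lt (A : Finset ℕ) : ∃ M, ∀ a ∈ A, a < M :=
  ⟨A.sup id + 1, fun _ ha => Nat.lt_succ_of_le (A.le_sup (f := id) ha)⟩

theorem keyRank_antitone (j : ℕ) (T : List (Finset ℕ)) : Antitone (keyRank j T) := by
  induction T generalizing j with
  | nil => exact fun _ _ _ => by simp [keyRank_nil]
  | cons A T ih =>
    cases j with
    | zero =>
      exact fun k l hkl => Finset.card_le_card (Finset.monotone_filter_right A
        fun _ _ => hkl.trans_lt)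
    | succ j => exact columnRank_antitone (ih j)

theorem keyRank_le_succ (j : ℕ) (T : List (Finset ℕ)) (k : ℕ) :
    keyRank j T k ≤ keyRank j T (k + 1) + 1 := by
  rcases T with _ | ⟨A, T⟩
  · simp [keyRank_nil]
  · cases j with
    | zero =>
      obtain ⟨M, hM⟩ := exists_forall_lt A
      rw [keyRank_zero_cons hM]
      exact columnRank_le_succ
    | succ j => exact columnRank_le_succ

theorem keyRank_succ_le (j : ℕ) (T : List (Finset ℕ)) (k : ℕ) :
    keyRank (j + 1) T k ≤ keyRank j T k := by
  induction T generalizing j k with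
  | nil => simp [keyRank_nil]
  | cons A T ih =>
    cases j with
    | succ j => exact columnRank_mono subset_rfl (ih j)
    | zero =>
      obtain ⟨M, hM⟩ := exists_forall_lt (T.headD ∅)
      have hzero : keyRank 0 T (k + M + 1) = 0 := by
        rcases T with _ | ⟨B, T⟩
        · rfl
        · rw [keyRank, Finset.card_eq_zero, Finset.filter_eq_empty_iff]
          exact fun b hb => by have := hM b hb; omega
      have hle := columnRank_le (A := A) (f := keyRank 0 T) (k.le_add_right M)
      rw [hzero, add_zero] at hle
      refine hle.trans (Finset.card_le_card fun a ha => ?_)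
      grind

theorem keyRank_antitone_left (T : List (Finset ℕ)) (k : ℕ) : Antitone (keyRank · T k) :=
  antitone_nat_of_succ_le fun j => keyRank_succ_le j T k

theorem keyRank_le_card (j : ℕ) (A : Finset ℕ) (T : List (Finset ℕ)) (k : ℕ) :
    keyRank j (A :: T) k ≤ (A.filter (k < ·)).card :=
  keyRank_antitone_left (A :: T) k j.zero_le

theorem keyRank_eq_zero_of_length_le (h : T.length ≤ j) : keyRank j T k = 0 := by
  induction T generalizing j k with
  | nil => exact keyRank_nil j k
  | cons A T ih =>
    obtain ⟨j, rfl⟩ := Nat.exists_eq_add_of_le' (Nat.one_le_of_lt h)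
    have hle := columnRank_le (A := A) (f := keyRank j T) (le_refl k)
    rw [countIoc_self, ih (Nat.le_of_succ_le_succ h)] at hle
    exact Nat.le_zero.1 hle

theorem keyRank_eq_zero_of_le {m : ℕ} (h : keyRank j T k = 0) (hm : j ≤ m) :
    keyRank m T k = 0 :=
  Nat.eq_zero_of_le_zero (h ▸ keyRank_antitone_left T k hm)

theorem exists_keyRank_pos_succ_eq_zero (h : 0 < keyRank j T k) :
    ∃ n, j ≤ n ∧ 0 < keyRank n T k ∧ keyRank (n + 1) T k = 0 := by
  by_contra! hne
  have hpos : ∀ n, j ≤ n → 0 < keyRank n T k := fun n hn => by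
    induction n, hn using Nat.le_induction with
    | base => exact h
    | succ n hn ih => exact Nat.pos_of_ne_zero (hne n hn ih)
  exact (hpos _ (le_max_left j T.length)).ne' (keyRank_eq_zero_of_length_le (le_max_right _ _))

theorem exists_bumped_of_keyRank_pos (h : 0 < keyRank j (A :: T) k) :
    ∃ y, bumped A k = some y := by
  by_contra hnone
  rw [← Option.isSome_iff_exists, Option.not_isSome_iff_eq_none, bumped_eq_none] at hnone
  have := keyRank_le_card j A T k
  rw [Finset.filter_false_of_mem fun a ha => (hnone a ha).not_gt, Finset.card_empty] at this
  omega

theorem exists_chain_of_keyRank_pos (h : 0 < keyRank j T k) :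
    ∃ a : ℕ → ℕ, bumped (T.getD 0 ∅) k = some (a 0) ∧ (∀ r ≤ j, a r ∈ T.getD r ∅) ∧
      ∀ r < j, a r < a (r + 1) := by
  induction T generalizing j k with
  | nil => simp [keyRank_nil] at h
  | cons A T ih =>
    obtain ⟨y, hy⟩ := exists_bumped_of_keyRank_pos h
    have hy' := bumped_eq_some.1 hy
    cases j with
    | zero => exact ⟨fun _ => y, by simpa using hy, by simpa using hy'.1, by simp⟩
    | succ j =>
      have hpos := columnRank_le (A := A) (f := keyRank j T) (show k ≤ y - 1 by omega)
      rw [countIoc_of_gap hy le_rfl (by omega), Nat.sub_add_cancel (by omega), zero_add] at hpos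
      obtain ⟨a, ha0, hmem, hlt⟩ := ih (h.trans_le hpos)
      refine ⟨fun r => r.casesOn y a, by simpa using hy, ?_, ?_⟩
      · rintro (_ | r) hr
        · simpa using hy'.1
        · simpa using hmem r (by omega)
      · rintro (_ | r) hr
        · exact (bumped_eq_some.1 ha0).2.1
        · exact hlt r (by omega)

end KeyRank

/-! ### Ranks and column insertion -/

section Insertion

variable {A : Finset ℕ} {T : List (Finset ℕ)} {j k x y : ℕ}

theorem insertLetter_of_none (hx : bumped A x = none) :
    insertLetter x (A :: T) = colInsert A x :: T := by
  rw [insertLetter, hx, Option.elim_none]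

theorem insertLetter_of_some (hy : bumped A x = some y) :
    insertLetter x (A :: T) = colInsert A x :: insertLetter y T := by
  rw [insertLetter, hy, Option.elim_some]

theorem insertLetter_nil : insertLetter x [] = insertLetter x [∅] :=
  insertWord_nil (w := [x]) (by simp)

theorem IsReducedWord.bumped_cons (h : IsReducedWord (x :: columnWord (A :: T)))
    (hy : bumped A x = some y) : IsReducedWord (y :: columnWord T) := by
  rw [columnWord_cons] at h
  have hcol := (ckRel_colInsert (h.of_append_left (u := x :: colWord A))).append_right
    (columnWord T)
  have hred := hcol.isReducedWord h
  rw [hy, append_assoc] at hred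
  exact hred.of_append_right

theorem insertLetter_induction {P : ℕ → List (Finset ℕ) → Prop}
    (nil : ∀ x, P x [∅] → P x [])
    (none : ∀ x A T, (x ∈ A → x + 1 ∈ A) → bumped A x = none → P x (A :: T))
    (some : ∀ x y A T, (x ∈ A → x + 1 ∈ A) → bumped A x = some y → P y T → P x (A :: T))
    (h : IsReducedWord (x :: columnWord T)) : P x T := by
  induction T generalizing x with
  | nil => exact nil x (none x ∅ [] (by simp) (bumped_empty x))
  | cons A T ih =>
    have hsucc : x ∈ A → x + 1 ∈ A := by
      rw [columnWord_cons] at h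
      exact (h.of_append_left (u := x :: colWord A)).succ_mem_column
    rcases hy : bumped A x with _ | y
    · exact none x A T hsucc hy
    · exact some x y A T hsucc hy (ih (h.bumped_cons hy))

theorem colInsert_of_bumped_eq_none (hA : x ∈ A → x + 1 ∈ A) (hx : bumped A x = none) :
    x ∉ A ∧ colInsert A x = insert x A := by
  have hxA : x ∉ A := fun h => by
    have := bumped_eq_none.1 hx _ (hA h)
    omega
  refine ⟨hxA, ?_⟩
  ext z
  grind [mem_colInsert]

theorem keyRank_singleton_empty (j : ℕ) : keyRank j [∅] = keyRank j [] := by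
  ext k
  have := keyRank_le_card j ∅ [] k
  simp only [Finset.filter_empty, Finset.card_empty, Nat.le_zero] at this
  rw [this, keyRank_nil]

theorem exists_keyRank_zero_eq_columnRank (hy : bumped A x = some y)
    (T T' : List (Finset ℕ)) : ∃ M, y < M ∧ keyRank 0 (A :: T) = columnRank A (M - ·) ∧
      keyRank 0 (colInsert A x :: T') = columnRank (colInsert A x) (M - ·) := by
  obtain ⟨M, hM⟩ := exists_forall_lt A
  rw [bumped_eq_some] at hy
  refine ⟨M, hM y hy.1, keyRank_zero_cons hM, keyRank_zero_cons fun a ha => ?_⟩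
  rcases mem_colInsert.1 ha with rfl | ⟨ha, -⟩
  · exact hy.2.1.trans (hM y hy.1)
  · exact hM a ha

theorem keyRank_insertLetter_rankLE (j : ℕ) (h : IsReducedWord (x :: columnWord T)) :
    RankLE x (keyRank j T) (keyRank j (insertLetter x T)) := by
  refine insertLetter_induction
    (P := fun x T => ∀ j, RankLE x (keyRank j T) (keyRank j (insertLetter x T)))
    (fun x hx j => ?_) (fun x A T hA hx j => ?_) (fun x y A T hA hy ih j => ?_) h j
  · rw [insertLetter_nil, ← keyRank_singleton_empty]
    exact hx j
  · rw [insertLetter_of_none hx, (colInsert_of_bumped_eq_none hA hx).2]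
    have hle : ∀ k, keyRank j (A :: T) k ≤ keyRank j (insert x A :: T) k := fun k => by
      cases j with
      | zero => exact Finset.card_le_card (Finset.filter_subset_filter _ (Finset.subset_insert _ _))
      | succ j => exact columnRank_mono (Finset.subset_insert _ _) fun _ => le_rfl
    exact ⟨fun k _ => hle k, fun k _ => .inl (hle k)⟩
  · rw [insertLetter_of_some hy]
    cases j with
    | zero =>
      obtain ⟨M, -, hAM, hAM'⟩ := exists_keyRank_zero_eq_columnRank hy T (insertLetter y T)
      rw [hAM, hAM']
      exact (RankLE.refl y _).columnRank hA hy fun k => by omega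
    | succ j => exact (ih j).columnRank hA hy (keyRank_le_succ j _)

/-- The index of the column that grows when `x` is inserted into a tableau. -/
def newColumn : ℕ → List (Finset ℕ) → ℕ
  | _, [] => 0
  | x, A :: T => (bumped A x).elim 0 (newColumn · T + 1)

theorem newColumn_of_none (hx : bumped A x = none) : newColumn x (A :: T) = 0 := by
  rw [newColumn, hx, Option.elim_none]

theorem newColumn_of_some (hy : bumped A x = some y) :
    newColumn x (A :: T) = newColumn y T + 1 := by
  rw [newColumn, hy, Option.elim_some]

theorem newColumn_nil : newColumn x [] = newColumn x [∅] :=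
  (newColumn_of_none (bumped_empty x)).symm

theorem newColumn_le_length (x : ℕ) (T : List (Finset ℕ)) : newColumn x T ≤ T.length := by
  induction T generalizing x with
  | nil => rfl
  | cons A T ih =>
    rcases hy : bumped A x with _ | y
    · simp [newColumn_of_none hy]
    · simpa [newColumn_of_some hy] using ih y

theorem keyRank_insertLetter_rankGrows (h : IsReducedWord (x :: columnWord T)) :
    RankGrows x (keyRank (newColumn x T) T) (keyRank (newColumn x T) (insertLetter x T)) := by
  refine insertLetter_induction (P := fun x T => RankGrows x (keyRank (newColumn x T) T)
      (keyRank (newColumn x T) (insertLetter x T)))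
    (fun x hx => ?_) (fun x A T hA hx => ?_) (fun x y A T hA hy ih => ?_) h
  · rwa [insertLetter_nil, newColumn_nil, ← keyRank_singleton_empty]
  · obtain ⟨hxA, hins⟩ := colInsert_of_bumped_eq_none hA hx
    rw [insertLetter_of_none hx, newColumn_of_none hx, hins]
    refine ⟨?_, fun k hk => ?_⟩
    · rw [keyRank, Finset.card_eq_zero, Finset.filter_eq_empty_iff]
      grind [bumped_eq_none]
    · rw [keyRank, keyRank, Finset.filter_insert, if_pos hk, Finset.card_insert_of_notMem]
      simp [hxA]
  · rw [insertLetter_of_some hy, newColumn_of_some hy]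
    exact ih.columnRank hA hy (keyRank_le_succ _ _)

theorem keyRank_insertLetter_rankShrinks (h : IsReducedWord (x :: columnWord T))
    (hj : j < newColumn x T) : RankShrinks x (keyRank j T) (keyRank j (insertLetter x T)) := by
  refine insertLetter_induction
    (P := fun x T => ∀ {j}, j < newColumn x T →
      RankShrinks x (keyRank j T) (keyRank j (insertLetter x T)))
    (fun x _ j hj => ?_) (fun x A T _ hx j hj => ?_) (fun x y A T hA hy ih j hj => ?_) h hj
  · simp [newColumn] at hj
  · simp [newColumn_of_none hx] at hj
  · rw [newColumn_of_some hy] at hj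
    rw [insertLetter_of_some hy]
    cases j with
    | zero =>
      obtain ⟨M, hyM, hAM, hAM'⟩ := exists_keyRank_zero_eq_columnRank hy T (insertLetter y T)
      rw [hAM, hAM']
      exact RankShrinks.columnRank hA hy (fun k l hkl => Nat.sub_le_sub_left hkl M)
        ⟨fun _ => le_rfl, by omega⟩
    | succ j => exact (ih (Nat.lt_of_succ_lt_succ hj)).columnRank hA hy (keyRank_antitone j _)

theorem keyRank_insertLetter_le_of_eq_zero (hx : 1 ≤ x) (h : IsReducedWord (x :: columnWord T))
    (h0 : keyRank j (insertLetter x T) (x - 1) = 0) (hk : k < x) :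
    keyRank j (insertLetter x T) k ≤ keyRank j T k := by
  refine insertLetter_induction (P := fun x T => 1 ≤ x → ∀ {j k},
    keyRank j (insertLetter x T) (x - 1) = 0 → k < x →
      keyRank j (insertLetter x T) k ≤ keyRank j T k) (fun x ih hx j k h0 hk => ?_)
    (fun x A T _ hn hx j k h0 hk => ?_) (fun x y A T _ hy ih hx j k h0 hk => ?_) h hx h0 hk
  · rw [insertLetter_nil] at h0 ⊢
    rw [← keyRank_singleton_empty]
    exact ih hx h0 hk
  · rw [insertLetter_of_none hn] at h0 ⊢
    cases j with
    | zero =>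
      rw [keyRank, Finset.card_eq_zero, Finset.filter_eq_empty_iff] at h0
      exact absurd (h0 (mem_colInsert_self A x)) (by omega)
    | succ j => exact columnRank_colInsert_le_of_eq_zero hx h0 (fun _ _ _ => le_rfl) hk
  · rw [insertLetter_of_some hy] at h0 ⊢
    cases j with
    | zero =>
      obtain ⟨M, -, hAM, hAM'⟩ := exists_keyRank_zero_eq_columnRank hy T (insertLetter y T)
      rw [hAM'] at h0 ⊢
      rw [hAM]
      exact columnRank_colInsert_le_of_eq_zero hx h0 (fun _ _ _ => le_rfl) hk
    | succ j =>
      have hxy := (bumped_eq_some.1 hy).2.1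
      refine columnRank_colInsert_le_of_eq_zero hx h0 (fun hfx k hk => ?_) hk
      refine ih (by omega) (Nat.le_zero.1 ?_) (by omega)
      exact hfx ▸ keyRank_antitone j _ (show x ≤ y - 1 by omega)

end Insertion

/-! ### The total rank of a tableau -/

/-- The sum of the ranks of all columns. For the insertion tableau of a Yamanouchi word it is the
number of letters in the runs with modified minimum above `k`. -/
noncomputable def totalRank (T : List (Finset ℕ)) (k : ℕ) : ℕ :=
  ∑ j ∈ Finset.range T.length, keyRank j T k

section TotalRank

variable {T : List (Finset ℕ)} {j k x N : ℕ}

theorem totalRank_eq_sum (hN : T.length ≤ N) :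
    totalRank T k = ∑ j ∈ Finset.range N, keyRank j T k :=
  Finset.sum_subset (Finset.range_mono hN) fun j _ hj =>
    keyRank_eq_zero_of_length_le (by simpa using hj)

theorem totalRank_lt_insertLetter (h : IsReducedWord (x :: columnWord T)) (hk : k < x) :
    totalRank T k < totalRank (insertLetter x T) k := by
  have hlen := newColumn_le_length x T
  rw [totalRank_eq_sum (N := T.length + (insertLetter x T).length + 1) (by omega),
    totalRank_eq_sum (N := T.length + (insertLetter x T).length + 1) (by omega)]
  refine Finset.sum_lt_sum (fun j _ => (keyRank_insertLetter_rankLE j h).of_lt k hk)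
    ⟨newColumn x T, Finset.mem_range.2 (by omega), ?_⟩
  rw [(keyRank_insertLetter_rankGrows h).eq_succ k hk]
  exact Nat.lt_succ_self _

theorem length_le_totalRank_columnTableau {u v : List ℕ} (h : IsReducedWord (u ++ v))
    (hk : ∀ a ∈ u, k < a) : u.length ≤ totalRank (columnTableau (u ++ v)) k := by
  induction u with
  | nil => exact Nat.zero_le _
  | cons x u ih =>
    have hred : IsReducedWord (x :: columnWord (columnTableau (u ++ v))) :=
      ((ckRel_columnTableau h.of_cons).cons x).isReducedWord h
    exact (Nat.succ_le_succ (ih h.of_cons fun a ha => hk a (mem_cons_of_mem x ha))).trans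
      (totalRank_lt_insertLetter hred (hk x mem_cons_self))

theorem keyRank_newColumn_pred_eq_zero (h : IsReducedWord (x :: columnWord T)) :
    keyRank (newColumn x T) T (x - 1) = 0 := by
  have hx : 1 ≤ x := h.1 x mem_cons_self
  have hgrows := keyRank_insertLetter_rankGrows h
  have hlip := keyRank_le_succ (newColumn x T) (insertLetter x T) (x - 1)
  rw [Nat.sub_add_cancel hx, hgrows.eq_zero, hgrows.eq_succ _ (by omega)] at hlip
  omega

theorem keyRank_insertLetter_pred_pos (h : IsReducedWord (x :: columnWord T))
    (hj : j ≤ newColumn x T) : 0 < keyRank j (insertLetter x T) (x - 1) := by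
  have hx : 1 ≤ x := h.1 x mem_cons_self
  have hgrows := (keyRank_insertLetter_rankGrows h).eq_succ (x - 1) (by omega)
  have := keyRank_antitone_left (insertLetter x T) (x - 1) hj
  simp only at this
  omega

theorem totalRank_insertLetter_le (h : IsReducedWord (x :: columnWord T))
    (h0 : keyRank (newColumn x T + 1) (insertLetter x T) (x - 1) = 0) (hk : k < x) :
    totalRank (insertLetter x T) k ≤ totalRank T k + 1 := by
  have hx : 1 ≤ x := h.1 x mem_cons_self
  have hle : ∀ j, keyRank j (insertLetter x T) k ≤
      keyRank j T k + if j = newColumn x T then 1 else 0 := fun j => by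
    rcases lt_trichotomy j (newColumn x T) with hj | rfl | hj
    · rw [if_neg hj.ne]
      exact (keyRank_insertLetter_rankShrinks h hj).le k
    · rw [if_pos rfl]
      exact ((keyRank_insertLetter_rankGrows h).eq_succ k hk).le
    · rw [if_neg hj.ne']
      refine keyRank_insertLetter_le_of_eq_zero hx h (Nat.le_zero.1 ?_) hk
      exact h0 ▸ keyRank_antitone_left (insertLetter x T) (x - 1) hj
  rw [totalRank_eq_sum (N := T.length + (insertLetter x T).length) (by omega),
    totalRank_eq_sum (N := T.length + (insertLetter x T).length) (by omega)]
  refine (Finset.sum_le_sum fun j _ => hle j).trans ?_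
  rw [Finset.sum_add_distrib, Finset.sum_ite_eq']
  split_ifs <;> simp

end TotalRank

/-! ### Inserting an increasing row -/

section InsertRow

variable {T : List (Finset ℕ)} {r : List ℕ} {x k : ℕ}

theorem IsReducedWord.insertWord (h : IsReducedWord (x :: r ++ columnWord T)) :
    IsReducedWord (x :: columnWord (insertWord r T)) :=
  ((ckRel_insertWord h.of_cons).cons x).isReducedWord h

theorem length_le_newColumn (hs : (x :: r).Pairwise (· < ·))
    (h : IsReducedWord (x :: r ++ columnWord T)) : r.length ≤ newColumn x (insertWord r T) := by
  induction r generalizing x with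
  | nil => exact Nat.zero_le _
  | cons y r ih =>
    by_contra! hlt
    have hxy : x < y := rel_of_pairwise_cons hs mem_cons_self
    have hy : IsReducedWord (y :: r ++ columnWord T) := h.of_cons
    have hpos := keyRank_insertLetter_pred_pos hy.insertWord
      ((Nat.le_of_lt_succ hlt).trans (ih hs.of_cons hy))
    have hzero := keyRank_newColumn_pred_eq_zero h.insertWord
    have hle := keyRank_antitone (newColumn x (insertWord (y :: r) T)) (insertWord (y :: r) T)
      (show x - 1 ≤ y - 1 by omega)
    exact (hpos.trans_le hle).ne' hzero

theorem newColumn_eq_length (hs : (x :: r).Pairwise (· < ·))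
    (h : IsReducedWord (x :: r ++ columnWord T))
    (h0 : keyRank (r.length + 1) (insertWord (x :: r) T) (x - 1) = 0) :
    newColumn x (insertWord r T) = r.length := by
  refine le_antisymm (Nat.le_of_not_lt fun hlt => ?_) (length_le_newColumn hs h)
  exact (keyRank_insertLetter_pred_pos h.insertWord hlt).ne' h0

theorem totalRank_insertWord_le (hs : (x :: r).Pairwise (· < ·))
    (h : IsReducedWord (x :: r ++ columnWord T))
    (h0 : keyRank (r.length + 1) (insertWord (x :: r) T) (x - 1) = 0) (hk : k < x) :
    totalRank (insertWord (x :: r) T) k ≤ totalRank T k + (r.length + 1) := by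
  have hcol := newColumn_eq_length hs h h0
  have hx := totalRank_insertLetter_le h.insertWord (by rw [hcol]; exact h0) hk
  induction r generalizing x with
  | nil => exact hx
  | cons y r ih =>
    have hxy : x < y := rel_of_pairwise_cons hs mem_cons_self
    have hy : IsReducedWord (y :: r ++ columnWord T) := h.of_cons
    have h0y : keyRank (r.length + 1) (insertWord (y :: r) T) (y - 1) = 0 := by
      refine Nat.le_zero.1 ?_
      rw [← keyRank_newColumn_pred_eq_zero h.insertWord, hcol]
      exact keyRank_antitone _ _ (by omega)
    have hcoly := newColumn_eq_length hs.of_cons hy h0y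
    have := ih hs.of_cons hy h0y (hk.trans hxy) hcoly
      (totalRank_insertLetter_le hy.insertWord (by rw [hcoly]; exact h0y) (hk.trans hxy))
    rw [insertWord_cons, length_cons]
    omega

end InsertRow

theorem colInsert_insert_of_forall_lt {A : Finset ℕ} {x y : ℕ} (hA : ∀ a ∈ A, a < x) (hxy : x < y) :
    colInsert (insert y A) x = insert x A := by
  have hy : bumped (insert y A) x = some y := by grind [bumped_eq_some]
  ext z
  rw [mem_colInsert, hy]
  grind

theorem colInsert_of_forall_lt {A : Finset ℕ} {x : ℕ} (hA : ∀ a ∈ A, a < x) :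
    colInsert A x = insert x A := by
  have hx : bumped A x = none := bumped_eq_none.2 fun a ha => (hA a ha).le
  ext z
  rw [mem_colInsert, hx]
  grind

theorem colInsertWord_of_forall_lt {r : List ℕ} {A : Finset ℕ} {x : ℕ}
    (hs : (x :: r).Pairwise (· < ·)) (hA : ∀ a ∈ A, a < x) :
    colInsertWord (x :: r) A = insert x A := by
  induction r generalizing x with
  | nil => exact colInsert_of_forall_lt hA
  | cons y r ih =>
    rw [pairwise_cons] at hs
    have hxy : x < y := hs.1 y mem_cons_self
    rw [colInsertWord_cons, ih hs.2 fun a ha => (hA a ha).trans hxy,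
      colInsert_insert_of_forall_lt hA hxy]

theorem getD_zero_insertWord {r : List ℕ} {T : List (Finset ℕ)} {x : ℕ}
    (hs : (x :: r).Pairwise (· < ·)) (hT : ∀ a ∈ T.getD 0 ∅, a < x) :
    (insertWord (x :: r) T).getD 0 ∅ = insert x (T.getD 0 ∅) := by
  cases T with
  | nil =>
    rw [insertWord_nil (cons_ne_nil x r), insertWord_column, getD_cons_zero,
      colInsertWord_of_forall_lt hs (by simp), getD_nil]
  | cons A T =>
    simpa [insertWord_column] using colInsertWord_of_forall_lt (A := A) hs (by simpa using hT)

/-- The list of columns obtained from `T` by putting the `q`-th letter of a row into the `q`-th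
column. -/
def addRow : List ℕ → List (Finset ℕ) → List (Finset ℕ)
  | [], T => T
  | a :: r, [] => {a} :: addRow r []
  | a :: r, C :: T => insert a C :: addRow r T

theorem mem_getD_addRow {r : List ℕ} {T : List (Finset ℕ)} {q a : ℕ} :
    a ∈ (addRow r T).getD q ∅ ↔ a ∈ T.getD q ∅ ∨ q < r.length ∧ r.getD q 0 = a := by
  induction r generalizing T q with
  | nil => simp [addRow]
  | cons b r ih =>
    cases T <;> cases q
    · simp [addRow, eq_comm]
    · simpa [addRow] using ih (T := [])
    · simp [addRow, eq_comm, or_comm]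
    · simpa [addRow] using ih

theorem insertLetter_addRow {r : List ℕ} {T : List (Finset ℕ)} {a : ℕ}
    (hs : (a :: r).Pairwise (· < ·))
    (hT : ∀ q < (a :: r).length, ∀ b ∈ T.getD q ∅, b < (a :: r).getD q 0) :
    insertLetter a (addRow r T) = addRow (a :: r) T := by
  induction r generalizing a T with
  | nil =>
    cases T with
    | nil => rfl
    | cons C T =>
      have hC : ∀ b ∈ C, b < a := hT 0 (by simp)
      rw [addRow, insertLetter_of_none (bumped_eq_none.2 fun b hb => (hC b hb).le),
        colInsert_of_forall_lt hC, addRow, addRow]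
  | cons b r ih =>
    have hab : a < b := (pairwise_cons.1 hs).1 b mem_cons_self
    cases T with
    | nil =>
      have hb : bumped {b} a = some b := bumped_eq_some.2 (by simpa using hab)
      have hins : colInsert {b} a = {a} := colInsert_insert_of_forall_lt (A := ∅) (by simp) hab
      rw [addRow, insertLetter_of_some hb, ih hs.of_cons (by simp), hins]
      rfl
    | cons C T =>
      have hC : ∀ c ∈ C, c < a := hT 0 (by simp)
      have hb : bumped (insert b C) a = some b := by grind [bumped_eq_some]
      rw [addRow, insertLetter_of_some hb, ih hs.of_cons fun q hq c hc => ?_,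
        colInsert_insert_of_forall_lt hC hab, addRow]
      exact hT (q + 1) (by simpa using hq) c (by simpa using hc)

theorem getD_lt_getD {l : List ℕ} (hs : l.Pairwise (· < ·)) {i j : ℕ} (h : i < j)
    (hj : j < l.length) : l.getD i 0 < l.getD j 0 := by
  rw [getD_eq_getElem _ _ hj, getD_eq_getElem _ _ (h.trans hj)]
  exact pairwise_iff_getElem.1 hs i j _ _ h

theorem insertWord_eq_addRow {r : List ℕ} {T : List (Finset ℕ)} (hs : r.Pairwise (· < ·))
    (hT : ∀ q < r.length, ∀ b ∈ T.getD q ∅, b < r.getD q 0) : insertWord r T = addRow r T := by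
  induction r with
  | nil => rfl
  | cons a r ih =>
    rw [insertWord_cons, ih hs.of_cons fun q hq b hb => ?_, insertLetter_addRow hs hT]
    exact (hT q (by grind) b hb).trans (getD_lt_getD hs q.lt_succ_self (by simpa using hq))

/-! ### Young tableaux -/

/-- The row `hi` fits on top of the row `lo` in an increasing Young tableau. -/
def YoungPair (lo hi : List ℕ) : Prop :=
  hi.length ≤ lo.length ∧ ∀ j < hi.length, lo.getD j 0 < hi.getD j 0

theorem YoungPair.trans {a b c : List ℕ} (hab : YoungPair a b) (hbc : YoungPair b c) :
    YoungPair a c :=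
  ⟨hbc.1.trans hab.1, fun j hj => (hab.2 j (hj.trans_le hbc.1)).trans (hbc.2 j hj)⟩

theorem wordOf_append (V U : List (List ℕ)) : wordOf (V ++ U) = wordOf U ++ wordOf V := by
  simp [wordOf]

theorem wordOf_singleton (r : List ℕ) : wordOf [r] = r := by simp [wordOf]

theorem columnTableau_wordOf_concat (V : List (List ℕ)) (r : List ℕ) :
    columnTableau (wordOf (V ++ [r])) = insertWord r (columnTableau (wordOf V)) := by
  rw [wordOf_append, wordOf_singleton, columnTableau_append]

theorem mem_getD_columnTableau_wordOf {V : List (List ℕ)} (hs : ∀ r ∈ V, r.Pairwise (· < ·))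
    (hV : V.Pairwise YoungPair) {q a : ℕ} :
    a ∈ (columnTableau (wordOf V)).getD q ∅ ↔ ∃ r ∈ V, q < r.length ∧ r.getD q 0 = a := by
  induction V using List.reverseRecOn generalizing q a with
  | nil => simp [wordOf, columnTableau, insertWord]
  | append_singleton V r ih =>
    rw [pairwise_append] at hV
    have IH {q a} := ih (fun r hr => hs r (by simp [hr])) hV.1 (q := q) (a := a)
    rw [columnTableau_wordOf_concat, insertWord_eq_addRow (hs r (by simp)), mem_getD_addRow, IH]
    · simp only [mem_append, mem_singleton, or_and_right, exists_or, exists_eq_left]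
    · intro q hq b hb
      obtain ⟨r', hr', -, rfl⟩ := IH.1 hb
      exact (hV.2.2 r' hr' r (by simp)).2 q hq

/-! ### The lift of a pair of rows, column by column -/

/-- `RowLift τ σ τ' σ' f` says that lifting the row `τ` above the row `σ` gives the rows `τ'` and
`σ'`, where the rows are right-justified and built up column by column from the left. The letter
`s` of an `insert` step is one of the `x_j`. The flag `f` is `some v` if the last column has
produced `v`, either as an `x_j` or as a letter that precedes a decremented one; then a column with
both letters equal to `v + 1` is decremented. -/
inductive RowLift : List ℕ → List ℕ → List ℕ → List ℕ → Option ℕ → Prop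
  | base (τ : List ℕ) : RowLift τ [] τ [] none
  | insert {τ σ τ' σ' : List ℕ} {t s : ℕ} {f : Option ℕ} (h : RowLift (τ ++ [t]) σ τ' σ' f)
      (hts : t < s) : RowLift (τ ++ [t]) (σ ++ [s]) (τ' ++ [s]) σ' (some s)
  | dec {τ σ τ' σ' : List ℕ} {v : ℕ} (h : RowLift τ σ τ' σ' (some v)) :
      RowLift (τ ++ [v + 1]) (σ ++ [v + 1]) (τ' ++ [v + 1]) (σ' ++ [v]) (some (v + 1))
  | keep {τ σ τ' σ' : List ℕ} {t s : ℕ} {f : Option ℕ} (h : RowLift τ σ τ' σ' f) (hts : s ≤ t)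
      (hf : ∀ v, f = some v → ¬ (t = v + 1 ∧ s = v + 1)) :
      RowLift (τ ++ [t]) (σ ++ [s]) (τ' ++ [t]) (σ' ++ [s]) none

section LiftPair

variable {τ σ : List ℕ}

theorem liftFailIdx_cons (t s : ℕ) (τ σ : List ℕ) :
    liftFailIdx (t :: τ) (s :: σ) = if t < s then some 0 else (liftFailIdx τ σ).map (· + 1) := by
  simp [liftFailIdx, findIdx?_cons]

theorem forall₂_of_liftFailIdx_eq_none (h : liftFailIdx τ σ = none) (hl : σ.length ≤ τ.length) :
    Forall₂ (fun t s => s ≤ t) (τ.take σ.length) σ := by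
  induction τ generalizing σ with
  | nil => simp_all
  | cons t τ ih =>
    cases σ with
    | nil => simp
    | cons s σ =>
      rw [liftFailIdx_cons] at h
      split_ifs at h with hts
      exact .cons (not_lt.1 hts) (ih (Option.map_eq_none_iff.1 h) (by simpa using hl))

theorem exists_of_liftFailIdx_eq_some {j : ℕ} (h : liftFailIdx τ σ = some j) :
    ∃ τ₁ t τ₀ σ₁ x σ₀, τ = τ₁ ++ t :: τ₀ ∧ σ = σ₁ ++ x :: σ₀ ∧ τ₁.length = j ∧ t < x ∧
      Forall₂ (fun t s => s ≤ t) τ₁ σ₁ := by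
  induction τ generalizing σ j with
  | nil => simp [liftFailIdx] at h
  | cons t τ ih =>
    cases σ with
    | nil => simp [liftFailIdx] at h
    | cons s σ =>
      rw [liftFailIdx_cons] at h
      split_ifs at h with hts
      · cases h
        exact ⟨[], t, τ, [], s, σ, by simp [hts]⟩
      · obtain ⟨i, hi, rfl⟩ := Option.map_eq_some_iff.1 h
        obtain ⟨τ₁, t', τ₀, σ₁, x, σ₀, rfl, rfl, rfl, htx, hF⟩ := ih hi
        exact ⟨t :: τ₁, t', τ₀, s :: σ₁, x, σ₀, rfl, rfl, rfl, htx, .cons (not_lt.1 hts) hF⟩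

theorem RowLift.append_of_none {τ' σ' τ₁ σ₁ : List ℕ} (h : RowLift τ σ τ' σ' none)
    (hF : Forall₂ (fun t s => s ≤ t) τ₁ σ₁) :
    RowLift (τ ++ τ₁) (σ ++ σ₁) (τ' ++ τ₁) (σ' ++ σ₁) none := by
  induction hF generalizing τ σ τ' σ' with
  | nil => simpa using h
  | cons hts _ ih => simpa using ih (h.keep hts (by simp))

theorem RowLift.append_of_some {τ' σ' τ₁ σ₁ : List ℕ} {x i : ℕ}
    (h : RowLift τ σ τ' σ' (some (x + i))) (hF : Forall₂ (fun t s => s ≤ t) τ₁ σ₁) :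
    ∃ f, RowLift (τ ++ τ₁) (σ ++ σ₁) (τ' ++ τ₁)
      (σ' ++ decFirst (bCount2 x (i + 1) τ₁ σ₁) σ₁) f := by
  induction hF generalizing τ σ τ' σ' i with
  | nil => exact ⟨_, by simpa [bCount2, decFirst] using h⟩
  | @cons t s τ₁ σ₁ hts hF ih =>
    by_cases hc : t = x + (i + 1) ∧ s = x + (i + 1)
    · obtain ⟨rfl, rfl⟩ := hc
      simpa [bCount2, decFirst, ← add_assoc] using ih (i := i + 1) h.dec
    · exact ⟨none, by
        simpa [bCount2, hc, decFirst] using (h.keep hts (by grind)).append_of_none hF⟩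

theorem ite_headD_bCount2 (x : ℕ) :
    (if σ.headD 0 = x + 1 then bCount2 x 1 τ σ else 0) = bCount2 x 1 τ σ := by
  cases τ <;> cases σ <;> grind [bCount2]

theorem rowLift_liftPairAuxR {n : ℕ} (hn : σ.length < n) (h : liftOkAux n τ σ) :
    ∃ f, RowLift τ.reverse σ.reverse (liftPairAuxR n τ σ).1.reverse
      (liftPairAuxR n τ σ).2.reverse f := by
  induction n generalizing τ σ with
  | zero => simp at hn
  | succ n ih =>
    rw [liftOkAux] at h
    rw [liftPairAuxR]
    cases hl : liftFailIdx τ σ with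
    | none =>
      simp only [hl] at h ⊢
      have hF := rel_reverse (forall₂_of_liftFailIdx_eq_none hl (by simpa using h))
      refine ⟨none, ?_⟩
      simpa [← reverse_append] using (RowLift.base (τ.drop σ.length).reverse).append_of_none hF
    | some j =>
      simp only [hl] at h ⊢
      obtain ⟨τ₁, t, τ₀, σ₁, x, σ₀, rfl, rfl, rfl, htx, hF⟩ := exists_of_liftFailIdx_eq_some hl
      have hlen := hF.length_eq
      have hdτ : drop τ₁.length (τ₁ ++ t :: τ₀) = t :: τ₀ := drop_left' rfl
      have hdσ : drop (τ₁.length + 1) (σ₁ ++ x :: σ₀) = σ₀ := by simp [hlen, drop_append]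
      have hσ₁ : take τ₁.length (σ₁ ++ x :: σ₀) = σ₁ := take_left' hlen.symm
      have hx : (σ₁ ++ x :: σ₀).getD τ₁.length 0 = x := by simp [hlen]
      rw [hdτ, hdσ] at h
      rw [hdτ, hdσ, hσ₁, hx, ite_headD_bCount2, take_left' rfl]
      obtain ⟨f, hf⟩ := ih (by grind) h
      rw [reverse_cons] at hf
      simpa using (hf.insert htx).append_of_some (i := 0) (rel_reverse hF)

theorem exists_rowLift (h : liftOkAux (σ.length + 1) τ.reverse σ.reverse) :
    ∃ f, RowLift τ σ (liftPair τ σ).1 (liftPair τ σ).2 f := by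
  simpa [liftPair, h] using rowLift_liftPairAuxR (by simp) h

theorem exists_rowLift_of_ne (h : liftPair τ σ ≠ (τ, σ)) :
    ∃ f, RowLift τ σ (liftPair τ σ).1 (liftPair τ σ).2 f := by
  refine exists_rowLift (not_not.1 fun hok => h ?_)
  simp [liftPair, hok]

theorem liftOkAux_nil_right (n : ℕ) (τ : List ℕ) : liftOkAux n τ [] := by
  cases n <;> simp [liftOkAux, liftFailIdx]

theorem liftOkAux_cons_of_le (n : ℕ) {t s : ℕ} (h : s ≤ t) :
    liftOkAux (n + 1) (t :: τ) (s :: σ) = liftOkAux (n + 1) τ σ := by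
  simp only [liftOkAux, liftFailIdx_cons, if_neg (not_lt.2 h)]
  cases liftFailIdx τ σ <;> simp

theorem liftOkAux_cons_of_lt (n : ℕ) {t s : ℕ} (h : t < s) :
    liftOkAux (n + 1) (t :: τ) (s :: σ) = liftOkAux n (t :: τ) σ := by
  simp [liftOkAux, liftFailIdx_cons, h]

end LiftPair

theorem pairwise_lt_concat {l : List ℕ} {a : ℕ} :
    (l ++ [a]).Pairwise (· < ·) ↔ l.Pairwise (· < ·) ∧ ∀ b ∈ l, b < a := by
  simp [pairwise_append]

namespace RowLift

variable {τ σ τ' σ' : List ℕ} {f : Option ℕ}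

theorem eq_nil_of_left (h : RowLift τ σ τ' σ' f) (hτ : τ = []) : σ = [] := by
  cases h <;> simp_all

theorem eq_of_right_eq_nil (h : RowLift τ σ τ' σ' f) (hσ : σ = []) :
    τ' = τ ∧ σ' = [] ∧ f = none := by
  cases h <;> simp_all

theorem length_add_length (h : RowLift τ σ τ' σ' f) :
    τ'.length + σ'.length = τ.length + σ.length := by
  induction h with grind

theorem sublist (h : RowLift τ σ τ' σ' f) : τ <+ τ' := by
  induction h with
  | base => rfl
  | insert _ _ ih => exact ih.trans (sublist_append_left _ _)
  | dec _ ih => exact ih.append_right _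
  | keep _ _ _ ih => exact ih.append_right _

theorem length_le (h : RowLift τ σ τ' σ' f) : σ.length ≤ τ'.length := by
  induction h with simp_all

theorem eq_of_length_eq (h : RowLift τ σ τ' σ' f) (hlen : τ'.length = τ.length) :
    τ' = τ ∧ σ' = σ ∧ f = none := by
  induction h with
  | base => simp
  | insert h => exact absurd hlen (by have := h.sublist.length_le; grind)
  | dec _ ih => simp at ih; grind
  | keep _ _ _ ih => grind

theorem mem_or_mem (h : RowLift τ σ τ' σ' f) {a : ℕ} (ha : a ∈ τ') : a ∈ τ ∨ a ∈ σ := by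
  induction h with grind

theorem exists_le (h : RowLift τ σ τ' σ' f) {a : ℕ} (ha : a ∈ σ') : ∃ s ∈ σ, a ≤ s := by
  induction h with
  | base => simp at ha
  | insert _ _ ih => exact (ih ha).imp fun s => And.imp_left (mem_append_left _)
  | dec _ ih | keep _ _ _ ih =>
    rcases mem_append.1 ha with ha | ha
    · exact (ih ha).imp fun s => And.imp_left (mem_append_left _)
    · exact ⟨_, mem_concat_self, by simp_all⟩

theorem lt_flag (h : RowLift τ σ τ' σ' f) (hσ : σ.Pairwise (· < ·)) {v a : ℕ} (hf : f = some v)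
    (ha : a ∈ σ') : a < v := by
  induction h generalizing v with
  | insert h =>
    cases hf
    obtain ⟨s, hs, has⟩ := h.exists_le ha
    exact has.trans_lt ((pairwise_lt_concat.1 hσ).2 s hs)
  | dec _ ih => grind [pairwise_lt_concat]
  | _ => cases hf

theorem pairwise_top (h : RowLift τ σ τ' σ' f) (hτ : τ.Pairwise (· < ·))
    (hσ : σ.Pairwise (· < ·)) : τ'.Pairwise (· < ·) := by
  induction h with
  | base => exact hτ
  | insert h hts ih =>
    rw [pairwise_lt_concat] at hσ ⊢
    refine ⟨ih hτ hσ.1, fun b hb => ?_⟩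
    rcases h.mem_or_mem hb with hb | hb <;> grind [pairwise_lt_concat]
  | dec h ih | keep h _ _ ih =>
    rw [pairwise_lt_concat] at hτ hσ ⊢
    refine ⟨ih hτ.1 hσ.1, fun b hb => ?_⟩
    rcases h.mem_or_mem hb with hb | hb <;> grind

theorem pairwise_bottom (h : RowLift τ σ τ' σ' f) (hσ : σ.Pairwise (· < ·)) :
    σ'.Pairwise (· < ·) := by
  induction h with
  | base => exact hσ
  | insert _ _ ih => exact ih (pairwise_lt_concat.1 hσ).1
  | dec h ih =>
    rw [pairwise_lt_concat] at hσ ⊢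
    exact ⟨ih hσ.1, fun b hb => h.lt_flag hσ.1 rfl hb⟩
  | keep h _ _ ih =>
    rw [pairwise_lt_concat] at hσ ⊢
    refine ⟨ih hσ.1, fun b hb => ?_⟩
    obtain ⟨s, hs, hbs⟩ := h.exists_le hb
    exact hbs.trans_lt (hσ.2 s hs)

theorem head?_eq (h : RowLift τ σ τ' σ' f) (hτ : τ.Pairwise (· < ·))
    (hhead : ∀ a ∈ τ.head?, ∀ b ∈ σ.head?, b < a) : τ'.head? = τ.head? ∧ σ'.head? = σ.head? := by
  induction h with
  | base => simp
  | @insert τ σ τ' σ' t s _ h hts ih =>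
    have hσ : σ ≠ [] := by
      rintro rfl
      cases τ <;> grind
    have := h.sublist.length_le
    cases τ' <;> cases σ <;> grind
  | @dec τ σ τ' σ' v h ih =>
    have hσ : σ ≠ [] := fun e => by simpa using (h.eq_of_right_eq_nil e).2.2
    have hτ := h.eq_nil_of_left
    cases τ <;> cases σ <;> grind
  | @keep τ σ τ' σ' t s _ h _ _ ih =>
    rcases eq_or_ne σ [] with hσ | hσ
    · obtain ⟨rfl, rfl, -⟩ := h.eq_of_right_eq_nil hσ
      simp [hσ]
    · have hτ := h.eq_nil_of_left
      cases τ <;> cases σ <;> grind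

end RowLift

/-! ### Lifting preserves the Coxeter–Knuth class -/

namespace CKRel

variable {G : List ℕ} {b d g v : ℕ}

theorem slide_row (hs : (G ++ [d]).Pairwise (· < ·)) (hdb : d < b) :
    CKRel (b :: (G ++ [d])) (G ++ [b, d]) := by
  induction G with
  | nil => exact refl _
  | cons g G ih =>
    obtain ⟨n, R, hn⟩ : ∃ n R, G ++ [d] = n :: R := exists_cons_of_ne_nil (by simp)
    have hgn : g < n := (pairwise_cons.1 hs).1 n (by simp [hn])
    have hnb : n < b := by
      have hnmem : n ∈ G ++ [d] := by simp [hn]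
      have := (pairwise_lt_concat.1 (pairwise_cons.1 hs).2).2 n
      grind
    have hstep : CKRel (b :: g :: n :: R) (g :: b :: n :: R) :=
      (step (CKStep.knuth₂ hgn hnb) [] R).symm
    rw [cons_append, hn]
    exact hstep.trans ((hn ▸ ih (pairwise_cons.1 hs).2).cons g)

theorem slide_row_braid (hs : (G ++ [v]).Pairwise (· < ·)) :
    CKRel ((v + 1) :: (G ++ [v, v + 1])) (G ++ [v, v + 1, v]) := by
  have hslide := (slide_row hs v.lt_succ_self).append_right [v + 1]
  have hbraid := step (CKStep.braid v).symm G []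
  simp only [cons_append, append_assoc, nil_append, append_nil] at hslide hbraid
  exact hslide.trans hbraid

end CKRel

section Slide

variable {G : List ℕ} {b d : ℕ}

theorem exists_eq_concat_pred (hs : (G ++ [b]).Pairwise (· < ·))
    (h : IsReducedWord (b :: (G ++ [b]))) : ∃ G₀ v, G = G₀ ++ [v] ∧ b = v + 1 := by
  rcases eq_nil_or_concat' G with rfl | ⟨G₀, g, rfl⟩
  · exact (IsReducedWord.not_square h).elim
  · rw [pairwise_lt_concat] at hs
    have hgb : g < b := hs.2 g mem_concat_self
    have hslide := ((CKRel.slide_row hs.1 hgb).append_right [b]).isReducedWord (by simpa using h)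
    have hpal : IsReducedWord [b, g, b] := IsReducedWord.of_append_right (u := G₀)
      (by simpa using hslide)
    exact ⟨G₀, g, rfl, hpal.adjacent_of_palindrome.elim (fun h => by omega) id⟩

/-- Either the letter `b` slides past the row as in `CKRel.slide_row` or as in
`CKRel.slide_row_braid`; the words appearing on the right depend only on `g`, `b` and `d`. -/
theorem exists_ckRel_append {g : ℕ} (hdb : d ≤ b) (hs : (G ++ [g] ++ [d]).Pairwise (· < ·))
    (h : IsReducedWord (b :: (G ++ [g] ++ [d]))) :
    ∃ w, ∀ G', (G' ++ [g] ++ [d]).Pairwise (· < ·) →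
      CKRel (b :: (G' ++ [g] ++ [d])) (G' ++ [g] ++ w) := by
  rcases hdb.lt_or_eq with hdb | rfl
  · exact ⟨[b, d], fun G' hG' => CKRel.slide_row hG' hdb⟩
  · obtain ⟨G₀, v, hG, rfl⟩ := exists_eq_concat_pred hs h
    obtain rfl : g = v := by simpa using (append_inj' hG rfl).2
    refine ⟨[g + 1, g], fun G' hG' => ?_⟩
    simpa using CKRel.slide_row_braid (pairwise_lt_concat.1 hG').1

theorem IsReducedWord.append_of_slide {Q : List ℕ} (hs : (G ++ [d]).Pairwise (· < ·)) (hdb : d ≤ b)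
    (h : IsReducedWord (Q ++ b :: (G ++ [d]))) : IsReducedWord (Q ++ G) := by
  rcases eq_nil_or_concat' G with rfl | ⟨G, g, rfl⟩
  · simpa using h.of_append_left
  · obtain ⟨w, hw⟩ := exists_ckRel_append hdb hs h.of_append_right
    have hslide := ((hw G hs).append_left Q).isReducedWord h
    rw [← append_assoc] at hslide
    exact hslide.of_append_left

end Slide

/-- `LeftDom β δ`: the row `β`, left-justified with the row `δ`, is at most as long as `δ` and
weakly dominates it letter by letter. -/
inductive LeftDom : List ℕ → List ℕ → Prop
  | nil (δ : List ℕ) : LeftDom [] δ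
  | cons {b d : ℕ} {β δ : List ℕ} : d ≤ b → LeftDom β δ → LeftDom (b :: β) (d :: δ)

/-- `RightDom α γ`: the row `α`, right-justified with the row `γ`, is at least as long as `γ` and
weakly dominates it letter by letter. -/
inductive RightDom : List ℕ → List ℕ → Prop
  | nil (α : List ℕ) : RightDom α []
  | concat {α γ : List ℕ} {a c : ℕ} : RightDom α γ → c ≤ a → RightDom (α ++ [a]) (γ ++ [c])

/-- The row `δ` with its initial letters `v + 1, v + 2, …` that lie below equal letters of `β`
decremented, if the flag is `some v`. -/
def decTail : Option ℕ → List ℕ → List ℕ → List ℕ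
  | some v, b :: β, d :: δ =>
    if b = v + 1 ∧ d = v + 1 then v :: decTail (some (v + 1)) β δ else d :: δ
  | _, _, δ => δ

theorem decTail_none (β δ : List ℕ) : decTail none β δ = δ := by cases β <;> cases δ <;> rfl

theorem decTail_nil_left (f : Option ℕ) (δ : List ℕ) : decTail f [] δ = δ := by
  cases f <;> cases δ <;> rfl

theorem decTail_cons_of_forall_ne {f : Option ℕ} {b d : ℕ}
    (hf : ∀ v, f = some v → ¬ (b = v + 1 ∧ d = v + 1)) (β δ : List ℕ) :
    decTail f (b :: β) (d :: δ) = d :: δ := by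
  cases f with
  | none => rfl
  | some v => rw [decTail, if_neg (hf v rfl)]

section Dominance

variable {α β γ δ : List ℕ}

theorem LeftDom.isReducedWord {Q G : List ℕ} (hD : LeftDom β δ)
    (hs : (G ++ δ).Pairwise (· < ·)) (h : IsReducedWord (Q ++ β ++ G ++ δ)) :
    IsReducedWord (Q ++ G) := by
  induction hD generalizing Q G with
  | nil δ => exact IsReducedWord.of_append_left (v := δ) (by simpa using h)
  | @cons b d β δ hdb _ ih =>
    have hG : IsReducedWord (Q ++ [b] ++ (G ++ [d])) := ih (by simpa using hs) (by simpa using h)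
    refine IsReducedWord.append_of_slide (b := b) (d := d) ?_ hdb (by simpa using hG)
    exact hs.sublist (by simp)

theorem LeftDom.cons_right (hD : LeftDom β δ) {s : ℕ} (hs : (s :: δ).Pairwise (· < ·)) :
    LeftDom β (s :: δ) := by
  induction hD generalizing s with
  | nil => exact .nil _
  | @cons b d β δ hdb _ ih =>
    exact .cons ((rel_of_pairwise_cons hs mem_cons_self).le.trans hdb) (ih hs.of_cons)

theorem RightDom.concat_left (h : RightDom α γ) {x : ℕ} (hs : γ.Pairwise (· < ·))
    (hx : ∀ c ∈ γ, c < x) : RightDom (α ++ [x]) γ := by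
  induction h generalizing x with
  | nil α => exact .nil _
  | @concat α γ a c _ hca ih =>
    rw [pairwise_lt_concat] at hs
    exact .concat (ih hs.1 fun y hy => (hs.2 y hy).trans_le hca) (hx c mem_concat_self).le

theorem RightDom.ckRel {x : ℕ} (h : RightDom α γ) (hα : (α ++ [x]).Pairwise (· < ·))
    (hγ : γ.Pairwise (· < ·)) (hr : IsReducedWord (α ++ γ)) :
    CKRel (α ++ γ ++ [x]) (α ++ [x] ++ γ) := by
  induction h generalizing x with
  | nil α => simpa using CKRel.refl _
  | @concat α γ a c _ hca ih =>
    rw [pairwise_lt_concat] at hα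
    have hax : a < x := hα.2 a mem_concat_self
    have hαγ : IsReducedWord (α ++ γ) := .append_of_slide (b := a) hγ hca (by simpa using hr)
    have hmove := ih hα.1 (pairwise_lt_concat.1 hγ).1 hαγ
    have hca' : c < a := by
      refine hca.lt_of_ne fun e => IsReducedWord.not_square (a := a) ?_
      have := (hmove.symm.append_right [c]).isReducedWord (by simpa using hr)
      exact IsReducedWord.of_append_right (u := α ++ γ) (by simpa [e] using this)
    have hout : CKRel (α ++ [a] ++ γ ++ [c, x]) (α ++ γ ++ [a] ++ [c, x]) :=
      hmove.symm.append_right _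
    have hswap : CKRel (α ++ γ ++ [a] ++ [c, x]) (α ++ γ ++ [a, x, c]) := by
      simpa using CKRel.step (CKStep.knuth₁ hca' hax) (α ++ γ) []
    have hin : CKRel (α ++ γ ++ [a, x, c]) (α ++ [a] ++ γ ++ [x, c]) := by
      simpa using hmove.append_right [x, c]
    have hslide : CKRel (γ ++ [x, c]) (x :: (γ ++ [c])) :=
      (CKRel.slide_row hγ (hca'.trans hax)).symm
    simpa using hout.trans (hswap.trans (hin.trans (by simpa using hslide.append_left (α ++ [a]))))

end Dominance

section Tail

variable {β δ P P' G G' : List ℕ} {g : ℕ}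

theorem ckRel_step {b d : ℕ} (hdb : d ≤ b) (hG : (G ++ [g] ++ [d]).Pairwise (· < ·))
    (hG' : (G' ++ [g] ++ [d]).Pairwise (· < ·)) (h : CKRel (P ++ (G ++ [g])) (P' ++ (G' ++ [g])))
    (hr : IsReducedWord (P ++ [b] ++ (G ++ [g] ++ [d]))) :
    CKRel (P ++ [b] ++ (G ++ [g] ++ [d])) (P' ++ [b] ++ (G' ++ [g] ++ [d])) := by
  obtain ⟨w, hw⟩ := exists_ckRel_append hdb hG
    (IsReducedWord.of_append_right (u := P) (by simpa using hr))
  have hout := (hw G hG).append_left P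
  have hin := ((hw G' hG').append_left P').symm
  have hmid := h.append_right w
  simp only [append_assoc, cons_append, nil_append] at hout hin hmid ⊢
  exact hout.trans (hmid.trans hin)

theorem LeftDom.ckRel_append (hD : LeftDom β δ) (hG : (G ++ [g] ++ δ).Pairwise (· < ·))
    (hG' : (G' ++ [g] ++ δ).Pairwise (· < ·)) (h : CKRel (P ++ (G ++ [g])) (P' ++ (G' ++ [g])))
    (hr : IsReducedWord (P ++ β ++ (G ++ [g]) ++ δ)) :
    CKRel (P ++ β ++ (G ++ [g]) ++ δ) (P' ++ β ++ (G' ++ [g]) ++ δ) := by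
  induction hD generalizing P P' G G' g with
  | nil δ => simpa using h.append_right δ
  | @cons b d β δ hdb hD ih =>
    have hr' : IsReducedWord (P ++ [b] ++ (G ++ [g] ++ [d])) :=
      hD.isReducedWord (by simpa using hG) (by simpa using hr)
    have hstep := ckRel_step hdb (hG.sublist (by simp)) (hG'.sublist (by simp)) h hr'
    simpa using ih (by simpa using hG) (by simpa using hG') hstep (by simpa using hr)

theorem LeftDom.ckRel_decTail (hD : LeftDom β δ) (hG : (G ++ [g] ++ δ).Pairwise (· < ·))
    (hG' : (G' ++ [g]).Pairwise (· < ·)) (h : CKRel (P ++ (G ++ [g])) (P' ++ G'))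
    (hr : IsReducedWord (P ++ β ++ (G ++ [g]) ++ δ)) :
    CKRel (P ++ β ++ (G ++ [g]) ++ δ) (P' ++ β ++ G' ++ decTail (some g) β δ) := by
  induction hD generalizing P P' G G' g with
  | nil δ => simpa [decTail_nil_left] using h.append_right δ
  | @cons b d β δ hdb hD ih =>
    have hr' : IsReducedWord (P ++ [b] ++ (G ++ [g] ++ [d])) :=
      hD.isReducedWord (by simpa using hG) (by simpa using hr)
    have hGd : (G ++ [g] ++ [d]).Pairwise (· < ·) := hG.sublist (by simp)
    obtain ⟨hG'd, hGg⟩ := pairwise_lt_concat.1 hG'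
    have hgd : g < d := (pairwise_lt_concat.1 hGd).2 g mem_concat_self
    rcases hdb.lt_or_eq with hdb | rfl
    · have hG'd : (G' ++ [d]).Pairwise (· < ·) :=
        pairwise_lt_concat.2 ⟨hG'd, fun a ha => (hGg a ha).trans hgd⟩
      have hout := (CKRel.slide_row hGd hdb).append_left P
      have hin := ((CKRel.slide_row hG'd hdb).append_left P').symm
      have hstep : CKRel (P ++ [b] ++ (G ++ [g] ++ [d])) (P' ++ [b] ++ (G' ++ [d])) := by
        have hmid := h.append_right [b, d]
        simp only [append_assoc, cons_append, nil_append] at hout hin hmid ⊢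
        exact hout.trans (hmid.trans hin)
      have hG'δ : (G' ++ [d] ++ δ).Pairwise (· < ·) := by
        simp_all [pairwise_append]
        grind
      have hne : decTail (some g) (b :: β) (d :: δ) = d :: δ :=
        decTail_cons_of_forall_ne (by grind) β δ
      simpa [hne] using hD.ckRel_append (by simpa using hG) hG'δ hstep (by simpa using hr)
    · obtain ⟨_, v, hv, rfl⟩ := exists_eq_concat_pred hGd
        (IsReducedWord.of_append_right (u := P) (by simpa using hr'))
      obtain rfl : g = v := by simpa using (append_inj' hv rfl).2
      have hG'v : (G' ++ [g] ++ [g + 1]).Pairwise (· < ·) :=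
        pairwise_lt_concat.2 ⟨hG', fun a ha => by grind⟩
      have hout := (CKRel.slide_row_braid (pairwise_lt_concat.1 hGd).1).append_left P
      have hin := ((CKRel.slide_row hG' g.lt_succ_self).append_left P').symm
      have hstep :
          CKRel (P ++ [g + 1] ++ (G ++ [g] ++ [g + 1])) (P' ++ [g + 1] ++ (G' ++ [g])) := by
        have hmid := h.append_right [g + 1, g]
        simp only [append_assoc, cons_append, nil_append] at hout hin hmid ⊢
        exact hout.trans (hmid.trans hin)
      simpa [decTail] using ih (by simpa using hG) hG'v hstep (by simpa using hr)

end Tail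

namespace RowLift

variable {τ σ τ' σ' : List ℕ} {f : Option ℕ}

theorem rightDom (h : RowLift τ σ τ' σ' f) (hτ : τ.Pairwise (· < ·)) (hσ : σ.Pairwise (· < ·)) :
    RightDom τ' σ' := by
  induction h with
  | base τ => exact .nil _
  | insert h _ ih =>
    rw [pairwise_lt_concat] at hσ
    refine (ih hτ hσ.1).concat_left (h.pairwise_bottom hσ.1) fun c hc => ?_
    obtain ⟨u, hu, hcu⟩ := h.exists_le hc
    exact hcu.trans_lt (hσ.2 u hu)
  | dec _ ih =>
    exact .concat (ih (pairwise_lt_concat.1 hτ).1 (pairwise_lt_concat.1 hσ).1) (Nat.le_succ _)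
  | keep _ hts _ ih =>
    exact .concat (ih (pairwise_lt_concat.1 hτ).1 (pairwise_lt_concat.1 hσ).1) hts

theorem ckRel_insert {β δ : List ℕ} {t s : ℕ} (h : RowLift (τ ++ [t]) σ τ' σ' f) (hts : t < s)
    (hD : LeftDom β δ) (hτ : (τ ++ [t]).Pairwise (· < ·)) (hσ : (σ ++ s :: δ).Pairwise (· < ·))
    (hr : IsReducedWord (τ' ++ β ++ (σ' ++ [s]) ++ δ)) :
    CKRel (τ' ++ β ++ (σ' ++ [s]) ++ δ) (τ' ++ [s] ++ β ++ σ' ++ decTail (some s) β δ) := by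
  have hσs : (σ ++ [s]).Pairwise (· < ·) := hσ.sublist (by simp)
  have hσ₁ : σ.Pairwise (· < ·) := (pairwise_lt_concat.1 hσs).1
  have hσ' : (σ' ++ [s]).Pairwise (· < ·) := by
    refine pairwise_lt_concat.2 ⟨h.pairwise_bottom hσ₁, fun c hc => ?_⟩
    obtain ⟨u, hu, hcu⟩ := h.exists_le hc
    exact hcu.trans_lt ((pairwise_lt_concat.1 hσs).2 u hu)
  have hσδ : (σ' ++ [s] ++ δ).Pairwise (· < ·) := by
    simp_all [pairwise_append]
    grind
  have hred : IsReducedWord (τ' ++ σ') :=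
    IsReducedWord.of_append_left (v := [s]) (by simpa using hD.isReducedWord hσδ hr)
  have hmove : CKRel (τ' ++ (σ' ++ [s])) (τ' ++ [s] ++ σ') := by
    rw [← append_assoc]
    exact (h.rightDom hτ hσ₁).ckRel ((h.insert hts).pairwise_top hτ hσs)
      (h.pairwise_bottom hσ₁) hred
  exact hD.ckRel_decTail hσδ hσ' hmove hr

theorem ckRel_decTail {β δ : List ℕ} (h : RowLift τ σ τ' σ' f) (hD : LeftDom β δ)
    (hτ : (τ ++ β).Pairwise (· < ·)) (hσ : (σ ++ δ).Pairwise (· < ·))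
    (hr : IsReducedWord (τ ++ β ++ σ ++ δ)) :
    CKRel (τ ++ β ++ σ ++ δ) (τ' ++ β ++ σ' ++ decTail f β δ) := by
  induction h generalizing β δ with
  | base τ => simpa [decTail_none] using CKRel.refl _
  | @insert τ σ τ' σ' t s f h hts ih =>
    have hsδ : (s :: δ).Pairwise (· < ·) := by simp_all [pairwise_append]
    have hD' := hD.cons_right hsδ
    have hne : decTail f β (s :: δ) = s :: δ := by
      cases hD with
      | nil => exact decTail_nil_left _ _
      | cons => exact decTail_cons_of_forall_ne (by grind) _ _
    have hcol : CKRel (τ ++ [t] ++ β ++ (σ ++ [s]) ++ δ) (τ' ++ β ++ (σ' ++ [s]) ++ δ) := by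
      simpa [hne] using ih hD' hτ (by simpa using hσ) (by simpa using hr)
    exact hcol.trans (h.ckRel_insert hts hD (pairwise_append.1 hτ).1 (by simpa using hσ)
      (hcol.isReducedWord hr))
  | @dec _ _ _ _ v _ ih =>
    have := ih (.cons (le_refl (v + 1)) hD) (by simpa using hτ) (by simpa using hσ)
      (by simpa using hr)
    simpa [decTail] using this
  | keep _ hts hf ih =>
    have := ih (.cons hts hD) (by simpa using hτ) (by simpa using hσ) (by simpa using hr)
    simpa [decTail_none, decTail_cons_of_forall_ne hf] using this

theorem ckRel (h : RowLift τ σ τ' σ' f) (hτ : τ.Pairwise (· < ·)) (hσ : σ.Pairwise (· < ·))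
    (hr : IsReducedWord (τ ++ σ)) : CKRel (τ ++ σ) (τ' ++ σ') := by
  simpa [decTail_nil_left] using
    h.ckRel_decTail (.nil []) (by simpa using hτ) (by simpa using hσ) (by simpa using hr)

end RowLift

/-! ### Lifting two rows of a Young tableau -/

section

variable {σ ω : List ℕ} {s : ℕ}

theorem getD_le_getD_of_sublist (hω : ω <+ σ) (hσ : σ.Pairwise (· < ·)) {q : ℕ}
    (hq : q < ω.length) : σ.getD q 0 ≤ ω.getD q 0 := by
  induction hω generalizing q with
  | slnil => rfl
  | @cons ω σ a hω ih =>
    have hlt := getD_lt_getD hσ q.lt_succ_self (by have := hω.length_le; simp; omega)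
    exact hlt.le.trans (ih hσ.of_cons hq)
  | @cons_cons ω σ a _ ih =>
    cases q with
    | zero => rfl
    | succ q => exact ih hσ.of_cons (by simpa using hq)

theorem getD_concat_le (hσ : (σ ++ [s]).Pairwise (· < ·)) (j : ℕ) : (σ ++ [s]).getD j 0 ≤ s := by
  rcases lt_or_ge j (σ ++ [s]).length with hj | hj
  · have hmem : (σ ++ [s]).getD j 0 ∈ σ ++ [s] := by
      rw [getD_eq_getElem _ _ hj]
      exact getElem_mem hj
    have := (pairwise_lt_concat.1 hσ).2
    grind
  · rw [getD_eq_default _ _ hj]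
    exact Nat.zero_le s

end

namespace YoungPair

variable {σ τ ρ ω : List ℕ} {s t : ℕ}

theorem of_concat (hY : YoungPair (σ ++ [s]) (τ ++ [t])) : YoungPair σ τ := by
  obtain ⟨hlen, hcol⟩ := hY
  refine ⟨by simpa using hlen, fun j hj => ?_⟩
  have := hcol j
  grind

theorem of_concat_of_lt (hY : YoungPair (σ ++ [s]) (τ ++ [t])) (hts : t < s) :
    YoungPair σ (τ ++ [t]) := by
  obtain ⟨hlen, hcol⟩ := hY
  have hlast := hcol τ.length
  have hlen : (τ ++ [t]).length ≤ σ.length := by grind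
  refine ⟨hlen, fun j hj => ?_⟩
  have := hcol j
  grind

theorem of_sublist (hω : ω <+ σ) (hσ : σ.Pairwise (· < ·)) (hY : YoungPair ω τ) :
    YoungPair σ τ := by
  refine ⟨hY.1.trans hω.length_le, fun j hj => lt_of_le_of_lt ?_ (hY.2 j hj)⟩
  exact getD_le_getD_of_sublist hω hσ (hj.trans_le hY.1)

theorem of_forall₂ (h : Forall₂ (· < ·) σ τ) : YoungPair σ τ := by
  refine ⟨h.length_eq.ge, fun j hj => ?_⟩
  have := h.get (h.length_eq ▸ hj) hj
  simpa [hj, h.length_eq ▸ hj] using this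

end YoungPair

namespace RowLift

variable {τ σ τ' σ' ω : List ℕ} {f : Option ℕ}

theorem forall₂_bottom_le_top (h : RowLift τ σ τ' σ' f) (hY : YoungPair σ τ) :
    Forall₂ (· ≤ ·) σ τ' := by
  induction h with
  | base τ => simpa using hY.1
  | insert _ hts ih => exact rel_append (ih (hY.of_concat_of_lt hts)) (by simp)
  | dec _ ih => exact rel_append (ih hY.of_concat) (by simp)
  | keep _ hts _ ih => exact rel_append (ih hY.of_concat) (by simpa)

theorem length_top (h : RowLift τ σ τ' σ' f) (hY : YoungPair σ τ) : τ'.length = σ.length :=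
  (h.forall₂_bottom_le_top hY).length_eq.symm

theorem length_bottom (h : RowLift τ σ τ' σ' f) (hY : YoungPair σ τ) : σ'.length = τ.length := by
  have := h.length_add_length
  have := h.length_top hY
  omega

theorem take_isPrefix_top_concat {t s a k : ℕ} (h : RowLift τ σ τ' σ' f)
    (hY : YoungPair (σ ++ [s]) (τ ++ [t])) (hσ : (σ ++ [s]).Pairwise (· < ·)) (hst : s ≤ t)
    (hk : k < (τ ++ [t]).length) (hlt : (τ ++ [t]).getD k 0 < (σ ++ [s]).getD (k + 1) 0)
    (ih : k < τ.length → k + 1 < σ.length → τ.getD k 0 < σ.getD (k + 1) 0 →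
      τ.take (k + 1) <+: τ') : (τ ++ [t]).take (k + 1) <+: τ' ++ [a] := by
  have hkτ : k < τ.length := by grind [getD_concat_le hσ (k + 1)]
  have hYm := hY.of_concat
  rw [take_append_of_le_length hkτ]
  refine IsPrefix.trans ?_ (prefix_append _ _)
  by_cases hlen : k + 1 < σ.length
  · exact ih hkτ hlen (by grind)
  · have := h.eq_of_length_eq (by grind [h.length_top hYm, hYm.1])
    simp [this.1, take_prefix]

theorem take_isPrefix_top {k : ℕ} (h : RowLift τ σ τ' σ' f) (hY : YoungPair σ τ)
    (hσ : σ.Pairwise (· < ·)) (hk : k < τ.length) (hkσ : k + 1 < σ.length)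
    (hlt : τ.getD k 0 < σ.getD (k + 1) 0) : τ.take (k + 1) <+: τ' := by
  induction h with
  | base => simp at hkσ
  | @insert τ σ τ' σ' t s _ h hts ih =>
    have hY' := hY.of_concat_of_lt hts
    refine IsPrefix.trans ?_ (prefix_append _ _)
    by_cases hlen : k + 1 < σ.length
    · exact ih hY' (pairwise_lt_concat.1 hσ).1 hk hlen (by grind)
    · have := h.eq_of_length_eq (by grind [h.length_top hY', hY'.1])
      simp [this.1, take_prefix]
  | dec h ih =>
    exact h.take_isPrefix_top_concat hY hσ le_rfl hk hlt
      (ih hY.of_concat (pairwise_lt_concat.1 hσ).1)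
  | keep h hts _ ih =>
    exact h.take_isPrefix_top_concat hY hσ hts hk hlt
      (ih hY.of_concat (pairwise_lt_concat.1 hσ).1)

theorem flag_eq_some {v : ℕ} {σ₀ : List ℕ} (h : RowLift τ σ τ' σ' f) (hσ₀ : σ = σ₀ ++ [v])
    (hle : ∀ t ∈ τ, t ≤ v) (hlen : τ.length < σ.length) (hτ : τ.Pairwise (· < ·))
    (hσ : σ.Pairwise (· < ·)) (hr : IsReducedWord (τ ++ σ)) : f = some v := by
  induction h generalizing v σ₀ with
  | base => simp at hlen
  | insert => rw [(append_singleton_inj.1 hσ₀).2]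
  | dec => rw [(append_singleton_inj.1 hσ₀).2]
  | @keep τ σ τ' σ' t s f h hts hf ih =>
    obtain ⟨rfl, rfl⟩ : σ = σ₀ ∧ s = v := append_singleton_inj.1 hσ₀
    obtain rfl : t = s := (hle t (by simp)).antisymm hts
    obtain ⟨hτ', hτt⟩ := pairwise_lt_concat.1 hτ
    obtain ⟨G, w, rfl, rfl⟩ := exists_eq_concat_pred hσ
      (IsReducedWord.of_append_right (u := τ) (by simpa using hr))
    exact absurd ⟨rfl, rfl⟩ (hf w (ih rfl (fun a ha => Nat.lt_succ_iff.1 (hτt a ha))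
      (by simpa using hlen) hτ' (pairwise_lt_concat.1 hσ).1
      (IsReducedWord.append_of_slide hσ le_rfl (by simpa using hr))))

/-- If the last letters agree but are not decremented, the letter of `σ` before the last one is
their predecessor, and the flag must point to it. -/
theorem forall₂_bottom_lt (h : RowLift τ σ τ' σ' f) (hY : YoungPair σ τ)
    (hτ : τ.Pairwise (· < ·)) (hσ : σ.Pairwise (· < ·)) (hr : IsReducedWord (τ ++ σ)) :
    Forall₂ (· < ·) σ' τ := by
  induction h with
  | base => simpa using hY.1
  | insert _ hts ih =>
    exact ih (hY.of_concat_of_lt hts) hτ (pairwise_lt_concat.1 hσ).1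
      (IsReducedWord.of_append_left (v := [_]) (by simpa using hr))
  | dec _ ih =>
    have hr' := IsReducedWord.append_of_slide hσ le_rfl (by simpa using hr)
    exact rel_append (ih hY.of_concat (pairwise_lt_concat.1 hτ).1 (pairwise_lt_concat.1 hσ).1 hr')
      (by simp)
  | @keep τ σ τ' σ' t s f h hts hf ih =>
    have hr' := IsReducedWord.append_of_slide hσ hts (by simpa using hr)
    have ih := ih hY.of_concat (pairwise_lt_concat.1 hτ).1 (pairwise_lt_concat.1 hσ).1 hr'
    suffices hne : s ≠ t from rel_append ih (by simpa using hts.lt_of_ne hne)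
    rintro rfl
    obtain ⟨hτ', hτt⟩ := pairwise_lt_concat.1 hτ
    obtain ⟨G, w, rfl, rfl⟩ := exists_eq_concat_pred hσ
      (IsReducedWord.of_append_right (u := τ) (by simpa using hr))
    refine hf w (h.flag_eq_some rfl (fun a ha => Nat.lt_succ_iff.1 (hτt a ha)) ?_ hτ'
      (pairwise_lt_concat.1 hσ).1 hr') ⟨rfl, rfl⟩
    by_contra! hle
    have hlt := hY.2 τ.length (by simp)
    rw [getD_append_right _ _ _ _ hle, getD_append_right _ _ _ _ le_rfl,
      hle.antisymm hY.of_concat.1] at hlt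
    simp at hlt

theorem youngPair_bottom (h : RowLift τ σ τ' σ' f) (hY : YoungPair σ τ)
    (hτ : τ.Pairwise (· < ·)) (hσ : σ.Pairwise (· < ·)) (hr : IsReducedWord (τ ++ σ)) :
    YoungPair σ' τ :=
  .of_forall₂ (h.forall₂_bottom_lt hY hτ hσ hr)

theorem getD_le_getD_bottom_concat {t s a q : ℕ} (h : RowLift τ σ τ' σ' f)
    (hω : ω <+ σ ++ [s]) (hσ : (σ ++ [s]).Pairwise (· < ·))
    (hY : YoungPair ω (τ ++ [t])) (ha : a = s ∨ a + 1 = t) (hq : q < (τ ++ [t]).length)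
    (ih : ∀ ω, ω <+ σ → YoungPair ω τ → q < τ.length → ω.getD q 0 ≤ σ'.getD q 0) :
    ω.getD q 0 ≤ (σ' ++ [a]).getD q 0 := by
  obtain rfl | ⟨ω, b, rfl⟩ := eq_nil_or_concat ω
  · simp
  rw [concat_eq_append] at *
  have hω' : ω <+ σ := by simpa using hω.reverse.tail.reverse
  have hYm := hY.of_concat
  have hlen := h.length_bottom (hYm.of_sublist hω' (pairwise_lt_concat.1 hσ).1)
  by_cases hqτ : q < τ.length
  · have := ih ω hω' hYm hqτ
    have := hYm.1
    grind
  · obtain rfl : q = τ.length := by grind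
    have hlt := hY.2 τ.length hq
    have hmem : (ω ++ [b]).getD τ.length 0 ∈ σ ++ [s] :=
      hω.subset (by have := hY.1; grind)
    have hσmax := (pairwise_lt_concat.1 hσ).2
    have hτlast : (τ ++ [t]).getD τ.length 0 = t := by simp
    have hσlast : (σ' ++ [a]).getD τ.length 0 = a := by simp [← hlen]
    grind

theorem getD_le_getD_bottom {q : ℕ} (h : RowLift τ σ τ' σ' f) (hω : ω <+ σ)
    (hσ : σ.Pairwise (· < ·)) (hY : YoungPair ω τ) (hq : q < τ.length) :
    ω.getD q 0 ≤ σ'.getD q 0 := by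
  induction h generalizing ω with
  | base => simp_all [YoungPair]
  | @insert τ σ _ σ' t s _ _ hts ih =>
    obtain ⟨ω₀, ω₁, rfl, hω₀, hω₁⟩ := sublist_append_iff.1 hω
    obtain rfl | rfl : ω₁ = [] ∨ ω₁ = [s] := by simpa using hω₁
    · exact ih (by simpa using hω₀) (pairwise_lt_concat.1 hσ).1 (by simpa using hY) hq |>.trans'
        (by simp)
    · have hY' := hY.of_concat_of_lt hts
      rw [getD_append _ _ _ _ (hq.trans_le hY'.1)]
      exact ih hω₀ (pairwise_lt_concat.1 hσ).1 hY' hq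
  | dec h ih =>
    exact h.getD_le_getD_bottom_concat hω hσ hY (.inr rfl) hq fun ω hω =>
      ih hω (pairwise_lt_concat.1 hσ).1
  | keep h _ _ ih =>
    exact h.getD_le_getD_bottom_concat hω hσ hY (.inl rfl) hq fun ω hω =>
      ih hω (pairwise_lt_concat.1 hσ).1

/-- `ω` is the row below the row `τ` before the previous lift turned it into `σ`. -/
theorem youngPair_bottom_of_sublist {ρ : List ℕ} (h : RowLift τ σ τ' σ' f) (hω : ω <+ σ)
    (hσ : σ.Pairwise (· < ·)) (hY : YoungPair ω τ) (hρ : YoungPair ρ ω) : YoungPair ρ σ' := by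
  have hlen := h.length_bottom (hY.of_sublist hω hσ)
  refine ⟨?_, fun j hj => ?_⟩
  · rw [hlen]; exact hY.1.trans hρ.1
  · rw [hlen] at hj
    exact (hρ.2 j (hj.trans_le hY.1)).trans_le (h.getD_le_getD_bottom hω hσ hY hj)

end RowLift

theorem YoungPair.liftOkAux_reverse {σ τ : List ℕ} {n : ℕ} (hY : YoungPair σ τ) (hn : σ.length < n)
    (hσ : σ.Pairwise (· < ·)) (hτσ : τ.length = σ.length ∨
      ∃ k < τ.length, k + 1 < σ.length ∧ τ.getD k 0 < σ.getD (k + 1) 0) :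
    liftOkAux n τ.reverse σ.reverse := by
  induction σ using List.reverseRecOn generalizing τ n with
  | nil => simp [liftOkAux_nil_right]
  | append_singleton σ s ih =>
    obtain ⟨n, rfl⟩ : ∃ m, n = m + 1 := ⟨n - 1, by omega⟩
    obtain rfl | ⟨τ, t, rfl⟩ := eq_nil_or_concat τ
    · simp at hτσ
    simp only [concat_eq_append, reverse_append, reverse_singleton, singleton_append] at *
    have hσ' := (pairwise_lt_concat.1 hσ).1
    rcases le_or_gt s t with hst | hts
    · rw [liftOkAux_cons_of_le _ hst]
      refine ih hY.of_concat (by grind) hσ' ?_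
      obtain hlen | ⟨k, hk, hkσ, hlt⟩ := hτσ
      · exact .inl (by simpa using hlen)
      refine or_iff_not_imp_left.2 fun hne => ⟨k, ?_⟩
      have := hY.1
      have := getD_concat_le hσ (k + 1)
      grind
    · have hY' := hY.of_concat_of_lt hts
      rw [liftOkAux_cons_of_lt _ hts]
      have := ih hY' (n := n) (by grind) hσ'
      rw [reverse_append, reverse_singleton, singleton_append] at this
      refine this (or_iff_not_imp_left.2 fun hne => ?_)
      have := hY'.1
      obtain hlen | ⟨k, hk, _, hlt⟩ := hτσ
      · grind
      · have hk' : k + 1 < σ.length := by grind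
        exact ⟨k, hk, hk', by rwa [getD_append _ _ _ _ hk'] at hlt⟩

/-! ### Lifting sequences -/

section LiftAt

variable {A X Y R T : List (List ℕ)} {σ τ : List ℕ} {k : ℕ}

theorem liftAt_append (h : k < X.length) : liftAt k (X ++ Y) = liftAt k X ++ Y := by
  induction k using Nat.twoStepInduction generalizing X with
  | zero => simp [liftAt]
  | one =>
    obtain _ | ⟨a, _ | ⟨b, X⟩⟩ := X
    all_goals simp_all [liftAt]
  | more k _ ih =>
    obtain _ | ⟨a, X⟩ := X
    · simp at h
    · simp [liftAt, ih (X := X) (Nat.lt_of_succ_lt_succ h)]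

theorem liftAt_eq_self_of_length_le (h : T.length ≤ k) : liftAt k T = T := by
  induction k using Nat.twoStepInduction generalizing T with
  | zero => simp [liftAt]
  | one =>
    obtain _ | ⟨a, _ | ⟨b, T⟩⟩ := T
    all_goals simp_all [liftAt]
  | more k _ ih =>
    obtain _ | ⟨a, T⟩ := T
    · rfl
    · simp [liftAt, ih (T := T) (by simpa using h)]

theorem liftAt_length_add_one : liftAt (A.length + 1) (A ++ σ :: τ :: R) =
    A ++ (liftPair τ σ).2 :: (liftPair τ σ).1 :: R := by
  induction A with
  | nil => simp [liftAt]
  | cons a A ih => simp [liftAt, ih]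

theorem exists_of_liftAt_ne (h : liftAt k T ≠ T) :
    ∃ A σ τ R, T = A ++ σ :: τ :: R ∧ k = A.length + 1 := by
  obtain _ | k := k
  · simp [liftAt] at h
  have hk : k + 1 < T.length := not_le.1 fun hle => h (liftAt_eq_self_of_length_le hle)
  refine ⟨T.take k, T[k], T[k + 1], T.drop (k + 2), ?_, by simp; omega⟩
  rw [← drop_eq_getElem_cons, ← drop_eq_getElem_cons, take_append_drop]

theorem exists_rowLift_of_liftAt_ne (h : liftAt k T ≠ T) :
    ∃ A σ τ R τ' σ' f, T = A ++ σ :: τ :: R ∧ k = A.length + 1 ∧ RowLift τ σ τ' σ' f ∧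
      liftAt k T = A ++ σ' :: τ' :: R ∧ τ.length < τ'.length := by
  obtain ⟨A, σ, τ, R, rfl, rfl⟩ := exists_of_liftAt_ne h
  rw [liftAt_length_add_one] at h ⊢
  have hne : liftPair τ σ ≠ (τ, σ) := fun heq => h (by rw [heq])
  obtain ⟨f, hf⟩ := exists_rowLift_of_ne hne
  refine ⟨A, σ, τ, R, _, _, f, rfl, rfl, hf, rfl, hf.sublist.length_le.lt_of_ne fun hlen => ?_⟩
  obtain ⟨h₁, h₂, -⟩ := hf.eq_of_length_eq hlen.symm
  exact hne (Prod.ext h₁ h₂)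

end LiftAt

/-- An increasing key tableau: the rows, listed from bottom to top, are nonempty and increasing,
the first column is increasing, and the row reading word is reduced. Unlike for increasing Young
tableaux, there is no condition on the shape. -/
structure IsKeyTableau (T : List (List ℕ)) : Prop where
  ne_nil : ∀ r ∈ T, r ≠ []
  pairwise_row : ∀ r ∈ T, r.Pairwise (· < ·)
  pairwise_head : (T.map (headD · 0)).Pairwise (· < ·)
  isReducedWord : IsReducedWord (wordOf T)

theorem IsKeyTableau.left {X Y : List (List ℕ)} (h : IsKeyTableau (X ++ Y)) : IsKeyTableau X where
  ne_nil r hr := h.ne_nil r (by simp [hr])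
  pairwise_row r hr := h.pairwise_row r (by simp [hr])
  pairwise_head := (pairwise_append.1 (by simpa using h.pairwise_head)).1
  isReducedWord := IsReducedWord.of_append_right (by simpa [wordOf_append] using h.isReducedWord)

theorem wordOf_append_cons_cons (A : List (List ℕ)) (σ τ : List ℕ) (R : List (List ℕ)) :
    wordOf (A ++ σ :: τ :: R) = wordOf R ++ (τ ++ σ) ++ wordOf A := by
  simp [wordOf]

theorem headD_eq_of_head?_eq {l m : List ℕ} (h : l.head? = m.head?) :
    l.headD 0 = m.headD 0 := by
  simp [headD_eq_head?_getD, h]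

/-- `T'` is an increasing key tableau with the same Coxeter–Knuth class and the same first column
as `T`. Lifting preserves both. -/
structure LiftEquiv (T T' : List (List ℕ)) : Prop where
  isKeyTableau : IsKeyTableau T'
  ckRel : CKRel (wordOf T) (wordOf T')
  map_headD : T'.map (headD · 0) = T.map (headD · 0)

namespace LiftEquiv

variable {T T' T'' : List (List ℕ)}

theorem refl (hT : IsKeyTableau T) : LiftEquiv T T := ⟨hT, .refl _, rfl⟩

theorem trans (h : LiftEquiv T T') (h' : LiftEquiv T' T'') : LiftEquiv T T'' :=
  ⟨h'.isKeyTableau, h.ckRel.trans h'.ckRel, h'.map_headD.trans h.map_headD⟩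

theorem length_eq (h : LiftEquiv T T') : T'.length = T.length := by
  simpa using congrArg length h.map_headD

end LiftEquiv

theorem RowLift.liftEquiv {A R : List (List ℕ)} {σ τ τ' σ' : List ℕ} {f : Option ℕ}
    (h : RowLift τ σ τ' σ' f) (hT : IsKeyTableau (A ++ σ :: τ :: R)) :
    LiftEquiv (A ++ σ :: τ :: R) (A ++ σ' :: τ' :: R) := by
  obtain ⟨hne, hrow, hhead, hred⟩ := hT
  have hτ := hrow τ (by simp)
  have hσ := hrow σ (by simp)
  have hτ0 := hne τ (by simp)
  have hσ0 := hne σ (by simp)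
  have hck : CKRel (wordOf (A ++ σ :: τ :: R)) (wordOf (A ++ σ' :: τ' :: R)) := by
    rw [wordOf_append_cons_cons] at hred ⊢
    rw [wordOf_append_cons_cons]
    exact (h.ckRel hτ hσ hred.factor).append _ _
  have hlt : σ.headD 0 < τ.headD 0 := by
    simp only [map_append, map_cons, pairwise_append, pairwise_cons] at hhead
    exact hhead.2.1.1 _ (by simp)
  obtain ⟨hτ', hσ'⟩ := h.head?_eq hτ (by cases τ <;> cases σ <;> simp_all)
  have heads : (A ++ σ' :: τ' :: R).map (headD · 0) = (A ++ σ :: τ :: R).map (headD · 0) := by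
    simp only [map_append, map_cons, headD_eq_of_head?_eq hτ', headD_eq_of_head?_eq hσ']
  refine ⟨⟨?_, ?_, heads ▸ hhead, hck.isReducedWord hred⟩, hck, heads⟩
  · have : τ' ≠ [] := by rintro rfl; exact hτ0 (by simpa using hτ'.symm)
    have : σ' ≠ [] := by rintro rfl; exact hσ0 (by simpa using hσ'.symm)
    grind
  · have := h.pairwise_top hτ hσ
    have := h.pairwise_bottom hσ
    grind

theorem IsKeyTableau.liftEquiv_liftAt {T : List (List ℕ)} (hT : IsKeyTableau T) (k : ℕ) :
    LiftEquiv T (liftAt k T) := by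
  by_cases h : liftAt k T = T
  · rw [h]
    exact .refl hT
  · obtain ⟨A, σ, τ, R, τ', σ', f, rfl, -, hf, heq, -⟩ := exists_rowLift_of_liftAt_ne h
    rw [heq]
    exact hf.liftEquiv hT

/-- Apply the `n` maps `lift_i, lift_{i+1}, …, lift_{i+n-1}`; this is `lift_{[i,i+n-1]}`. -/
def liftRun (i : ℕ) : ℕ → List (List ℕ) → List (List ℕ)
  | 0, T => T
  | n + 1, T => liftRun (i + 1) n (liftAt i T)

/-- Each of the maps `lift_i, …, lift_{i+n-1}`, applied successively to `T`, changes the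
tableau. -/
def Faithful (i : ℕ) : ℕ → List (List ℕ) → Prop
  | 0, _ => True
  | n + 1, T => liftAt i T ≠ T ∧ Faithful (i + 1) n (liftAt i T)

theorem liftSeq_eq_liftRun (i j : ℕ) (T : List (List ℕ)) :
    liftSeq i j T = liftRun i (j + 1 - i) T := by
  rw [liftSeq]
  generalize j + 1 - i = n
  induction n generalizing i T with
  | zero => rfl
  | succ n ih => rw [range'_succ, foldl_cons, ih, liftRun]

theorem faithfulAux_succ_iff {n i : ℕ} {T : List (List ℕ)} :
    faithfulAux (n + 1) i T ↔ Faithful i (n + 1) T := by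
  induction n generalizing i T with
  | zero => simp [faithfulAux, Faithful]
  | succ n ih =>
    rw [faithfulAux, Faithful, ← ih]
    simp

theorem faithfulSeq_iff {i j : ℕ} {T : List (List ℕ)} :
    faithfulSeq i j T ↔ i ≤ j ∧ Faithful i (j + 1 - i) T := by
  rw [faithfulSeq]
  split_ifs with h
  · rw [Nat.sub_add_comm h, faithfulAux_succ_iff]
    simp [h]
  · simp [h]

section LiftRun

variable {T X Y : List (List ℕ)} {i n : ℕ}

theorem IsKeyTableau.liftEquiv_liftRun (hT : IsKeyTableau T) (i n : ℕ) :
    LiftEquiv T (liftRun i n T) := by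
  induction n generalizing i T with
  | zero => exact .refl hT
  | succ n ih =>
    have := hT.liftEquiv_liftAt i
    exact this.trans (ih this.isKeyTableau _)

theorem length_liftAt (k : ℕ) (T : List (List ℕ)) : (liftAt k T).length = T.length := by
  by_cases h : liftAt k T = T
  · rw [h]
  · obtain ⟨A, σ, τ, R, rfl, rfl⟩ := exists_of_liftAt_ne h
    simp [liftAt_length_add_one]

theorem liftRun_append (h : i + n ≤ X.length) : liftRun i n (X ++ Y) = liftRun i n X ++ Y := by
  induction n generalizing i X with
  | zero => rfl
  | succ n ih => rw [liftRun, liftAt_append (by omega), ih (by rw [length_liftAt]; omega), liftRun]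

theorem faithful_append (h : i + n ≤ X.length) : Faithful i n (X ++ Y) ↔ Faithful i n X := by
  induction n generalizing i X with
  | zero => rfl
  | succ n ih =>
    rw [Faithful, liftAt_append (by omega), ih (by rw [length_liftAt]; omega), Faithful,
      Ne, append_left_inj]

theorem Faithful.add_le_length (h : Faithful i (n + 1) T) : i + (n + 1) ≤ T.length := by
  induction n generalizing i T with
  | zero => exact not_lt.1 fun hlt => h.1 (liftAt_eq_self_of_length_le (by omega))
  | succ n ih =>
    have := ih h.2
    rw [length_liftAt] at this
    omega

end LiftRun

/-! ### Lifts reaching the top row -/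

theorem pos_keyRank_of_lt_length {X : List (List ℕ)} {r : List ℕ} {j : ℕ}
    (h : IsKeyTableau (X ++ [r])) (hj : j < r.length) :
    0 < keyRank j (columnTableau (wordOf (X ++ [r]))) (r.headD 0 - 1) := by
  obtain _ | ⟨x, s⟩ := r
  · simp at hj
  have hred : IsReducedWord (x :: s ++ columnWord (columnTableau (wordOf X))) := by
    have := h.isReducedWord
    rw [wordOf_append, wordOf_singleton] at this
    exact ((ckRel_columnTableau this.of_append_right).append_left _).isReducedWord this
  have hlen := length_le_newColumn (h.pairwise_row _ (by simp)) hred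
  rw [columnTableau_wordOf_concat, insertWord_cons]
  exact keyRank_insertLetter_pred_pos hred.insertWord
    (hlen.trans' (Nat.le_of_lt_succ hj))

theorem LiftEquiv.headD_eq {X X' : List (List ℕ)} {r r' : List ℕ}
    (h : LiftEquiv (X ++ [r]) (X' ++ [r'])) : r'.headD 0 = r.headD 0 := by
  have := h.map_headD
  rw [map_append, map_append] at this
  simpa using (append_inj' this rfl).2

theorem length_le_of_keyRank_eq_zero {X X' : List (List ℕ)} {r r' : List ℕ} {n : ℕ}
    (hT : IsKeyTableau (X ++ [r])) (h : LiftEquiv (X ++ [r]) (X' ++ [r']))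
    (hn : keyRank n (columnTableau (wordOf (X ++ [r]))) (r.headD 0 - 1) = 0) : r'.length ≤ n := by
  by_contra! hlt
  have := pos_keyRank_of_lt_length h.isKeyTableau hlt
  rw [← h.ckRel.columnTableau_eq hT.isReducedWord, h.headD_eq] at this
  omega

theorem Faithful.exists_top {A C : List (List ℕ)} {σ : List ℕ}
    (h : Faithful (A.length + 1) C.length (A ++ σ :: C)) :
    ∃ A' τ, liftRun (A.length + 1) C.length (A ++ σ :: C) = A' ++ [τ] ∧
      σ.length ≤ τ.length ∧ ∀ r ∈ C, r.length < τ.length := by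
  induction C generalizing A σ with
  | nil => exact ⟨A, σ, rfl, le_rfl, by simp⟩
  | cons τ C ih =>
    obtain ⟨hne, hF⟩ := h
    obtain ⟨A₁, σ₁, τ₁, R, τ', σ', f, heq, hA, hf, hlift, hlt⟩ := exists_rowLift_of_liftAt_ne hne
    obtain ⟨rfl, htail⟩ := append_inj heq (by omega)
    obtain ⟨rfl, rfl, rfl⟩ : σ = σ₁ ∧ τ = τ₁ ∧ C = R := by simpa using htail
    have hsplit : A ++ σ' :: τ' :: C = (A ++ [σ']) ++ τ' :: C := by simp
    have hlen : (A ++ [σ']).length + 1 = A.length + 1 + 1 := by simp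
    rw [hlift, hsplit, ← hlen] at hF
    obtain ⟨A', t, hrun, hτ', hC⟩ := ih hF
    refine ⟨A', t, ?_, hf.length_le.trans hτ', ?_⟩
    · rw [length_cons, liftRun, hlift, hsplit, ← hlen, hrun]
    · simpa using ⟨hlt.trans_le hτ', hC⟩

/-- A faithful lifting sequence ending at the top makes the top row longer than all rows it has
passed, whereas the length of the top row is bounded by the vanishing of the key rank. -/
theorem Faithful.length_lt {V : List (List ℕ)} {r : List ℕ} {i m n : ℕ}
    (hF : Faithful i (m + 1) (V ++ [r])) (hT : IsKeyTableau (V ++ [r])) (hi : i + m = V.length)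
    (hn : keyRank n (columnTableau (wordOf (V ++ [r]))) (r.headD 0 - 1) = 0) :
    ∀ t ∈ (V ++ [r]).drop i, t.length < n := by
  obtain ⟨A, σ, τ, R, heq, rfl⟩ := exists_of_liftAt_ne hF.1
  have hlen := congrArg length heq
  simp only [length_append, length_cons, length_nil] at hlen
  obtain rfl : m = R.length := by omega
  have hequiv := hT.liftEquiv_liftRun (A.length + 1) (R.length + 1)
  obtain ⟨A', t, hrun, -, hlt⟩ := Faithful.exists_top (C := τ :: R) (heq ▸ hF)
  rw [show liftRun (A.length + 1) (R.length + 1) (V ++ [r]) = A' ++ [t] from heq ▸ hrun] at hequiv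
  intro u hu
  exact (hlt u (by simpa [heq, drop_append, drop_of_length_le] using hu)).trans_le
    (length_le_of_keyRank_eq_zero hT hequiv hn)

/-! ### Full rows -/

/-- The row `r`, placed on top of rows whose reading word has column tableau `T`, has the greatest
length compatible with its first letter and the Coxeter–Knuth class of the reading word. -/
def IsFull (T : List (Finset ℕ)) (r : List ℕ) : Prop :=
  keyRank r.length (insertWord r T) (r.headD 0 - 1) = 0

/-- Each row of `U` is full on top of the preceding rows, which start with rows whose reading word
has column tableau `T`. -/
def AllFull : List (Finset ℕ) → List (List ℕ) → Prop
  | _, [] => True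
  | T, r :: U => IsFull T r ∧ AllFull (insertWord r T) U

theorem not_faithful_of_isFull {V : List (List ℕ)} {r : List ℕ} {i n : ℕ}
    (hT : IsKeyTableau (V ++ [r])) (hr : IsFull (columnTableau (wordOf V)) r)
    (hi : i + n = V.length) : ¬ Faithful i (n + 1) (V ++ [r]) := by
  intro hF
  rw [IsFull, ← columnTableau_wordOf_concat] at hr
  have hmem : r ∈ (V ++ [r]).drop i := by simp [drop_append_of_le_length (hi ▸ i.le_add_right n)]
  exact (hF.length_lt hT hi hr r hmem).false

theorem faithfulSeq_eq_false_of_allFull {V U : List (List ℕ)} {i j : ℕ}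
    (hT : IsKeyTableau (V ++ U)) (hU : AllFull (columnTableau (wordOf V)) U)
    (hj : V.length ≤ j) : faithfulSeq i j (V ++ U) = false := by
  rw [Bool.eq_false_iff, Ne, faithfulSeq_iff]
  rintro ⟨hij, hF⟩
  induction U generalizing V with
  | nil =>
    rw [Nat.sub_add_comm hij] at hF
    have := hF.add_le_length
    rw [append_nil] at this
    omega
  | cons r U ih =>
    have hsplit : V ++ r :: U = (V ++ [r]) ++ U := by simp
    rw [hsplit] at hT hF
    obtain rfl | hj := hj.eq_or_lt
    · rw [faithful_append (by simp; omega), Nat.sub_add_comm hij] at hF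
      exact not_faithful_of_isFull hT.left hU.1 (by omega) hF
    · exact ih hT (columnTableau_wordOf_concat V r ▸ hU.2) (by simpa using hj) hF

/-! ### Existence of faithful lifting sequences -/

/-- A certificate that the rows `C` can all be passed by successive lifts starting from a row whose
entry in column `s + 1` is at least `B`. Each lift of `τ` over such a row produces a new row which
dominates the row below and agrees with `τ` up to column `s`. So the column to be inspected next is
either still `s`, or it is some `s' < s`. -/
inductive Pivot : ℕ → ℕ → List (List ℕ) → Prop
  | nil (s B : ℕ) : Pivot s B []
  | same {s B : ℕ} {τ : List ℕ} {C : List (List ℕ)} (hs : s < τ.length) (hB : τ.getD s 0 < B)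
      (h : Pivot s B C) : Pivot s B (τ :: C)
  | shift {s B s' B' : ℕ} {τ : List ℕ} {C : List (List ℕ)} (hs : s < τ.length)
      (hB : τ.getD s 0 < B) (hs' : s' < s) (hB' : B' ≤ τ.getD (s' + 1) 0) (h : Pivot s' B' C) :
      Pivot s B (τ :: C)

theorem Pivot.head {s B : ℕ} {τ : List ℕ} {C : List (List ℕ)} (h : Pivot s B (τ :: C)) :
    s < τ.length ∧ τ.getD s 0 < B := by
  cases h <;> exact ⟨‹_›, ‹_›⟩

theorem Pivot.tail {s B : ℕ} {σ τ τ' σ' : List ℕ} {f : Option ℕ} {C : List (List ℕ)}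
    (h : Pivot s B (τ :: C)) (hf : RowLift τ σ τ' σ' f) (hY : YoungPair σ τ)
    (hσ : σ.Pairwise (· < ·)) (hs : s + 1 < σ.length) (hB : B ≤ σ.getD (s + 1) 0) :
    ∃ s' B', Pivot s' B' C ∧ B' ≤ τ'.getD (s' + 1) 0 ∧ s' + 1 < τ'.length := by
  have hlen := hf.length_top hY
  have hpre := hf.take_isPrefix_top hY hσ h.head.1 hs (h.head.2.trans_le hB)
  obtain hlow := hf.forall₂_bottom_le_top hY
  cases h with
  | same _ _ h =>
    have := forall₂_iff_get.1 hlow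
    exact ⟨s, B, h, by grind, by omega⟩
  | shift hsτ _ hs' hB' h =>
    obtain ⟨t, rfl⟩ := hpre
    exact ⟨_, _, h, by grind, by omega⟩

theorem faithful_of_pivot {A C : List (List ℕ)} {σ ω : List ℕ} {s B : ℕ} (hC : Pivot s B C)
    (hT : IsKeyTableau (A ++ σ :: C)) (hω : ω <+ σ) (hY : (A ++ ω :: C).Pairwise YoungPair)
    (hlen : ∀ r ∈ C, r.length < σ.length) (hs : s + 1 < σ.length) (hB : B ≤ σ.getD (s + 1) 0) :
    Faithful (A.length + 1) C.length (A ++ σ :: C) ∧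
      ∃ A' τ, liftRun (A.length + 1) C.length (A ++ σ :: C) = A' ++ [τ] ∧
        τ.length = σ.length ∧ A'.Pairwise YoungPair := by
  induction C generalizing A σ ω s B with
  | nil => exact ⟨trivial, A, σ, rfl, rfl, (pairwise_append.1 hY).1⟩
  | cons τ C ih =>
    have hσ := hT.pairwise_row σ (by simp)
    have hτ := hT.pairwise_row τ (by simp)
    have hred : IsReducedWord (τ ++ σ) := by
      have := hT.isReducedWord
      rw [wordOf_append_cons_cons] at this
      exact this.factor
    simp only [pairwise_append, pairwise_cons, forall_mem_cons] at hY
    obtain ⟨hA, ⟨⟨hωτ, -⟩, hτC, hYC⟩, hAω⟩ := hY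
    have hστ := hωτ.of_sublist hω hσ
    obtain ⟨f, hf⟩ := exists_rowLift (hστ.liftOkAux_reverse σ.length.lt_succ_self hσ
      (.inr ⟨s, hC.head.1, hs, hC.head.2.trans_le hB⟩))
    have hlift := liftAt_length_add_one (A := A) (σ := σ) (τ := τ) (R := C)
    generalize (liftPair τ σ).1 = τ' at hf hlift
    generalize (liftPair τ σ).2 = σ' at hf hlift
    obtain ⟨s', B', hC', hB', hs'⟩ := hC.tail hf hστ hσ hs hB
    have hτ'len := hf.length_top hστ
    have hsplit : A ++ σ' :: τ' :: C = (A ++ [σ']) ++ τ' :: C := by simp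
    have hsucc : (A ++ [σ']).length + 1 = A.length + 1 + 1 := by simp
    have hσ'τ := hf.youngPair_bottom hστ hτ hσ hred
    have hY' : ((A ++ [σ']) ++ τ :: C).Pairwise YoungPair := by
      simp only [append_assoc, singleton_append, pairwise_append, pairwise_cons, forall_mem_cons]
      exact ⟨hA, ⟨⟨hσ'τ, fun c hc => hσ'τ.trans (hτC c hc)⟩, hτC, hYC⟩, fun r hr =>
        ⟨hf.youngPair_bottom_of_sublist hω hσ hωτ (hAω r hr).1, (hAω r hr).2⟩⟩
    obtain ⟨hF, A', t, hrun, ht, hA'⟩ := ih hC' (hsplit ▸ (hf.liftEquiv hT).isKeyTableau)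
      hf.sublist hY' (fun r hr => by have := hlen r (by simp [hr]); omega) hs' hB'
    rw [← hsplit, hsucc, ← hlift] at hF hrun
    refine ⟨⟨fun heq => ?_, hF⟩, A', t, hrun, by omega, hA'⟩
    obtain ⟨-, rfl, -⟩ : σ' = σ ∧ τ' = τ ∧ True := by simpa [hlift] using heq
    exact (hlen τ' (by simp)).ne hτ'len

section Chain

variable {A C : List (List ℕ)} {τ : List ℕ} {a : ℕ → ℕ} {n q s : ℕ}

theorem le_getD_of_not_mem_above (hY : (A ++ τ :: C).Pairwise YoungPair)
    (hq : ∃ r ∈ A ++ τ :: C, q < r.length ∧ r.getD q 0 = a q)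
    (hC : ∀ r ∈ C, ¬ (q < r.length ∧ r.getD q 0 = a q)) (hτ : q < τ.length) :
    a q ≤ τ.getD q 0 := by
  obtain ⟨r, hr, hqr⟩ := hq
  have hlow := (pairwise_append.1 hY).2.2
  obtain hr | hr | hr : r ∈ A ∨ r = τ ∨ r ∈ C := by simpa using hr
  · exact hqr.2 ▸ ((hlow r hr τ (by simp)).2 q hτ).le
  · exact hr ▸ hqr.2.ge
  · exact absurd hqr (hC r hr)

theorem pivot_of_isGreatest (ha : ∀ q < n, a q < a (q + 1)) (hY : (A ++ C).Pairwise YoungPair)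
    (hrow : ∀ q ≤ n, ∃ r ∈ A ++ C, q < r.length ∧ r.getD q 0 = a q)
    (hlen : ∀ r ∈ C, r.length ≤ n) (htop : ∀ r ∈ C.getLast?, 0 < r.length ∧ r.getD 0 0 = a 0)
    (hs : IsGreatest {q | ∃ r ∈ C, q < r.length ∧ r.getD q 0 = a q} s) :
    Pivot s (a (s + 1)) C := by
  induction C generalizing A s with
  | nil => exact .nil _ _
  | cons τ C ih =>
    have hτ : s < τ.length ∧ τ.getD s 0 ≤ a s := by
      obtain ⟨r, hr, hsr, har⟩ := hs.1
      obtain rfl | hr := mem_cons.1 hr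
      · exact ⟨hsr, har.le⟩
      · have := (pairwise_cons.1 (pairwise_append.1 hY).2.1).1 r hr
        exact ⟨hsr.trans_le this.1, har ▸ (this.2 s hsr).le⟩
    have hsn : s < n := hτ.1.trans_le (hlen τ (by simp))
    have hlt : τ.getD s 0 < a (s + 1) := hτ.2.trans_lt (ha s hsn)
    obtain rfl | hC := eq_or_ne C []
    · exact .same hτ.1 hlt (.nil _ _)
    have htop' : ∀ r ∈ C.getLast?, 0 < r.length ∧ r.getD 0 0 = a 0 := by
      simpa [getLast?_cons_of_ne_nil hC] using htop
    obtain ⟨s', hs'⟩ : ∃ s', IsGreatest {q | ∃ r ∈ C, q < r.length ∧ r.getD q 0 = a q} s' :=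
      BddAbove.exists_isGreatest_of_nonempty ⟨s, fun q ⟨r, hr, hq⟩ => hs.2 ⟨r, by simp [hr], hq⟩⟩
        ⟨0, C.getLast hC, getLast_mem hC, htop' _ (getLast?_eq_some_getLast hC)⟩
    have hsplit : A ++ τ :: C = (A ++ [τ]) ++ C := by simp
    have hP := ih (hsplit ▸ hY) (hsplit ▸ hrow) (fun r hr => hlen r (by simp [hr])) htop' hs'
    obtain ⟨r, hr, hq⟩ := hs'.1
    obtain rfl | hss : s' = s ∨ s' < s := (hs.2 ⟨r, by simp [hr], hq⟩).eq_or_lt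
    · exact .same hτ.1 hlt hP
    · exact .shift hτ.1 hlt hss (le_getD_of_not_mem_above hY (hrow _ (by omega))
        (fun r hr h => by have := hs'.2 ⟨r, hr, h⟩; omega) (by omega)) hP

end Chain

theorem exists_append_cons_of_exists {P : List ℕ → Prop} {V : List (List ℕ)}
    (h : ∃ r ∈ V, P r) : ∃ A σ C, V = A ++ σ :: C ∧ P σ ∧ ∀ r ∈ C, ¬ P r := by
  classical
  induction V with
  | nil => simp at h
  | cons v V ih =>
    by_cases hV : ∃ r ∈ V, P r
    · obtain ⟨A, σ, C, rfl, hσ, hC⟩ := ih hV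
      exact ⟨v :: A, σ, C, rfl, hσ, hC⟩
    · push Not at hV
      obtain ⟨r, hr, hP⟩ := h
      obtain rfl | hr := mem_cons.1 hr
      · exact ⟨[], r, V, rfl, hP, hV⟩
      · exact absurd hP (hV r hr)

theorem getLast?_eq_of_concat_eq_append {V A L : List (List ℕ)} {r : List ℕ}
    (h : V ++ [r] = A ++ L) (hL : L ≠ []) : L.getLast? = some r := by
  rw [← getLast?_append_of_ne_nil A hL, ← h, getLast?_concat]

theorem IsKeyTableau.headD_pos {T : List (List ℕ)} {r : List ℕ} (hT : IsKeyTableau T)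
    (hr : r ∈ T) : 0 < r.headD 0 := by
  obtain _ | ⟨a, l⟩ := r
  · exact absurd rfl (hT.ne_nil _ hr)
  · exact hT.isReducedWord.1 a (by simpa [wordOf] using ⟨_, hr, by simp⟩)

theorem getD_zero_eq_of_bumped {V : List (List ℕ)} {r : List ℕ} {b : ℕ} (hT : IsKeyTableau V)
    (hY : V.Pairwise YoungPair) (hr : r ∈ V)
    (hb : bumped ((columnTableau (wordOf V)).getD 0 ∅) (r.headD 0 - 1) = some b) :
    0 < r.length ∧ r.getD 0 0 = b := by
  have hrpos : 0 < r.length := length_pos_iff.2 (hT.ne_nil r hr)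
  have hr₀ : r.getD 0 0 = r.headD 0 := headD_eq_getD.symm
  have hpos := hT.headD_pos hr
  obtain ⟨_, hlt, hle⟩ := bumped_eq_some.1 hb
  have := hle (r.headD 0) ((mem_getD_columnTableau_wordOf hT.pairwise_row hY).2
    ⟨r, hr, hrpos, hr₀⟩) (by omega)
  exact ⟨hrpos, by omega⟩

theorem exists_faithful_of_keyRank_pos {V₀ : List (List ℕ)} {r : List ℕ} {n : ℕ}
    (hT : IsKeyTableau (V₀ ++ [r])) (hY : (V₀ ++ [r]).Pairwise YoungPair) (hn : r.length ≤ n)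
    (h : 0 < keyRank n (columnTableau (wordOf (V₀ ++ [r]))) (r.headD 0 - 1)) :
    ∃ A σ C, V₀ ++ [r] = A ++ σ :: C ∧ C ≠ [] ∧ n < σ.length ∧
      Faithful (A.length + 1) C.length (V₀ ++ [r]) ∧
      ∃ A' τ, liftRun (A.length + 1) C.length (V₀ ++ [r]) = A' ++ [τ] ∧
        τ.length = σ.length ∧ A'.Pairwise YoungPair := by
  obtain ⟨a, ha₀, hmem, ha⟩ := exists_chain_of_keyRank_pos h
  have hrow (q : ℕ) (hq : q ≤ n) :=
    (mem_getD_columnTableau_wordOf hT.pairwise_row hY).1 (hmem q hq)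
  have hbase := getD_zero_eq_of_bumped hT hY (by simp) ha₀
  obtain ⟨ρ, hρ, hnρ, -⟩ := hrow n le_rfl
  obtain ⟨A, σ, C, hsplit, hσ, hC⟩ := exists_append_cons_of_exists (P := (n < ·.length))
    ⟨ρ, hρ, hnρ⟩
  push Not at hC
  have hlast := getLast?_eq_of_concat_eq_append hsplit (cons_ne_nil σ C)
  have hCne : C ≠ [] := by
    rintro rfl
    obtain rfl : σ = r := by simpa using hlast
    omega
  rw [hsplit] at hT hY hrow ⊢
  have htop : ∀ t ∈ C.getLast?, 0 < t.length ∧ t.getD 0 0 = a 0 := by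
    rw [getLast?_cons_of_ne_nil hCne] at hlast
    simpa [hlast] using hbase
  obtain ⟨s, hs⟩ : ∃ s, IsGreatest {q | ∃ r ∈ C, q < r.length ∧ r.getD q 0 = a q} s :=
    BddAbove.exists_isGreatest_of_nonempty ⟨n, fun q ⟨r, hr, hq⟩ => hq.1.le.trans (hC r hr)⟩
      ⟨0, C.getLast hCne, getLast_mem hCne, htop _ (getLast?_eq_some_getLast hCne)⟩
  have hsn : s < n := by
    obtain ⟨t, ht, hst, -⟩ := hs.1
    exact hst.trans_le (hC t ht)
  have hPivot := pivot_of_isGreatest (A := A ++ [σ]) ha (by simpa using hY)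
    (by simpa using hrow) hC htop hs
  have hB : a (s + 1) ≤ σ.getD (s + 1) 0 := le_getD_of_not_mem_above hY (hrow _ hsn)
    (fun r hr h => by have := hs.2 ⟨r, hr, h⟩; omega) (by omega)
  exact ⟨A, σ, C, rfl, hCne, hσ, faithful_of_pivot hPivot hT (Sublist.refl σ) hY
    (fun t ht => (hC t ht).trans_lt hσ) (by omega) hB⟩

/-! ### The canonical lift -/

theorem findMove_eq_none {T : List (List ℕ)} (h : ∀ i j, faithfulSeq i j T = false) :
    findMove T = none := by
  simp [findMove, h]

theorem findMove_eq_some {T : List (List ℕ)} {i j : ℕ} (hi : 1 ≤ i) (hj : j < T.length)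
    (h : faithfulSeq i j T) (hmin : ∀ k < i, ¬ faithfulSeq k j T)
    (hmax : ∀ i k, j < k → faithfulSeq i k T = false) : findMove T = some (i, j) := by
  have hij : i ≤ j := (faithfulSeq_iff.1 h).1
  have hfind : (range' 1 j).find? (faithfulSeq · j T) = some i := by
    rw [find?_range'_eq_some]
    exact ⟨h, by simp; omega, fun k _ hk => by simpa using hmin k hk⟩
  obtain ⟨n, hn⟩ := Nat.exists_eq_add_of_lt hj
  have hn : T.length + 1 = (j + 1) + (n + 1) := by omega
  rw [findMove, hn, range_add, reverse_append, findSome?_append, findSome?_eq_none_iff.2 ?_,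
    Option.none_or, range_succ, reverse_append, reverse_singleton, singleton_append,
    findSome?_cons, hfind, Option.map_some]
  simp only [mem_reverse, mem_map, forall_exists_index, and_imp]
  rintro _ k - rfl
  simpa using fun i _ _ => hmax i _ (by omega)

theorem exists_minimal_faithfulSeq {V : List (List ℕ)} {r : List ℕ}
    (hT : IsKeyTableau (V ++ [r])) (hY : (V ++ [r]).Pairwise YoungPair)
    (hr : ¬ IsFull (columnTableau (wordOf V)) r) :
    ∃ i, 1 ≤ i ∧ faithfulSeq i V.length (V ++ [r]) ∧
      (∀ k < i, ¬ faithfulSeq k V.length (V ++ [r])) ∧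
      ∃ A τ, liftSeq i V.length (V ++ [r]) = A ++ [τ] ∧ A.Pairwise YoungPair ∧
        IsFull (columnTableau (wordOf A)) τ := by
  rw [IsFull, ← columnTableau_wordOf_concat] at hr
  obtain ⟨n, hrn, hpos, hzero⟩ := exists_keyRank_pos_succ_eq_zero (Nat.pos_of_ne_zero hr)
  obtain ⟨B, σ, C, hsplit, hC, hσ, hF, A, τ, hrun, hτ, hA⟩ :=
    exists_faithful_of_keyRank_pos hT hY hrn hpos
  have hlen := congrArg length hsplit
  simp only [length_append, length_cons, length_nil] at hlen
  have hCpos := length_pos_iff.2 hC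
  have hseq : V.length + 1 - (B.length + 1) = C.length := by omega
  refine ⟨B.length + 1, by omega, faithfulSeq_iff.2 ⟨by omega, hseq ▸ hF⟩, fun k hk hFk => ?_,
    A, τ, by rw [liftSeq_eq_liftRun, hseq, hrun], hA, ?_⟩
  · rw [faithfulSeq_iff] at hFk
    obtain ⟨m, hm⟩ := Nat.exists_eq_add_of_le hFk.1
    have hFk := hFk.2
    rw [show V.length + 1 - k = m + 1 by omega] at hFk
    refine (hFk.length_lt hT hm.symm hzero σ ?_).not_ge hσ
    simp [hsplit, drop_append_of_le_length (Nat.le_of_lt_succ hk)]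
  · have hequiv := hT.liftEquiv_liftRun (B.length + 1) C.length
    rw [hrun] at hequiv
    rw [IsFull, ← columnTableau_wordOf_concat, ← hequiv.ckRel.columnTableau_eq hT.isReducedWord,
      hequiv.headD_eq]
    exact keyRank_eq_zero_of_le hzero (hτ ▸ hσ)

theorem exists_findMove_eq_some {V U : List (List ℕ)} {r : List ℕ}
    (hT : IsKeyTableau (V ++ [r] ++ U)) (hY : (V ++ [r]).Pairwise YoungPair)
    (hU : AllFull (columnTableau (wordOf (V ++ [r]))) U)
    (hr : ¬ IsFull (columnTableau (wordOf V)) r) :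
    ∃ i A τ, findMove (V ++ [r] ++ U) = some (i, V.length) ∧
      liftSeq i V.length (V ++ [r]) = A ++ [τ] ∧
      liftSeq i V.length (V ++ [r] ++ U) = A ++ τ :: U ∧ A.Pairwise YoungPair ∧
      IsFull (columnTableau (wordOf A)) τ := by
  obtain ⟨i, hi, hF, hmin, A, τ, hseq, hA, hτ⟩ := exists_minimal_faithfulSeq hT.left hY hr
  have hij := (faithfulSeq_iff.1 hF).1
  have hiff (k : ℕ) : faithfulSeq k V.length (V ++ [r] ++ U) ↔
      faithfulSeq k V.length (V ++ [r]) := by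
    rw [faithfulSeq_iff, faithfulSeq_iff]
    exact and_congr_right fun hk => faithful_append (by simp; omega)
  refine ⟨i, A, τ, ?_, hseq, ?_, hA, hτ⟩
  · exact findMove_eq_some hi (by simp) ((hiff i).2 hF) (fun k hk h => hmin k hk ((hiff k).1 h))
      fun i k hk => faithfulSeq_eq_false_of_allFull hT hU (by simpa using hk)
  · rw [liftSeq_eq_liftRun] at hseq ⊢
    rw [liftRun_append (by simp; omega), hseq, append_assoc, singleton_append]

theorem IsKeyTableau.liftEquiv_liftSeq {T : List (List ℕ)} (hT : IsKeyTableau T) (i j : ℕ) :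
    LiftEquiv T (liftSeq i j T) :=
  liftSeq_eq_liftRun i j T ▸ hT.liftEquiv_liftRun i (j + 1 - i)

theorem allFull_liftCanonAux {fuel : ℕ} {V U : List (List ℕ)} (hT : IsKeyTableau (V ++ U))
    (hY : V.Pairwise YoungPair) (hU : AllFull (columnTableau (wordOf V)) U)
    (hfuel : V.length < fuel) :
    IsKeyTableau (liftCanonAux fuel (V ++ U)) ∧ AllFull [] (liftCanonAux fuel (V ++ U)) := by
  induction hn : V.length generalizing fuel V U with
  | zero =>
    obtain rfl := length_eq_zero_iff.1 hn
    obtain ⟨fuel, rfl⟩ := Nat.exists_eq_add_of_lt hfuel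
    have hmove : findMove ([] ++ U) = none :=
      findMove_eq_none fun i j => faithfulSeq_eq_false_of_allFull hT hU (Nat.zero_le j)
    rw [liftCanonAux, hmove]
    exact ⟨hT, hU⟩
  | succ n ih =>
    obtain ⟨V, r, rfl⟩ : ∃ V' r, V = V' ++ [r] :=
      (eq_nil_or_concat' V).resolve_left (by rintro rfl; simp at hn)
    have hVn : V.length = n := by simpa using hn
    by_cases hr : IsFull (columnTableau (wordOf V)) r
    · rw [append_assoc, singleton_append] at hT ⊢
      exact ih hT (pairwise_append.1 hY).1 ⟨hr, columnTableau_wordOf_concat V r ▸ hU⟩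
        (by omega) hVn
    obtain ⟨fuel, rfl⟩ := Nat.exists_eq_succ_of_ne_zero (Nat.ne_zero_of_lt hfuel)
    obtain ⟨i, A, τ, hmove, hseq, hseqU, hA, hτ⟩ := exists_findMove_eq_some hT hY hU hr
    have hequiv := hseq ▸ hT.left.liftEquiv_liftSeq i V.length
    have hequivU := hseqU ▸ hT.liftEquiv_liftSeq i V.length
    have hAn : A.length = n := by simpa [hVn] using hequiv.length_eq
    simp only [liftCanonAux, hmove, hseqU]
    refine ih hequivU.isKeyTableau hA ⟨hτ, ?_⟩ (by omega) hAn
    rwa [← columnTableau_wordOf_concat, ← hequiv.ckRel.columnTableau_eq hT.left.isReducedWord]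

theorem allFull_liftCanon {T : List (List ℕ)} (hT : IsKeyTableau T) (hY : T.Pairwise YoungPair) :
    IsKeyTableau (liftCanon T) ∧ AllFull [] (liftCanon T) := by
  have hfuel : T.length < T.flatten.length * T.length + 1 := by
    obtain rfl | hne := eq_or_ne T []
    · simp
    · have : T.flatten.length ≠ 0 := by
        rw [Ne, length_eq_zero_iff, flatten_eq_nil_iff]
        exact fun h => hne (eq_nil_iff_forall_not_mem.2 fun r hr => hT.ne_nil r hr (h r hr))
      exact Nat.lt_succ_of_le (Nat.le_mul_of_pos_left _ (Nat.pos_of_ne_zero this))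
  have := allFull_liftCanonAux (U := []) (by rwa [append_nil]) hY trivial hfuel
  rwa [append_nil] at this

/-! ### Runs and weak descent compositions -/

section Runs

variable {w r : List ℕ} {x : ℕ}

theorem exists_runs_cons (b : ℕ) (l : List ℕ) : ∃ r R, runs (b :: l) = (b :: r) :: R ∧
    ∀ a, runs (a :: b :: l) =
      if b ≤ a then [a] :: (b :: r) :: R else (a :: b :: r) :: R := by
  have key {r R} (h : runs (b :: l) = (b :: r) :: R) (a : ℕ) : runs (a :: b :: l) =
      if b ≤ a then [a] :: (b :: r) :: R else (a :: b :: r) :: R := by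
    rw [runs, splitWhen, ← runs, h]
    simp
  suffices ∃ r R, runs (b :: l) = (b :: r) :: R by
    obtain ⟨r, R, h⟩ := this
    exact ⟨r, R, h, key h⟩
  clear key
  induction l generalizing b with
  | nil => exact ⟨[], [], rfl⟩
  | cons c l ih =>
    obtain ⟨r, R, h⟩ := ih c
    rw [runs, splitWhen, ← runs, h]
    split_ifs
    · exact ⟨[], (c :: r) :: R, rfl⟩
    · exact ⟨c :: r, R, rfl⟩

theorem flatten_runs (l : List ℕ) : (runs l).flatten = l := by
  induction l with
  | nil => rfl
  | cons a l ih =>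
    obtain _ | ⟨b, l⟩ := l
    · rfl
    · obtain ⟨r, R, h, hcons⟩ := exists_runs_cons b l
      rw [h, flatten_cons, cons_append] at ih
      rw [hcons]
      split_ifs <;> simp [ih]

theorem ne_nil_and_pairwise_of_mem_runs (hr : r ∈ runs w) : r ≠ [] ∧ r.Pairwise (· < ·) := by
  induction w generalizing r with
  | nil => simp [runs, splitWhen] at hr
  | cons a l ih =>
    obtain _ | ⟨b, l⟩ := l
    · obtain rfl : r = [a] := by simpa [runs, splitWhen] using hr
      simp
    · obtain ⟨s, R, h, hcons⟩ := exists_runs_cons b l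
      rw [h, forall_mem_cons] at ih
      rw [hcons] at hr
      split_ifs at hr with hba
      · obtain rfl | hr := mem_cons.1 hr
        · simp
        · obtain rfl | hr := mem_cons.1 hr
          exacts [ih.1, ih.2 r hr]
      · obtain rfl | hr := mem_cons.1 hr
        · refine ⟨cons_ne_nil _ _, isChain_iff_pairwise.1 (isChain_cons_cons.2 ⟨?_, ?_⟩)⟩
          exacts [not_le.1 hba, isChain_iff_pairwise.2 ih.1.2]
        · exact ih.2 r hr

theorem runs_append (hs : (x :: r).Pairwise (· < ·)) (hw : ∀ b ∈ w.head?, b ≤ x) :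
    runs (x :: r ++ w) = (x :: r) :: runs w := by
  induction r generalizing x with
  | nil =>
    obtain _ | ⟨b, w⟩ := w
    · rfl
    · obtain ⟨s, R, h, hcons⟩ := exists_runs_cons b w
      rw [singleton_append, hcons, h, if_pos (hw b (by simp))]
  | cons y r ih =>
    have hxy := pairwise_cons_cons.1 hs
    obtain ⟨s, R, h, hcons⟩ := exists_runs_cons y (r ++ w)
    have := ih hs.of_cons fun b hb => (hw b hb).trans hxy.1.le
    rw [cons_append, h] at this
    rw [cons_append, cons_append, hcons, if_neg hxy.1.not_ge]
    simp_all

theorem runs_wordOf {T : List (List ℕ)} (hT : IsKeyTableau T) : runs (wordOf T) = T.reverse := by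
  induction T using reverseRecOn with
  | nil => rfl
  | append_singleton X r ih =>
    obtain ⟨x, s, rfl⟩ := exists_cons_of_ne_nil (hT.ne_nil r (by simp))
    rw [wordOf_append, wordOf_singleton, runs_append (hT.pairwise_row _ (by simp)), ih hT.left,
      reverse_append, reverse_singleton, singleton_append]
    obtain rfl | ⟨Y, y, rfl⟩ := eq_nil_or_concat' X
    · simp [wordOf]
    · obtain ⟨z, t, rfl⟩ := exists_cons_of_ne_nil (hT.ne_nil y (by simp))
      have := hT.pairwise_head
      simp only [map_append, pairwise_append] at this
      have := this.2.2 z (by simp) x (by simp)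
      simpa [wordOf_append, wordOf_singleton] using this.le

end Runs

/-- The recursion computing `hatMins`: each entry is replaced by its minimum with the predecessor of
the previous new entry, starting from the bound `p`. -/
def hatFrom : ℤ → List ℤ → List ℤ
  | _, [] => []
  | p, r :: L => min r (p - 1) :: hatFrom (min r (p - 1)) L

theorem hatMins_cons (r : ℤ) (L : List ℤ) : hatMins (r :: L) = hatFrom (r + 1) (r :: L) := by
  have key (L : List ℤ) (acc : List ℤ) (p : ℤ) : (L.foldl (fun (acc : List ℤ × Option ℤ) r =>
      let v := match acc.2 with
        | none => r
        | some p => min r (p - 1)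
      (acc.1 ++ [v], some v)) (acc, some p)).1 = acc ++ hatFrom p L := by
    induction L generalizing acc p with
    | nil => simp [hatFrom]
    | cons r L ih => simp [hatFrom, ih]
  rw [hatMins, foldl_cons]
  exact (key L [r] r).trans (by simp [hatFrom])

theorem exists_hatMins_eq_hatFrom (L : List ℤ) : ∃ p, hatMins L = hatFrom p L := by
  cases L with
  | nil => exact ⟨0, rfl⟩
  | cons r L => exact ⟨_, hatMins_cons r L⟩

theorem length_hatFrom (p : ℤ) (L : List ℤ) : (hatFrom p L).length = L.length := by
  induction L generalizing p with
  | nil => rfl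
  | cons r L ih => simp [hatFrom, ih]

theorem pairwise_cons_hatFrom (p : ℤ) (L : List ℤ) : (p :: hatFrom p L).Pairwise (· > ·) := by
  induction L generalizing p with
  | nil => simp [hatFrom]
  | cons r L ih =>
    rw [hatFrom, ← isChain_iff_pairwise, isChain_cons_cons, isChain_iff_pairwise]
    exact ⟨by omega, ih _⟩

theorem hatFrom_eq_self {p : ℤ} {L : List ℤ} (h : (p :: L).Pairwise (· > ·)) :
    hatFrom p L = L := by
  induction L generalizing p with
  | nil => rfl
  | cons r L ih =>
    rw [hatFrom, min_eq_left (Int.le_sub_one_of_lt (pairwise_cons_cons.1 h).1), ih h.of_cons]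

theorem hatMins_eq_self {L : List ℤ} (h : L.Pairwise (· > ·)) : hatMins L = L := by
  cases L with
  | nil => rfl
  | cons r L =>
    rw [hatMins_cons, hatFrom, add_sub_cancel_right, min_self, hatFrom_eq_self h]

theorem pairwise_hatMins (L : List ℤ) : (hatMins L).Pairwise (· > ·) := by
  obtain ⟨p, hp⟩ := exists_hatMins_eq_hatFrom L
  exact hp ▸ (pairwise_cons_hatFrom p L).of_cons

/-- The first letters of the runs of `ρ`, from the leftmost run to the rightmost. -/
def runMins (ρ : List ℕ) : List ℤ := (runs ρ).map fun r => ((r.headD 0 : ℕ) : ℤ)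

/-- The runs of `ρ`, each recorded as its position in the weak descent composition and its
length. -/
def runBlocks (ρ : List ℕ) : List (ℤ × ℕ) := (hatMins (runMins ρ)).zip ((runs ρ).map length)

theorem length_hatMins (L : List ℤ) : (hatMins L).length = L.length := by
  obtain ⟨p, hp⟩ := exists_hatMins_eq_hatFrom L
  rw [hp, length_hatFrom]

theorem map_fst_runBlocks (ρ : List ℕ) : (runBlocks ρ).map Prod.fst = hatMins (runMins ρ) :=
  map_fst_zip (by simp [length_hatMins, runMins])

theorem sum_map_snd_runBlocks (ρ : List ℕ) : ((runBlocks ρ).map Prod.snd).sum = ρ.length := by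
  rw [runBlocks, map_snd_zip (by simp [length_hatMins, runMins]), ← length_flatten, flatten_runs]

theorem desWord_eq_some_iff {ρ d : List ℕ} : desWord ρ = some d ↔
    (∀ h ∈ hatMins (runMins ρ), 0 < h) ∧
      d = buildWeakComp (hatMins (runMins ρ)) ((runs ρ).map length) := by
  rw [desWord, desFromBlocks, ← runMins]
  have hdec := pairwise_hatMins (runMins ρ)
  generalize hatMins (runMins ρ) = hs at hdec
  obtain rfl | ⟨L, a, rfl⟩ := eq_nil_or_concat' hs
  · simp [buildWeakComp, eq_comm]
  · have hlast : (∀ h ∈ L ++ [a], 0 < h) ↔ 0 < a := by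
      refine ⟨fun h => h a (by simp), fun ha h hh => ?_⟩
      obtain hh | hh := mem_append.1 hh
      · exact ha.trans ((pairwise_append.1 hdec).2.2 h hh a (by simp))
      · rwa [mem_singleton.1 hh]
    rw [hlast]
    by_cases ha : 0 < a
    · simp [ha, ha.not_ge, Eq.comm (b := d)]
    · simp [ha, not_lt.1 ha]

/-- The total length of the blocks of `Z` in positions greater than `k`. -/
def lengthAbove (k : ℤ) (Z : List (ℤ × ℕ)) : ℕ := ((Z.filter (k < ·.1)).map Prod.snd).sum

/-- The part in position `p + 1` of the weak composition with blocks `Z`. -/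
def partAt (Z : List (ℤ × ℕ)) (p : ℤ) : ℕ :=
  match Z.find? (fun q => decide (q.1 = p + 1)) with
  | some q => q.2
  | none => 0

theorem buildWeakComp_eq (hs : List ℤ) (lens : List ℕ) : buildWeakComp hs lens =
    (range (hs.headD 0).toNat).map fun p : ℕ => partAt (hs.zip lens) p := by
  simp only [buildWeakComp, bind_eq_flatMap, pure_def, ← map_eq_flatMap, map_map]
  rfl

theorem partAt_cons {q : ℤ × ℕ} {Z : List (ℤ × ℕ)} (p : ℤ) (h : ∀ z ∈ Z, z.1 < q.1) :
    partAt (q :: Z) p = (if q.1 = p + 1 then q.2 else 0) + partAt Z p := by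
  by_cases hq : q.1 = p + 1
  · have : Z.find? (fun q => decide (q.1 = p + 1)) = none := by
      rw [find?_eq_none]
      intro z hz
      have := h z hz
      simp only [decide_eq_true_eq]
      omega
    simp [partAt, hq, this]
  · simp [partAt, hq]

theorem sum_partAt_add_lengthAbove {Z : List (ℤ × ℕ)} (hZ : (Z.map Prod.fst).Pairwise (· > ·))
    (hpos : ∀ z ∈ Z, 0 < z.1) (m : ℕ) :
    ∑ p ∈ Finset.range m, partAt Z p + lengthAbove m Z = (Z.map Prod.snd).sum := by
  induction Z with
  | nil => simp [partAt, lengthAbove]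
  | cons q Z ih =>
    rw [map_cons, pairwise_cons] at hZ
    have hlt : ∀ z ∈ Z, z.1 < q.1 := fun z hz => hZ.1 _ (mem_map_of_mem hz)
    have hq := hpos q (by simp)
    have hcond (p : ℕ) : q.1 = (p : ℤ) + 1 ↔ p = (q.1 - 1).toNat := by omega
    have hmem : (q.1 - 1).toNat < m ↔ ¬ (m : ℤ) < q.1 := by omega
    have := ih hZ.2 fun z hz => hpos z (by simp [hz])
    simp only [partAt_cons _ hlt, Finset.sum_add_distrib, hcond, Finset.sum_ite_eq',
      Finset.mem_range, hmem, map_cons, sum_cons, ← this]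
    by_cases h : (m : ℤ) < q.1
    all_goals simp [lengthAbove, h]; omega

theorem sum_take_add_lengthAbove {ρ d : List ℕ} (h : desWord ρ = some d) (k : ℕ) :
    (d.take k).sum + lengthAbove k (runBlocks ρ) = ρ.length := by
  obtain ⟨hpos, rfl⟩ := desWord_eq_some_iff.1 h
  have hdec := pairwise_hatMins (runMins ρ)
  have hfst := map_fst_runBlocks ρ
  have hle : ∀ z ∈ runBlocks ρ, z.1 ≤ (hatMins (runMins ρ)).headD 0 := fun z hz => by
    have := hfst ▸ mem_map_of_mem (f := Prod.fst) hz
    generalize hatMins (runMins ρ) = hs at hdec this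
    obtain _ | ⟨a, hs⟩ := hs
    · simp at this
    · obtain h | h := mem_cons.1 this
      exacts [h.le, ((pairwise_cons.1 hdec).1 _ h).le]
  rw [← hfst] at hdec hpos
  have hsum := sum_partAt_add_lengthAbove hdec (fun z hz => hpos _ (mem_map_of_mem hz))
    (min k ((hatMins (runMins ρ)).headD 0).toNat)
  have habove : lengthAbove (min k ((hatMins (runMins ρ)).headD 0).toNat : ℕ) (runBlocks ρ) =
      lengthAbove k (runBlocks ρ) := by
    unfold lengthAbove
    congr 2
    refine filter_congr fun z hz => ?_
    have := hle z hz
    have := hpos _ (mem_map_of_mem hz)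
    simp only [decide_eq_decide]
    omega
  rw [sum_map_snd_runBlocks, habove] at hsum
  rw [buildWeakComp_eq, ← map_take, take_range, ← hsum, ← runBlocks]
  rfl

/-! ### The terminal tableau is Yamanouchi -/

theorem exists_lengthAbove_hatFrom (k : ℕ) (p : ℤ) (R : List (List ℕ)) :
    ∃ R₁ R₂, R = R₁ ++ R₂ ∧ (∀ r ∈ R₁, k < r.headD 0) ∧
      lengthAbove k ((hatFrom p (R.map fun r => ((r.headD 0 : ℕ) : ℤ))).zip (R.map length)) =
        R₁.flatten.length := by
  induction R generalizing p with
  | nil => exact ⟨[], [], rfl, by simp, by simp [hatFrom, lengthAbove]⟩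
  | cons r R ih =>
    simp only [map_cons, hatFrom, zip_cons_cons]
    set v := min ((r.headD 0 : ℕ) : ℤ) (p - 1)
    by_cases hk : k < v
    · obtain ⟨R₁, R₂, rfl, hR₁, hlen⟩ := ih v
      refine ⟨r :: R₁, R₂, rfl, forall_mem_cons.2 ⟨by omega, hR₁⟩, ?_⟩
      rw [lengthAbove, filter_cons_of_pos (by simpa using hk), map_cons, sum_cons, ← lengthAbove,
        hlen, flatten_cons, length_append]
    · refine ⟨[], r :: R, rfl, by simp, ?_⟩
      rw [lengthAbove, filter_eq_nil_iff.2]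
      · rfl
      · refine forall_mem_cons.2 ⟨by simpa using hk, fun z hz => ?_⟩
        have := (pairwise_cons.1 (pairwise_cons_hatFrom v _)).1 z.1 (of_mem_zip hz).1
        simp only [decide_eq_true_eq]
        omega

theorem lengthAbove_runBlocks_le_totalRank {σ : List ℕ} (h : IsReducedWord σ) (k : ℕ) :
    lengthAbove k (runBlocks σ) ≤ totalRank (columnTableau σ) k := by
  obtain ⟨p, hp⟩ := exists_hatMins_eq_hatFrom (runMins σ)
  obtain ⟨R₁, R₂, hR, hk, hlen⟩ := exists_lengthAbove_hatFrom k p (runs σ)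
  have hσ : R₁.flatten ++ R₂.flatten = σ := by rw [← flatten_append, ← hR, flatten_runs]
  rw [runBlocks, hp, runMins, hlen, ← hσ]
  refine length_le_totalRank_columnTableau (hσ ▸ h) fun a ha => ?_
  obtain ⟨r, hr, har⟩ := mem_flatten.1 ha
  have hinc := (ne_nil_and_pairwise_of_mem_runs (hR ▸ mem_append_left R₂ hr)).2
  refine (hk r hr).trans_le ?_
  obtain _ | ⟨x, s⟩ := r
  · exact absurd har not_mem_nil
  · obtain rfl | ha := mem_cons.1 har
    exacts [le_rfl, ((pairwise_cons.1 hinc).1 a ha).le]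

section TerminalTableau

variable {T : List (List ℕ)}

theorem hatMins_runMins_wordOf (hT : IsKeyTableau T) :
    hatMins (runMins (wordOf T)) = T.reverse.map fun r => ((r.headD 0 : ℕ) : ℤ) := by
  rw [runMins, runs_wordOf hT]
  refine hatMins_eq_self ?_
  rw [map_reverse, pairwise_reverse, pairwise_map]
  exact (pairwise_map.1 hT.pairwise_head).imp Int.ofNat_lt.2

theorem runBlocks_wordOf (hT : IsKeyTableau T) :
    runBlocks (wordOf T) = T.reverse.map fun r => (((r.headD 0 : ℕ) : ℤ), r.length) := by
  rw [runBlocks, hatMins_runMins_wordOf hT, runs_wordOf hT, zip_map']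

theorem mem_getD_zero_columnTableau_wordOf (hT : IsKeyTableau T) (a : ℕ) :
    a ∈ (columnTableau (wordOf T)).getD 0 ∅ ↔ ∃ r ∈ T, r.headD 0 = a := by
  induction T using reverseRecOn generalizing a with
  | nil => simp [wordOf, columnTableau, insertWord]
  | append_singleton X r ih =>
    obtain ⟨x, r, rfl⟩ := exists_cons_of_ne_nil (hT.ne_nil r (by simp))
    have hhead := hT.pairwise_head
    rw [map_append, pairwise_append] at hhead
    rw [columnTableau_wordOf_concat, getD_zero_insertWord (hT.pairwise_row _ (by simp)),
      Finset.mem_insert, ih hT.left]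
    · simp [or_and_right, exists_or, or_comm, eq_comm]
    · intro b hb
      obtain ⟨s, hs, rfl⟩ := (ih hT.left b).1 hb
      exact hhead.2.2 _ (mem_map_of_mem hs) x (by simp)

theorem totalRank_eq_zero_of_headD_le (hT : IsKeyTableau T) {k : ℕ}
    (hk : ∀ r ∈ T, r.headD 0 ≤ k) : totalRank (columnTableau (wordOf T)) k = 0 := by
  have hcol := mem_getD_zero_columnTableau_wordOf hT
  generalize columnTableau (wordOf T) = P at hcol
  obtain _ | ⟨A, P⟩ := P
  · rfl
  refine Finset.sum_eq_zero fun j _ => Nat.le_zero.1 ((keyRank_le_card j A P k).trans_eq ?_)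
  rw [Finset.card_eq_zero, Finset.filter_eq_empty_iff]
  intro a ha
  obtain ⟨r, hr, rfl⟩ := (hcol a).1 ha
  exact (hk r hr).not_gt

theorem allFull_concat {C : List (Finset ℕ)} {X : List (List ℕ)} {r : List ℕ} :
    AllFull C (X ++ [r]) ↔ AllFull C X ∧ IsFull (insertWord (wordOf X) C) r := by
  induction X generalizing C with
  | nil => simp [AllFull, wordOf, insertWord]
  | cons s X ih =>
    rw [cons_append, AllFull, AllFull, ih, and_assoc, ← singleton_append, wordOf_append,
      wordOf_singleton, insertWord_append]

theorem totalRank_le_lengthAbove (hT : IsKeyTableau T) (hF : AllFull [] T) (k : ℕ) :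
    totalRank (columnTableau (wordOf T)) k ≤ lengthAbove k (runBlocks (wordOf T)) := by
  rw [runBlocks_wordOf hT]
  induction T using reverseRecOn with
  | nil => exact Nat.zero_le _
  | append_singleton X r ih =>
    obtain ⟨x, r, rfl⟩ := exists_cons_of_ne_nil (hT.ne_nil r (by simp))
    obtain ⟨hX, hr⟩ := allFull_concat.1 hF
    by_cases hk : k < x
    · have hred := hT.isReducedWord
      rw [wordOf_append, wordOf_singleton] at hred
      have hle := totalRank_insertWord_le (hT.pairwise_row _ (by simp))
        (((ckRel_columnTableau hred.of_append_right).append_left _).isReducedWord hred) hr hk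
      rw [columnTableau_wordOf_concat, reverse_append, reverse_singleton, singleton_append,
        map_cons, lengthAbove, filter_cons_of_pos (by simpa using hk), map_cons, sum_cons,
        ← lengthAbove, length_cons]
      have := ih hT.left hX
      omega
    · refine (totalRank_eq_zero_of_headD_le hT fun s hs => ?_).trans_le (Nat.zero_le _)
      have hhead := hT.pairwise_head
      rw [map_append, pairwise_append] at hhead
      obtain hs | hs := mem_append.1 hs
      · exact (hhead.2.2 _ (mem_map_of_mem hs) x (by simp)).le.trans (not_lt.1 hk)
      · exact mem_singleton.1 hs ▸ not_lt.1 hk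

theorem isYam_wordOf (hT : IsKeyTableau T) (hF : AllFull [] T) : IsYam (wordOf T) := by
  have hpos : ∀ h ∈ hatMins (runMins (wordOf T)), 0 < h := by
    rw [hatMins_runMins_wordOf hT]
    intro h hh
    obtain ⟨r, hr, rfl⟩ := mem_map.1 hh
    exact Int.natCast_pos.2 (hT.headD_pos (mem_reverse.1 hr))
  have hd := desWord_eq_some_iff.2 ⟨hpos, rfl⟩
  refine ⟨hT.isReducedWord, _, hd, fun σ e hσ he k => ?_⟩
  have hck := hσ.ckRel hT.isReducedWord
  have hlength := hck.length_eq
  have hsumd := sum_take_add_lengthAbove hd k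
  have hsume := sum_take_add_lengthAbove he k
  have habove : lengthAbove k (runBlocks σ) ≤ lengthAbove k (runBlocks (wordOf T)) := calc
    _ ≤ totalRank (columnTableau σ) k :=
      lengthAbove_runBlocks_le_totalRank (hck.isReducedWord hT.isReducedWord) k
    _ = totalRank (columnTableau (wordOf T)) k := by rw [hck.columnTableau_eq hT.isReducedWord]
    _ ≤ _ := totalRank_le_lengthAbove hT hF k
  omega

end TerminalTableau

theorem isKeyTableau_rowsOf {ρ : List ℕ} (h : IsReducedWord ρ)
    (hY : (rowsOf ρ).Pairwise YoungPair) : IsKeyTableau (rowsOf ρ) where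
  ne_nil r hr := (ne_nil_and_pairwise_of_mem_runs (mem_reverse.1 hr)).1
  pairwise_row r hr := (ne_nil_and_pairwise_of_mem_runs (mem_reverse.1 hr)).2
  pairwise_head := by
    refine pairwise_map.2 (hY.imp_of_mem fun _ hb hab => ?_)
    have := hab.2 0 (length_pos_iff.2 (ne_nil_and_pairwise_of_mem_runs (mem_reverse.1 hb)).1)
    rwa [← headD_eq_getD, ← headD_eq_getD] at this
  isReducedWord := by rwa [wordOf, rowsOf, reverse_reverse, flatten_runs]

theorem IsIncreasingYoungRows.pairwise_youngPair {R : List (List ℕ)}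
    (hR : IsIncreasingYoungRows R) : R.Pairwise YoungPair :=
  haveI : Trans YoungPair YoungPair YoungPair := ⟨YoungPair.trans⟩
  isChain_iff_pairwise.1 hR.2

/-- For `ρ` a reduced word whose descent tableau `𝔻(ρ)` is an
increasing Young tableau, the reduced word `lift(ρ)` obtained by the canonical
lifting algorithm is Yamanouchi. -/
theorem lift_is_yamanouchi (ρ : List ℕ) (h : IsReducedWord ρ)
    (hinc : IsIncreasingYoungRows (rowsOf ρ)) :
    IsYam (liftWord ρ) := by
  have hY := hinc.pairwise_youngPair
  obtain ⟨hT, hF⟩ := allFull_liftCanon (isKeyTableau_rowsOf h hY) hY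
  exact isYam_wordOf hT hF

end EG
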